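/- arXiv:2409.04809 — 7 statements merged into one kernel-verified Lean document; each statement's English description precedes it below -/
import Mathlib

section
/- For all integers k ≥ 2 and ℓ ≥ 2 there exists an infinite B_{k,ℓ}-set X ⊆ ℕ such that for every integer r ≥ 2 the partition relation X → [k,ℓ]_r holds, i.e., for every partition X = X_1 ∪ … ∪ X_r into r parts some part X_q satisfies ρ_k(X_q) = ℓ. -/
/-!
Let `K` be a countable field of characteristic zero whose unit group has a subgroup `G` of order
`k`, and let `T` have `l` elements. For `c ∈ G^T` consider the linear form
`lin c y = ∑ t, c t * y t` on `K^T`. The map `code` sends `x ∈ K^T` to a natural number whose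
digits in base `k + 1` record all the values `lin c x`, and `X` is its range. A sum of `k` codes has
no carries, so it determines, for each `c`, the multiset of the `k` values of `lin c`.

*Partition property.* By the Gallai–Witt theorem (a consequence of Hales–Jewett) every finite
colouring of `K^T` has a homothetic copy `a • S + b` of one colour, where `S` consists of the
vectors `single t g` with `t ∈ T` and `g ∈ G`. For fixed `t` the values of `lin c` on the points
`a • single t g + b` are `a * c t * g + lin c b`, and since `c t` permutes `G` their multiset does
not depend on `t`. Hence the `l` sets belonging to the elements of `T` are `l` representations of
one number, all of one colour (`exists_card_le_rho`).

*Upper bound.* Let `𝒰` be a family of multisets of size `k` on which all the forms have the same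
values; it is to be shown that `𝒰` has at most `|T|` members (`card_le_of_sameVals`).
If `x ∈ U`, then each form takes the value `lin c x` somewhere on every other member `V`, so the
`k` differences `x - v` cover `G^T` by the sets `ker y = {c : lin c y = 0}`. A vector `y ≠ 0` has
`|G| * |ker y| ≤ |G^T|`, because `ker y` meets each coset of the factor of `G^T` at a coordinate
with `y t ≠ 0` at most once. Covers by `|G|` vectors are therefore tight: their kernels are disjoint
and of the maximal size. Since the sum of the elements of `G` is zero, a kernel of the maximal size
forces `y` to have exactly two nonzero coordinates (`card_supp`), and disjointness forces all the
vectors of a tight cover to have the same support (`IsCover.supp_eq`). So each `V ≠ U` yields an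
edge on the vertex set `T`, the common support of the differences `x - v`. If `x` is not the
centroid of `U`, different `V` yield different edges (`eq_of_supp_eq`). Applying the same structure
to pairs `V`, `W` shows that any two edges meet and that all differences agree on the common
coordinate (`agree_of_supp`), so the meeting point of an edge with the other ones is always the
same vertex. The edges form a star, there are at most `|T| - 1` of them, and `𝒰` has at most `|T|`
members.
-/

/-- The number of representations of `n` as a sum of `k` nondecreasingly ordered
terms from `X`. -/
noncomputable def rho (X : Set ℕ) (k n : ℕ) : ℕ :=
  Set.ncard {f : Fin k → ℕ | (∀ i, f i ∈ X) ∧ Monotone f ∧ ∑ i, f i = n}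

namespace BklPartition

open Finset

/-! ### Linear forms with coefficients in a finite group of units -/

section Forms

variable {K : Type*} [Field K] {T : Type*} [Fintype T] {G : Subgroup Kˣ}

/-- The linear form `y ↦ ∑ t, c t * y t` on `K^T` whose coefficients `c t` lie in the finite
group `G` of units. -/
def lin (c : T → G) (y : T → K) : K := ∑ t, ((c t : Kˣ) : K) * y t

lemma lin_sub (c : T → G) (y z : T → K) : lin c (y - z) = lin c y - lin c z := by
  simp [lin, mul_sub, Finset.sum_sub_distrib]

lemma lin_add (c : T → G) (y z : T → K) : lin c (y + z) = lin c y + lin c z := by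
  simp [lin, mul_add, Finset.sum_add_distrib]

lemma lin_nsmul (c : T → G) (a : ℕ) (y : T → K) : lin c (a • y) = a * lin c y := by
  simp only [lin, Finset.mul_sum, Pi.smul_apply, nsmul_eq_mul]
  exact Finset.sum_congr rfl fun t _ => by ring

lemma lin_zero (c : T → G) : lin c (0 : T → K) = 0 := by simp [lin]

lemma coe_ne_zero (g : G) : ((g : Kˣ) : K) ≠ 0 := (g : Kˣ).ne_zero

lemma coe_inj {g h : G} (e : ((g : Kˣ) : K) = ((h : Kˣ) : K)) : g = h :=
  Subtype.ext (Units.ext e)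

variable [DecidableEq T]

lemma lin_single (c : T → G) (t : T) (a : K) :
    lin c (Pi.single t a) = ((c t : Kˣ) : K) * a := by
  unfold lin
  rw [Finset.sum_eq_single t]
  · simp
  · intro s _ hs
    simp [hs]
  · simp

lemma lin_mulSingle (t : T) (m : G) (c : T → G) (y : T → K) :
    lin (Pi.mulSingle t m * c) y
      = lin c y + (((m : Kˣ) : K) - 1) * ((c t : Kˣ) : K) * y t := by
  unfold lin
  rw [← Finset.add_sum_erase _ _ (mem_univ t), ← Finset.add_sum_erase univ
    (fun t => ((c t : Kˣ) : K) * y t) (mem_univ t)]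
  have : ∑ x ∈ univ.erase t, ((((Pi.mulSingle t m * c : T → G) x : G) : Kˣ) : K) * y x
      = ∑ x ∈ univ.erase t, ((c x : Kˣ) : K) * y x := by
    refine Finset.sum_congr rfl fun x hx => ?_
    simp [Pi.mulSingle_eq_of_ne (Finset.ne_of_mem_erase hx)]
  rw [this]
  simp
  ring

variable [Fintype G]

lemma exists_ne_one (hG : 2 ≤ Fintype.card G) : ∃ g : G, g ≠ 1 := by
  have : Nontrivial G := Fintype.one_lt_card_iff_nontrivial.1 hG
  exact exists_ne 1

lemma sum_coe (hG : 2 ≤ Fintype.card G) : ∑ g : G, ((g : Kˣ) : K) = 0 := by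
  obtain ⟨h, hh⟩ := exists_ne_one hG
  have key : ((h : Kˣ) : K) * ∑ g : G, ((g : Kˣ) : K) = ∑ g : G, ((g : Kˣ) : K) := by
    rw [Finset.mul_sum]
    exact Fintype.sum_equiv (Equiv.mulLeft h) _ _ fun g => by simp
  have h1 : (((h : Kˣ) : K) - 1) * ∑ g : G, ((g : Kˣ) : K) = 0 := by
    rw [sub_mul, key]; ring
  rcases mul_eq_zero.1 h1 with h2 | h2
  · exact absurd (coe_inj (G := G) (h := 1) (by simpa using sub_eq_zero.1 h2)) hh
  · exact h2

lemma eq_zero_of_lin (hG : 2 ≤ Fintype.card G) {y : T → K}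
    (h : ∀ c : T → G, lin c y = 0) : y = 0 := by
  obtain ⟨g, hg⟩ := exists_ne_one hG
  funext t
  have h1 := lin_mulSingle t g 1 y
  rw [h, h] at h1
  simp at h1
  rcases h1 with h1 | h1
  · exact absurd (coe_inj (G := G) (h := 1) (by simpa using sub_eq_zero.1 h1)) hg
  · simpa using h1

open Classical in
/-- The coefficient vectors `c ∈ G^T` whose linear form vanishes at `y`. -/
noncomputable def ker (G : Subgroup Kˣ) [Fintype G] (y : T → K) : Finset (T → G) :=
  univ.filter fun c => lin c y = 0

lemma mem_ker {y : T → K} {c : T → G} : c ∈ ker G y ↔ lin c y = 0 := by simp [ker]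

open Classical in
/-- Double counting of the intersections of the vanishing set of `y` with the cosets of the factor
of `G^T` at `t`. -/
lemma card_mul_card_ker (y : T → K) (t : T) :
    Fintype.card G * (ker G y).card
      = ∑ c : T → G, (univ.filter fun m : G => lin (Pi.mulSingle t m * c) y = 0).card := by
  simp_rw [Finset.card_filter]
  rw [Finset.sum_comm]
  have : ∀ m : G, (∑ c : T → G, if lin (Pi.mulSingle t m * c) y = 0 then 1 else 0)
      = (ker G y).card := by
    intro m
    rw [ker, Finset.card_filter]
    exact Fintype.sum_equiv (Equiv.mulLeft (Pi.mulSingle t m)) _ _ fun c => by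
      simp only [Equiv.coe_mulLeft]; congr
  simp [this]

open Classical in
lemma card_fiber_le_one {y : T → K} {t : T} (ht : y t ≠ 0) (c : T → G) :
    (univ.filter fun m : G => lin (Pi.mulSingle t m * c) y = 0).card ≤ 1 := by
  rw [Finset.card_le_one]
  intro m hm n hn
  simp only [mem_filter, mem_univ, true_and, lin_mulSingle] at hm hn
  have h1 : (((m : Kˣ) : K) - ((n : Kˣ) : K)) * (((c t : Kˣ) : K) * y t) = 0 := by
    linear_combination hm - hn
  rcases mul_eq_zero.1 h1 with h2 | h2
  · exact coe_inj (sub_eq_zero.1 h2)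
  · exact absurd h2 (mul_ne_zero (coe_ne_zero _) ht)

lemma card_ker_le {y : T → K} (hy : y ≠ 0) :
    Fintype.card G * (ker G y).card ≤ Fintype.card (T → G) := by
  classical
  obtain ⟨t, ht⟩ := Function.ne_iff.1 hy
  rw [card_mul_card_ker y t]
  calc _ ≤ ∑ c : T → G, 1 := Finset.sum_le_sum fun c _ => card_fiber_le_one ht c
    _ = _ := by simp

/-- If the vanishing set of `y` has the maximal size, then it meets every coset of the factor of
`G^T` at a coordinate where `y` does not vanish. -/
lemma exists_of_card_ker {y : T → K}
    (hy : Fintype.card G * (ker G y).card = Fintype.card (T → G)) {t : T} (ht : y t ≠ 0)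
    (c : T → G) : ∃ m : G, lin (Pi.mulSingle t m * c) y = 0 := by
  classical
  by_contra! hcon
  have : Fintype.card G * (ker G y).card < Fintype.card (T → G) := by
    rw [card_mul_card_ker y t]
    calc _ < ∑ c : T → G, 1 := by
          refine Finset.sum_lt_sum (fun c _ => card_fiber_le_one ht c) ⟨c, mem_univ c, ?_⟩
          simp [hcon]
      _ = _ := by simp
  omega

open Classical in
/-- The coordinates at which `y` does not vanish. -/
noncomputable def supp (y : T → K) : Finset T := univ.filter fun t => y t ≠ 0

omit [DecidableEq T] in
lemma mem_supp {y : T → K} {t : T} : t ∈ supp y ↔ y t ≠ 0 := by simp [supp]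

omit [Fintype G] in
lemma lin_of_supp {y : T → K} {t a : T} (hta : t ≠ a) (h : supp y = {t, a}) (c : T → G) :
    lin c y = ((c t : Kˣ) : K) * y t + ((c a : Kˣ) : K) * y a := by
  unfold lin
  rw [← Finset.sum_pair (f := fun s => ((c s : Kˣ) : K) * y s) hta]
  refine (Finset.sum_subset (subset_univ _) fun s _ hs => ?_).symm
  rw [← h, mem_supp, not_not] at hs
  simp [hs]

/-- A vector whose vanishing set has the maximal size has exactly two nonzero coordinates. -/
lemma card_supp [CharZero K] (hG : 2 ≤ Fintype.card G) {y : T → K} (h0 : y ≠ 0)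
    (hy : Fintype.card G * (ker G y).card = Fintype.card (T → G)) : (supp y).card = 2 := by
  obtain ⟨t, ht⟩ := Function.ne_iff.1 h0
  have ht : y t ≠ 0 := ht
  obtain ⟨g, hg⟩ := exists_ne_one hG
  have hg' : ((g : Kˣ) : K) - 1 ≠ 0 := fun h =>
    hg (coe_inj (G := G) (h := 1) (by simpa using sub_eq_zero.1 h))
  obtain ⟨a, hat, ha⟩ : ∃ a, a ≠ t ∧ y a ≠ 0 := by
    by_contra! hcon
    obtain ⟨m, hm⟩ := exists_of_card_ker hy ht 1
    have : y = Pi.single t (y t) := by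
      funext s
      by_cases hs : s = t
      · subst hs; simp
      · simp [hs, hcon s hs]
    rw [this, lin_single] at hm
    exact (mul_ne_zero (coe_ne_zero _) ht) hm
  -- The contribution `z` of the remaining coordinates vanishes: the translate by `z` of the coset
  -- `G * y a` is the coset `G * y t`, up to sign, and both have sum zero.
  have hz : ∀ c : T → G, lin c y - ((c t : Kˣ) : K) * y t - ((c a : Kˣ) : K) * y a = 0 := by
    intro c
    have h1 : ∀ n : G, ∃ m : G,
        (lin c y - ((c t : Kˣ) : K) * y t - ((c a : Kˣ) : K) * y a)
          + ((n : Kˣ) : K) * (((c a : Kˣ) : K) * y a)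
          = - (((m : Kˣ) : K) * (((c t : Kˣ) : K) * y t)) := by
      intro n
      obtain ⟨m, hm⟩ := exists_of_card_ker hy ht (Pi.mulSingle a n * c)
      refine ⟨m, ?_⟩
      rw [lin_mulSingle, lin_mulSingle] at hm
      have : (Pi.mulSingle a n * c : T → G) t = c t := by simp [Pi.mulSingle_eq_of_ne hat.symm]
      rw [this] at hm
      linear_combination hm
    choose m hm using h1
    have hinj : Function.Injective m := by
      intro n n' hnn
      have e1 := hm n
      rw [hnn, ← hm n'] at e1
      have : ((n : Kˣ) : K) * (((c a : Kˣ) : K) * y a)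
          = ((n' : Kˣ) : K) * (((c a : Kˣ) : K) * y a) := by linear_combination e1
      exact coe_inj (mul_right_cancel₀ (mul_ne_zero (coe_ne_zero _) ha) this)
    have hbij : Function.Bijective m := Finite.injective_iff_bijective.1 hinj
    have hsum := Finset.sum_congr (rfl : (univ : Finset G) = univ) fun n _ => hm n
    rw [Finset.sum_add_distrib, ← Finset.sum_mul, sum_coe hG, Finset.sum_neg_distrib,
      ← Finset.sum_mul, hbij.sum_comp (fun g : G => ((g : Kˣ) : K)), sum_coe hG] at hsum
    simp only [zero_mul, add_zero, neg_zero, sum_const, card_univ, nsmul_eq_mul] at hsum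
    refine (mul_eq_zero.1 hsum).resolve_left ?_
    have : Fintype.card G ≠ 0 := by omega
    exact_mod_cast this
  have hs : supp y = {t, a} := by
    ext s
    rw [mem_supp, mem_insert, mem_singleton]
    constructor
    · intro hys
      by_contra! hst
      have h1 := hz (Pi.mulSingle s g)
      have h2 := hz 1
      have h3 := lin_mulSingle s g 1 y
      rw [mul_one] at h3
      rw [h3, Pi.mulSingle_eq_of_ne hst.1.symm, Pi.mulSingle_eq_of_ne hst.2.symm] at h1
      simp at h1 h2
      have : (((g : Kˣ) : K) - 1) * y s = 0 := by linear_combination h1 - h2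
      exact (mul_ne_zero hg' hys) this
    · rintro (rfl | rfl) <;> assumption
  rw [hs, Finset.card_pair hat.symm]

end Forms

/-! ### Coverings of `G^T` by vanishing sets -/

section Covers

variable {K : Type*} [Field K] {T : Type*} [Fintype T] [DecidableEq T] {G : Subgroup Kˣ}
  [Fintype G]

/-- A finite set of nonzero vectors is a cover if every form `lin c` vanishes at one of them. -/
structure IsCover (G : Subgroup Kˣ) (S : Finset (T → K)) : Prop where
  ne_zero : ∀ y ∈ S, y ≠ 0
  exists_lin : ∀ c : T → G, ∃ y ∈ S, lin c y = 0

open Classical in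
lemma sum_card_ker (S : Finset (T → K)) :
    ∑ y ∈ S, (ker G y).card = ∑ c : T → G, (S.filter fun y => lin c y = 0).card := by
  simp_rw [ker, Finset.card_filter]
  rw [Finset.sum_comm]

omit [DecidableEq T] [Fintype G] in
lemma IsCover.one_le {S : Finset (T → K)} (h : IsCover G S) (c : T → G)
    [DecidablePred fun y : T → K => lin c y = 0] : 1 ≤ (S.filter fun y => lin c y = 0).card := by
  obtain ⟨y, hy, hc⟩ := h.exists_lin c
  exact Finset.card_pos.2 ⟨y, by simp [hy, hc]⟩

lemma IsCover.card_le {S : Finset (T → K)} (h : IsCover G S) : Fintype.card G ≤ S.card := by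
  classical
  have h1 : Fintype.card (T → G) ≤ ∑ y ∈ S, (ker G y).card := by
    rw [sum_card_ker]
    calc _ = ∑ c : T → G, 1 := by simp
      _ ≤ _ := Finset.sum_le_sum fun c _ => h.one_le c
  have h2 : Fintype.card G * ∑ y ∈ S, (ker G y).card ≤ S.card * Fintype.card (T → G) := by
    rw [Finset.mul_sum, ← smul_eq_mul]
    exact Finset.sum_le_card_nsmul _ _ _ fun y hy => card_ker_le (h.ne_zero y hy)
  have h3 : 0 < Fintype.card (T → G) := Fintype.card_pos
  exact Nat.le_of_mul_le_mul_right ((Nat.mul_le_mul_left _ h1).trans h2) h3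

/-- In a cover of the minimal size, every vanishing set has the maximal size. -/
lemma IsCover.card_ker {S : Finset (T → K)} (h : IsCover G S) (hS : S.card = Fintype.card G)
    {y : T → K} (hy : y ∈ S) :
    Fintype.card G * (ker G y).card = Fintype.card (T → G) := by
  classical
  refine le_antisymm (card_ker_le (h.ne_zero y hy)) ?_
  by_contra! hlt
  have h1 : Fintype.card (T → G) ≤ ∑ y ∈ S, (ker G y).card := by
    rw [sum_card_ker]
    calc _ = ∑ c : T → G, 1 := by simp
      _ ≤ _ := Finset.sum_le_sum fun c _ => h.one_le c
  have h2 : Fintype.card G * ∑ y ∈ S, (ker G y).card < S.card * Fintype.card (T → G) := by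
    rw [Finset.mul_sum, ← smul_eq_mul (S.card), ← Finset.sum_const]
    exact Finset.sum_lt_sum (fun y hy => card_ker_le (h.ne_zero y hy)) ⟨y, hy, hlt⟩
  rw [hS] at h2
  exact absurd (Nat.mul_le_mul_left (Fintype.card G) h1) (not_le.2 h2)

/-- In a cover of the minimal size, the vanishing sets are pairwise disjoint. -/
lemma IsCover.eq_of_lin {S : Finset (T → K)} (h : IsCover G S) (hS : S.card = Fintype.card G)
    {y z : T → K} (hy : y ∈ S) (hz : z ∈ S) {c : T → G} (hyc : lin c y = 0)
    (hzc : lin c z = 0) : y = z := by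
  classical
  by_contra hne
  have h1 : Fintype.card (T → G) < ∑ y ∈ S, (ker G y).card := by
    rw [sum_card_ker]
    calc _ = ∑ c : T → G, 1 := by simp
      _ < _ := Finset.sum_lt_sum (fun c _ => h.one_le c) ⟨c, mem_univ c,
        Finset.one_lt_card.2 ⟨y, by simp [hy, hyc], z, by simp [hz, hzc], hne⟩⟩
  have h2 : Fintype.card G * ∑ y ∈ S, (ker G y).card = S.card * Fintype.card (T → G) := by
    rw [Finset.mul_sum, ← smul_eq_mul (S.card), ← Finset.sum_const]
    exact Finset.sum_congr rfl fun y hy => h.card_ker hS hy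
  rw [hS] at h2
  have h4 := Nat.eq_of_mul_eq_mul_left Fintype.card_pos h2
  omega

variable [CharZero K]

lemma IsCover.card_supp (hG : 2 ≤ Fintype.card G) {S : Finset (T → K)} (h : IsCover G S)
    (hS : S.card = Fintype.card G) {y : T → K} (hy : y ∈ S) : (supp y).card = 2 :=
  BklPartition.card_supp hG (h.ne_zero y hy) (h.card_ker hS hy)

/-- In a cover of the minimal size all vectors have the same support, since two vectors with
different supports of size two have a common form vanishing at both. -/
lemma IsCover.supp_eq (hG : 2 ≤ Fintype.card G) {S : Finset (T → K)} (h : IsCover G S)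
    (hS : S.card = Fintype.card G) {y z : T → K} (hy : y ∈ S) (hz : z ∈ S) :
    supp y = supp z := by
  by_contra hne
  obtain ⟨a, ha, haz⟩ : ∃ a ∈ supp y, a ∉ supp z := by
    by_contra! hcon
    exact hne (Finset.eq_of_subset_of_card_le hcon
      (by rw [h.card_supp hG hS hy, h.card_supp hG hS hz]))
  rw [mem_supp] at ha haz
  rw [not_not] at haz
  obtain ⟨b, hb⟩ := Function.ne_iff.1 (h.ne_zero z hz)
  obtain ⟨m, hm⟩ := exists_of_card_ker (h.card_ker hS hz) hb 1
  obtain ⟨n, hn⟩ := exists_of_card_ker (h.card_ker hS hy) ha (Pi.mulSingle b m * 1)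
  have hzc : lin (Pi.mulSingle a n * (Pi.mulSingle b m * 1)) z = 0 := by
    rw [lin_mulSingle, hm, haz]; ring
  have := h.eq_of_lin hS hy hz hn hzc
  rw [this] at ha
  exact ha haz

omit [CharZero K] in
/-- The normal form of a cover of the minimal size: its vectors are supported on two coordinates
`t`, `a`, and the negated ratios of the two entries run through `G`. -/
lemma IsCover.exists_param {S : Finset (T → K)} (h : IsCover G S)
    (hS : S.card = Fintype.card G) {t a : T} (hta : t ≠ a) (hsupp : ∀ y ∈ S, supp y = {t, a}) :
    ∃ β : G → K, (∀ m, β m ≠ 0) ∧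
      ∃ Y : G → (T → K), Function.Injective Y ∧ (∀ y, y ∈ S ↔ ∃ m, Y m = y) ∧
        ∀ m, Y m = Pi.single t (β m * ((m : Kˣ) : K)) - Pi.single a (β m) := by
  classical
  have hr : ∀ y : S, ∃ m : G, y.1 t = - (((m : Kˣ) : K) * y.1 a) := by
    intro y
    have hs := hsupp y.1 y.2
    have hyt : y.1 t ≠ 0 := by rw [← mem_supp, hs]; simp
    obtain ⟨m, hm⟩ := exists_of_card_ker (h.card_ker hS y.2) hyt 1
    rw [lin_mulSingle, lin_of_supp hta hs] at hm
    simp only [Pi.one_apply, OneMemClass.coe_one, Units.val_one, one_mul, mul_one] at hm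
    refine ⟨m⁻¹, ?_⟩
    have hm0 := coe_ne_zero (K := K) m
    simp only [InvMemClass.coe_inv, Units.val_inv_eq_inv_val]
    field_simp
    linear_combination hm
  choose r hr using hr
  have hinj : Function.Injective r := by
    intro y z hyz
    have key : ∀ w : S, r w = r y → lin (Pi.mulSingle a (r y)) w.1 = 0 := by
      intro w hw
      rw [lin_of_supp hta (hsupp w.1 w.2), hr w, hw, Pi.mulSingle_eq_of_ne hta]
      simp
    exact Subtype.ext (h.eq_of_lin hS y.2 z.2 (key y rfl) (key z hyz.symm))
  have hbij : Function.Bijective r :=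
    (Fintype.bijective_iff_injective_and_card r).2 ⟨hinj, by simpa using hS⟩
  let e := Equiv.ofBijective r hbij
  have her : ∀ m, r (e.symm m) = m := fun m => e.apply_symm_apply m
  refine ⟨fun m => - (e.symm m).1 a, fun m => ?_, fun m => (e.symm m).1,
    Subtype.val_injective.comp e.symm.injective, fun y => ⟨fun hy => ⟨e ⟨y, hy⟩, by simp⟩, ?_⟩,
    fun m => ?_⟩
  · have := hsupp _ (e.symm m).2
    rw [neg_ne_zero, ← mem_supp, this]
    simp
  · rintro ⟨m, rfl⟩
    exact (e.symm m).2
  · funext s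
    have hs := hsupp _ (e.symm m).2
    rcases eq_or_ne s t with rfl | hst
    · have := hr (e.symm m)
      rw [her] at this
      simp [hta, this]
      ring
    · rcases eq_or_ne s a with rfl | hsa
      · simp [hst]
      · have : s ∉ supp (e.symm m).1 := by rw [hs]; simp [hst, hsa]
        rw [mem_supp, not_not] at this
        simp [hst, hsa, this]

end Covers

/-! ### Multisets with the same values under all forms -/

section Reps

variable {K : Type*} [Field K] {T : Type*} [Fintype T] [DecidableEq T] {G : Subgroup Kˣ}
  [Fintype G]

/-- Two multisets of vectors which every form `lin c` maps to the same multiset of values. -/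
def SameVals (G : Subgroup Kˣ) (U V : Multiset (T → K)) : Prop :=
  ∀ c : T → G, U.map (lin c) = V.map (lin c)

open Classical in
/-- The differences `x - v` with `v ∈ V`. -/
noncomputable def diffs (x : T → K) (V : Multiset (T → K)) : Finset (T → K) :=
  V.toFinset.image fun v => x - v

omit [DecidableEq T] in
lemma mem_diffs {x y : T → K} {V : Multiset (T → K)} : y ∈ diffs x V ↔ ∃ v ∈ V, x - v = y := by
  simp [diffs]

omit [DecidableEq T] [Fintype G] in
lemma isCover_diffs {A B : Multiset (T → K)} (hd : ∀ x ∈ A, x ∉ B) (h : SameVals G A B)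
    {x : T → K} (hx : x ∈ A) : IsCover G (diffs x B) := by
  refine ⟨fun y hy => ?_, fun c => ?_⟩
  · obtain ⟨v, hv, rfl⟩ := mem_diffs.1 hy
    intro h0
    rw [sub_eq_zero] at h0
    exact hd x hx (h0 ▸ hv)
  · have : lin c x ∈ B.map (lin c) := h c ▸ Multiset.mem_map_of_mem _ hx
    obtain ⟨v, hv, hvx⟩ := Multiset.mem_map.1 this
    exact ⟨x - v, mem_diffs.2 ⟨v, hv, rfl⟩, by rw [lin_sub, hvx, sub_self]⟩

/-- Cancelling the common part of two distinct multisets leaves disjoint multisets, and the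
differences between them form a cover. A cover has at least `|G|` elements, so nothing was
cancelled and no element of `V` is repeated. -/
lemma nodup_and_disjoint {U V : Multiset (T → K)} (hU : U.card = Fintype.card G)
    (hV : V.card = Fintype.card G) (h : SameVals G U V) (hne : U ≠ V) :
    V.Nodup ∧ ∀ x ∈ U, x ∉ V := by
  classical
  have hd : ∀ x ∈ U - V, x ∉ V - U := by
    intro x hx hx'
    rw [← Multiset.one_le_count_iff_mem, Multiset.count_sub] at hx hx'
    omega
  have hs : SameVals G (U - V) (V - U) := by
    intro c
    have hsplit : ∀ A B : Multiset (T → K),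
        A.map (lin c) = (A - B).map (lin c) + (A ∩ B).map (lin c) := fun A B => by
      rw [← Multiset.map_add, Multiset.sub_add_inter]
    have := h c
    rw [hsplit U V, hsplit V U, Multiset.inter_comm V U] at this
    exact add_right_cancel this
  obtain ⟨x, hx⟩ : ∃ x, x ∈ U - V := by
    by_contra! hcon
    have h0 : U - V = 0 := Multiset.eq_zero_of_forall_notMem hcon
    exact hne (Multiset.eq_of_le_of_card_le (tsub_eq_zero_iff_le.1 h0) (by rw [hU, hV]))
  have h1 := (isCover_diffs hd hs hx).card_le
  have h2 : (diffs x (V - U)).card ≤ (V - U).toFinset.card := Finset.card_image_le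
  have h3 := Multiset.toFinset_card_le (V - U)
  have h4 := Multiset.card_le_card (Multiset.sub_le_self V U)
  have h5 : V - U = V := Multiset.eq_of_le_of_card_le (Multiset.sub_le_self V U) (by omega)
  refine ⟨?_, fun y hyU hyV => ?_⟩
  · rw [← Multiset.toFinset_card_eq_card_iff_nodup, ← h5]
    omega
  · have hyU' := Multiset.one_le_count_iff_mem.2 hyU
    have hyV' := Multiset.one_le_count_iff_mem.2 hyV
    have h6 := congrArg (Multiset.count y) h5
    rw [Multiset.count_sub] at h6
    omega

omit [DecidableEq T] in
lemma card_diffs {V : Multiset (T → K)} (hV : V.Nodup) (x : T → K) :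
    (diffs x V).card = V.card := by
  classical
  rw [diffs, Finset.card_image_of_injective _ sub_right_injective,
    Multiset.toFinset_card_of_nodup hV]

variable [CharZero K]

omit [CharZero K] in
lemma SameVals.sum_eq (hG : 2 ≤ Fintype.card G) {U V : Multiset (T → K)} (h : SameVals G U V) :
    U.sum = V.sum := by
  rw [← sub_eq_zero]
  refine eq_zero_of_lin (G := G) hG fun c => ?_
  let φ : (T → K) →+ K := ⟨⟨lin c, lin_zero c⟩, lin_add c⟩
  have key : ∀ W : Multiset (T → K), lin c W.sum = (W.map (lin c)).sum :=
    fun W => map_multiset_sum φ W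
  rw [lin_sub, key, key, h c, sub_self]

omit [CharZero K] in
/-- Two representations whose differences from `x` are supported on the same two coordinates
coincide. Comparing products of nonzero values shows that the two families of differences are
proportional, and they have the same nonzero sum. -/
lemma eq_of_supp_eq (hG : 2 ≤ Fintype.card G) {x : T → K} {V W : Multiset (T → K)}
    (hV : V.Nodup) (hW : W.Nodup) (hVc : V.card = Fintype.card G) (hWc : W.card = Fintype.card G)
    (cV : IsCover G (diffs x V)) (cW : IsCover G (diffs x W)) (h : SameVals G V W)
    (hx : Fintype.card G • x ≠ V.sum) {t a : T} (hta : t ≠ a)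
    (sV : ∀ y ∈ diffs x V, supp y = {t, a}) (sW : ∀ y ∈ diffs x W, supp y = {t, a}) :
    V = W := by
  classical
  obtain ⟨β, hβ, Y, hYi, hYm, hY⟩ := cV.exists_param (by rw [card_diffs hV, hVc]) hta sV
  obtain ⟨γ, hγ, Z, hZi, hZm, hZ⟩ := cW.exists_param (by rw [card_diffs hW, hWc]) hta sW
  have param : ∀ {X : Multiset (T → K)} (_ : X.Nodup) {A : G → (T → K)}
      (_ : Function.Injective A) (_ : ∀ y, y ∈ diffs x X ↔ ∃ m, A m = y),
      X = (univ : Finset G).val.map fun m => x - A m := by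
    intro X hX A hAi hA
    refine (Multiset.Nodup.ext hX ((Multiset.nodup_map_iff_of_injective ?_).2
      (univ : Finset G).nodup)).2 fun v => ?_
    · exact sub_right_injective.comp hAi
    · rw [Multiset.mem_map]
      constructor
      · intro hv
        obtain ⟨m, hm⟩ := (hA (x - v)).1 (mem_diffs.2 ⟨v, hv, rfl⟩)
        exact ⟨m, mem_univ_val m, by rw [hm, sub_sub_cancel]⟩
      · rintro ⟨m, -, rfl⟩
        obtain ⟨w, hw, hwm⟩ := mem_diffs.1 ((hA (A m)).2 ⟨m, rfl⟩)
        rwa [← hwm, sub_sub_cancel]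
  have eV := param hV hYi hYm
  have eW := param hW hZi hZm
  have hlin : ∀ (j m : G) (b : K), lin (Pi.mulSingle a j : T → G)
      (Pi.single t (b * ((m : Kˣ) : K)) - Pi.single a b)
        = b * (((m : Kˣ) : K) - ((j : Kˣ) : K)) := by
    intro j m b
    rw [lin_sub, lin_single, lin_single, Pi.mulSingle_eq_of_ne hta, Pi.mulSingle_eq_same]
    simp
    ring
  have hprod : ∀ (j : G) (b : G → K), (∀ m, b m ≠ 0) →
      ∏ m : G, (if b m * (((m : Kˣ) : K) - ((j : Kˣ) : K)) = 0 then 1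
        else b m * (((m : Kˣ) : K) - ((j : Kˣ) : K)))
      = (∏ m ∈ univ.erase j, b m) * ∏ m ∈ univ.erase j, (((m : Kˣ) : K) - ((j : Kˣ) : K)) := by
    intro j b hb
    rw [← Finset.mul_prod_erase _ _ (mem_univ j), ← Finset.prod_mul_distrib]
    simp only [sub_self, mul_zero, if_true, one_mul]
    refine Finset.prod_congr rfl fun m hm => if_neg ?_
    refine mul_ne_zero (hb m) (sub_ne_zero.2 fun e => Finset.ne_of_mem_erase hm (coe_inj e))
  have key : ∀ j : G, ∏ m ∈ univ.erase j, β m = ∏ m ∈ univ.erase j, γ m := by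
    intro j
    have h1 := h (Pi.mulSingle a j)
    rw [eV, eW, Multiset.map_map, Multiset.map_map] at h1
    have h2 := congrArg (fun M : Multiset K => (M.map fun w =>
      if lin (Pi.mulSingle a j : T → G) x - w = 0 then 1
        else lin (Pi.mulSingle a j : T → G) x - w).prod) h1
    simp only [Multiset.map_map, Function.comp_def, lin_sub _ x, sub_sub_cancel, hY, hZ, hlin]
      at h2
    have h3 := (hprod j β hβ).symm.trans (h2.trans (hprod j γ hγ))
    refine mul_right_cancel₀ (Finset.prod_ne_zero_iff.2 fun m hm => ?_) h3
    exact sub_ne_zero.2 fun e => Finset.ne_of_mem_erase hm (coe_inj e)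
  set B := ∏ m, β m with hB
  set C := ∏ m, γ m with hC
  have hB0 : B ≠ 0 := Finset.prod_ne_zero_iff.2 fun m _ => hβ m
  have hprop : ∀ j, B * γ j = C * β j := by
    intro j
    rw [hB, hC, ← Finset.mul_prod_erase _ β (mem_univ j), ← Finset.mul_prod_erase _ γ (mem_univ j),
      key j]
    ring
  have hYZ : ∀ m, B • Z m = C • Y m := by
    intro m
    rw [hY, hZ, smul_sub, smul_sub, ← Pi.single_smul, ← Pi.single_smul, ← Pi.single_smul,
      ← Pi.single_smul, smul_eq_mul, smul_eq_mul, smul_eq_mul, smul_eq_mul, ← mul_assoc,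
      ← mul_assoc, hprop]
  have sumV : V.sum = Fintype.card G • x - ∑ m, Y m := by
    conv_lhs => rw [eV]
    change ∑ m : G, (x - Y m) = _
    simp [Finset.sum_sub_distrib]
  have sumW : W.sum = Fintype.card G • x - ∑ m, Z m := by
    conv_lhs => rw [eW]
    change ∑ m : G, (x - Z m) = _
    simp [Finset.sum_sub_distrib]
  have hVW := h.sum_eq hG
  have hsum : ∑ m, Y m = ∑ m, Z m := by
    have := sumV.symm.trans (hVW.trans sumW)
    exact sub_right_injective this
  have hσ : ∑ m, Y m ≠ 0 := fun h0 => hx (by rw [sumV, h0, sub_zero])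
  have hBC : B = C := by
    have h1 : B • ∑ m, Y m = C • ∑ m, Y m := by
      conv_lhs => rw [hsum]
      rw [Finset.smul_sum, Finset.smul_sum]
      exact Finset.sum_congr rfl fun m _ => hYZ m
    exact smul_left_injective K hσ h1
  have hfin : Y = Z := by
    funext m
    have := hYZ m
    rw [← hBC] at this
    exact (smul_right_injective _ hB0 this).symm
  rw [eV, eW, hfin]

omit [Fintype G] [CharZero K] in
/-- If `y`, `z` have different supports of size two and `y - z` also has a support of size two,
then the supports of `y` and `z` share a coordinate, and `y` and `z` agree there. -/
lemma agree_of_supp {y z : T → K} (hy : (supp y).card = 2) (hz : (supp z).card = 2)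
    (hyz : (supp (y - z)).card = 2) (hne : supp y ≠ supp z) :
    (supp y ∩ supp z).Nonempty ∧ ∀ t ∈ supp y ∩ supp z, y t = z t := by
  classical
  have hsub : (supp y \ supp z) ∪ (supp z \ supp y) ⊆ supp (y - z) := by
    intro s hs
    simp only [mem_union, mem_sdiff, mem_supp, not_not] at hs
    rw [mem_supp, Pi.sub_apply]
    rcases hs with ⟨h1, h2⟩ | ⟨h1, h2⟩
    · simpa [h2] using h1
    · simpa [h2] using h1
  have hdis : Disjoint (supp y \ supp z) (supp z \ supp y) := disjoint_sdiff_sdiff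
  have hc := Finset.card_union_of_disjoint hdis
  have h1 := Finset.card_sdiff_add_card_inter (supp y) (supp z)
  have h2 := Finset.card_sdiff_add_card_inter (supp z) (supp y)
  rw [Finset.inter_comm (supp z)] at h2
  have h3 := Finset.card_le_card hsub
  have h4 : (supp y ∩ supp z).card ≠ 2 := by
    intro h4
    have e1 := Finset.eq_of_subset_of_card_le (inter_subset_left (s₁ := supp y) (s₂ := supp z))
      (by omega)
    have e2 := Finset.eq_of_subset_of_card_le (inter_subset_right (s₁ := supp y) (s₂ := supp z))
      (by omega)
    exact hne (e1.symm.trans e2)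
  refine ⟨Finset.card_pos.1 (by omega), fun t ht => ?_⟩
  have heq := Finset.eq_of_subset_of_card_le hsub (by omega)
  have ht' : t ∉ supp (y - z) := by
    rw [← heq]
    rw [mem_inter] at ht
    simp [ht.1, ht.2]
  rw [mem_supp, not_not, Pi.sub_apply, sub_eq_zero] at ht'
  exact ht'

/-- At most `|T|` multisets of size `|G|` in `K^T` can pairwise have the same values under all
the forms `lin c`. -/
theorem card_le_of_sameVals (hG : 2 ≤ Fintype.card G) (hT : 2 ≤ Fintype.card T)
    (𝒰 : Finset (Multiset (T → K))) (hcard : ∀ U ∈ 𝒰, U.card = Fintype.card G)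
    (hsame : ∀ U ∈ 𝒰, ∀ V ∈ 𝒰, SameVals G U V) : 𝒰.card ≤ Fintype.card T := by
  classical
  by_contra! hlt
  obtain ⟨U, hU⟩ : 𝒰.Nonempty := Finset.card_pos.1 (by omega)
  have hcardV : (𝒰.erase U).card = 𝒰.card - 1 := Finset.card_erase_of_mem hU
  obtain ⟨V₁, hV₁, V₂, hV₂, hV₁₂⟩ := Finset.one_lt_card.1 (by omega : 1 < (𝒰.erase U).card)
  have hnd : ∀ V ∈ 𝒰, V.Nodup := by
    intro V hV
    obtain ⟨W, hW, hWV⟩ := Finset.exists_mem_ne (by omega : 1 < 𝒰.card) V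
    exact (nodup_and_disjoint (hcard W hW) (hcard V hV) (hsame W hW V hV) hWV).1
  have hcover : ∀ W ∈ 𝒰, ∀ V ∈ 𝒰, W ≠ V → ∀ w ∈ W, IsCover G (diffs w V) :=
    fun W hW V hV hWV w hw => isCover_diffs
      (nodup_and_disjoint (hcard W hW) (hcard V hV) (hsame W hW V hV) hWV).2 (hsame W hW V hV) hw
  have hdc : ∀ V ∈ 𝒰, ∀ w, (diffs w V).card = Fintype.card G :=
    fun V hV w => by rw [card_diffs (hnd V hV), hcard V hV]
  -- A point `x` of `U` which is not the centroid of `U`.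
  obtain ⟨x, hxU, hx⟩ : ∃ x ∈ U, Fintype.card G • x ≠ U.sum := by
    by_contra! hcon
    obtain ⟨p, hp, q, hq, hpq⟩ := Finset.one_lt_card.1
      (by rw [Multiset.toFinset_card_of_nodup (hnd U hU), hcard U hU]; omega :
        1 < U.toFinset.card)
    rw [Multiset.mem_toFinset] at hp hq
    refine hpq ?_
    have h1 := (hcon p hp).trans (hcon q hq).symm
    funext s
    have h2 := congrFun h1 s
    simp only [Pi.smul_apply, nsmul_eq_mul] at h2
    have : (Fintype.card G : K) ≠ 0 := by
      have : Fintype.card G ≠ 0 := by omega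
      exact_mod_cast this
    exact mul_left_cancel₀ this h2
  have hcx : ∀ V ∈ 𝒰.erase U, IsCover G (diffs x V) := fun V hV =>
    hcover U hU V (Finset.mem_of_mem_erase hV) (Finset.ne_of_mem_erase hV).symm x hxU
  have hne : ∀ V ∈ 𝒰.erase U, ∃ y, y ∈ diffs x V := fun V hV =>
    Finset.card_pos.1 (by rw [hdc V (Finset.mem_of_mem_erase hV)]; omega)
  choose! y hy using hne
  have he : ∀ V ∈ 𝒰.erase U, ∀ z ∈ diffs x V, supp z = supp (y V) := fun V hV z hz =>
    (hcx V hV).supp_eq hG (hdc V (Finset.mem_of_mem_erase hV) x) hz (hy V hV)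
  have he2 : ∀ V ∈ 𝒰.erase U, (supp (y V)).card = 2 := fun V hV =>
    (hcx V hV).card_supp hG (hdc V (Finset.mem_of_mem_erase hV) x) (hy V hV)
  have hinj : ∀ V ∈ 𝒰.erase U, ∀ W ∈ 𝒰.erase U, supp (y V) = supp (y W) → V = W := by
    intro V hV W hW hVW
    have hV' := Finset.mem_of_mem_erase hV
    have hW' := Finset.mem_of_mem_erase hW
    obtain ⟨t, a, hta, hs⟩ := Finset.card_eq_two.1 (he2 V hV)
    refine eq_of_supp_eq hG (hnd V hV') (hnd W hW') (hcard V hV') (hcard W hW') (hcx V hV)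
      (hcx W hW) (hsame V hV' W hW') ?_ hta (fun z hz => (he V hV z hz).trans hs)
      (fun z hz => (he W hW z hz).trans (hVW ▸ hs))
    rwa [← (hsame U hU V hV').sum_eq hG]
  -- Two supports meet, and all differences agree on the common coordinate.
  have hagree : ∀ V ∈ 𝒰.erase U, ∀ W ∈ 𝒰.erase U, V ≠ W →
      ∃ t, t ∈ supp (y V) ∧ t ∈ supp (y W) ∧
        ∀ v ∈ diffs x V, ∀ w ∈ diffs x W, v t = w t := by
    intro V hV W hW hVW
    have hV' := Finset.mem_of_mem_erase hV
    have hW' := Finset.mem_of_mem_erase hW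
    have main : ∀ v ∈ diffs x V, ∀ w ∈ diffs x W,
        (supp v ∩ supp w).Nonempty ∧ ∀ t ∈ supp v ∩ supp w, v t = w t := by
      intro v hv w hw
      refine agree_of_supp (by rw [he V hV v hv, he2 V hV]) (by rw [he W hW w hw, he2 W hW]) ?_
        (by rw [he V hV v hv, he W hW w hw]; exact fun h => hVW (hinj V hV W hW h))
      obtain ⟨p, hp, rfl⟩ := mem_diffs.1 hv
      obtain ⟨q, hq, rfl⟩ := mem_diffs.1 hw
      rw [sub_sub_sub_cancel_left]
      exact (hcover W hW' V hV' hVW.symm q hq).card_supp hG (hdc V hV' q)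
        (mem_diffs.2 ⟨p, hp, rfl⟩)
    obtain ⟨t, ht⟩ := (main _ (hy V hV) _ (hy W hW)).1
    refine ⟨t, (mem_inter.1 ht).1, (mem_inter.1 ht).2, fun v hv w hw => (main v hv w hw).2 t ?_⟩
    rwa [he V hV v hv, he W hW w hw]
  -- The differences to one representation agree on at most one coordinate of their support.
  have huniq : ∀ V ∈ 𝒰.erase U, ∀ t ∈ supp (y V), ∀ s ∈ supp (y V),
      (∀ v ∈ diffs x V, ∀ w ∈ diffs x V, v t = w t) →
      (∀ v ∈ diffs x V, ∀ w ∈ diffs x V, v s = w s) → s = t := by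
    intro V hV t ht s hs h1 h2
    by_contra hst
    have hV' := Finset.mem_of_mem_erase hV
    obtain ⟨v, hv, w, hw, hvw⟩ := Finset.one_lt_card.1
      (by rw [hdc V hV' x]; omega : 1 < (diffs x V).card)
    have hsupp : supp (y V) = {s, t} := by
      refine (Finset.eq_of_subset_of_card_le ?_ ?_).symm
      · intro r hr
        rw [mem_insert, mem_singleton] at hr
        rcases hr with rfl | rfl <;> assumption
      · rw [he2 V hV, Finset.card_pair hst]
    refine hvw (funext fun r => ?_)
    by_cases hr : r ∈ supp (y V)
    · rw [hsupp, mem_insert, mem_singleton] at hr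
      rcases hr with rfl | rfl
      · exact h2 v hv w hw
      · exact h1 v hv w hw
    · have hrv := hr
      rw [← he V hV v hv, mem_supp, not_not] at hrv
      rw [← he V hV w hw, mem_supp, not_not] at hr
      rw [hrv, hr]
  obtain ⟨t, ht₁, ht₂, ht⟩ := hagree V₁ hV₁ V₂ hV₂ hV₁₂
  have hall : ∀ V ∈ 𝒰.erase U, t ∈ supp (y V) := by
    intro V hV
    rcases eq_or_ne V₁ V with rfl | hne
    · exact ht₁
    obtain ⟨s, hs₁, hs, hsa⟩ := hagree V₁ hV₁ V hV hne
    have : s = t := huniq V₁ hV₁ t ht₁ s hs₁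
      (fun v hv w hw => (ht v hv _ (hy V₂ hV₂)).trans (ht w hw _ (hy V₂ hV₂)).symm)
      (fun v hv w hw => (hsa v hv _ (hy V hV)).trans (hsa w hw _ (hy V hV)).symm)
    exact this ▸ hs
  have hle : (𝒰.erase U).card ≤ ((univ.erase t).powersetCard 1).card := by
    refine Finset.card_le_card_of_injOn (fun V => (supp (y V)).erase t) ?_ ?_
    · intro V hV
      have hV : V ∈ 𝒰.erase U := hV
      rw [Finset.mem_coe, Finset.mem_powersetCard]
      refine ⟨Finset.erase_subset_erase _ (subset_univ _), ?_⟩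
      rw [Finset.card_erase_of_mem (hall V hV), he2 V hV]
    · intro V hV W hW hVW
      have hV : V ∈ 𝒰.erase U := hV
      have hW : W ∈ 𝒰.erase U := hW
      refine hinj V hV W hW ?_
      have hVW : (supp (y V)).erase t = (supp (y W)).erase t := hVW
      rw [← Finset.insert_erase (hall V hV), ← Finset.insert_erase (hall W hW), hVW]
  rw [Finset.card_powersetCard, Finset.card_erase_of_mem (mem_univ t), Finset.card_univ,
    Nat.choose_one_right] at hle
  omega

end Reps

/-! ### Encoding by digits -/

section Digits

lemma eq_of_sum_digits {B : ℕ} (M : ℕ) : ∀ {d d' : ℕ → ℕ}, (∀ a, d a < B) → (∀ a, d' a < B) →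
    ∑ a ∈ range M, d a * B ^ a = ∑ a ∈ range M, d' a * B ^ a → ∀ a < M, d a = d' a := by
  induction M with
  | zero => intro _ _ _ _ _ a ha; omega
  | succ M ih =>
    intro d d' hd hd' h
    have hB : 0 < B := (Nat.zero_le _).trans_lt (hd 0)
    have step : ∀ f : ℕ → ℕ, ∑ a ∈ range (M + 1), f a * B ^ a
        = f 0 + B * ∑ a ∈ range M, f (a + 1) * B ^ a := by
      intro f
      rw [Finset.sum_range_succ', Finset.mul_sum, pow_zero, mul_one, add_comm]
      congr 1
      exact Finset.sum_congr rfl fun a _ => by ring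
    rw [step, step] at h
    have h0 : d 0 = d' 0 := by
      have := congrArg (· % B) h
      simpa [Nat.add_mul_mod_self_left, Nat.mod_eq_of_lt (hd 0), Nat.mod_eq_of_lt (hd' 0)]
        using this
    rw [h0] at h
    have h1 := ih (fun a => hd (a + 1)) (fun a => hd' (a + 1))
      (Nat.eq_of_mul_eq_mul_left hB (Nat.add_left_cancel h))
    intro a ha
    cases a with
    | zero => exact h0
    | succ a => exact h1 a (by omega)

/-- A multiset of exponents whose multiplicities are smaller than `B` is determined by the sum of
the corresponding powers of `B`. -/
lemma eq_of_sum_pow {B : ℕ} {U V : Multiset ℕ} (hU : ∀ a, U.count a < B)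
    (hV : ∀ a, V.count a < B)
    (h : (U.map fun a => B ^ a).sum = (V.map fun a => B ^ a).sum) : U = V := by
  have key : ∀ (W : Multiset ℕ) (M : ℕ), (∀ a ∈ W, a < M) →
      (W.map fun a => B ^ a).sum = ∑ a ∈ range M, W.count a * B ^ a := by
    intro W M hM
    rw [Finset.sum_multiset_map_count]
    refine Finset.sum_subset (fun a ha => ?_) fun a _ ha => ?_
    · exact mem_range.2 (hM a (Multiset.mem_toFinset.1 ha))
    · rw [Multiset.mem_toFinset] at ha
      rw [Multiset.count_eq_zero_of_notMem ha, zero_smul]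
  obtain ⟨M, hM⟩ : ∃ M, ∀ a ∈ U + V, a < M :=
    ⟨(U + V).sum + 1, fun a ha => Nat.lt_succ_of_le (Multiset.le_sum_of_mem ha)⟩
  rw [key U M fun a ha => hM a (Multiset.mem_add.2 (Or.inl ha)),
    key V M fun a ha => hM a (Multiset.mem_add.2 (Or.inr ha))] at h
  have h1 := eq_of_sum_digits M hU hV h
  ext a
  by_cases ha : a < M
  · exact h1 a ha
  · rw [Multiset.count_eq_zero_of_notMem fun h => ha (hM a (Multiset.mem_add.2 (Or.inl h))),
      Multiset.count_eq_zero_of_notMem fun h => ha (hM a (Multiset.mem_add.2 (Or.inr h)))]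

end Digits

section Code

variable {K : Type*} [Field K] {T : Type*} [Fintype T] [DecidableEq T] {G : Subgroup Kˣ}
  [Fintype G]

/-- The natural number whose digits in base `|G| + 1` record the values `lin c x`: the digit with
index `e (c, w)` is one if `lin c x = w` and zero otherwise. -/
def code (e : (T → G) × K → ℕ) (x : T → K) : ℕ :=
  ∑ c : T → G, (Fintype.card G + 1) ^ e (c, lin c x)

/-- The exponents occurring in the sum of the codes of the elements of `U`. -/
def exps (e : (T → G) × K → ℕ) (U : Multiset (T → K)) : Multiset ℕ :=
  U.bind fun x => (univ : Finset (T → G)).val.map fun c => e (c, lin c x)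

lemma sum_code (e : (T → G) × K → ℕ) (U : Multiset (T → K)) :
    (U.map (code e)).sum = ((exps e U).map fun a => (Fintype.card G + 1) ^ a).sum := by
  rw [exps, Multiset.map_bind, Multiset.sum_bind]
  simp only [Multiset.map_map]
  rfl

variable {e : (T → G) × K → ℕ} (he : Function.Injective e)

include he

lemma nodup_exps (x : T → K) :
    ((univ : Finset (T → G)).val.map fun c => e (c, lin c x)).Nodup :=
  (Multiset.nodup_map_iff_of_injective fun _ _ h => (Prod.ext_iff.1 (he h)).1).2
    (univ : Finset (T → G)).nodup

lemma count_exps_le (U : Multiset (T → K)) (a : ℕ) : (exps e U).count a ≤ U.card := by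
  induction U using Multiset.induction with
  | empty => simp [exps]
  | cons x U ih =>
    have h1 := Multiset.nodup_iff_count_le_one.1 (nodup_exps he x) a
    rw [exps] at ih ⊢
    rw [Multiset.cons_bind, Multiset.count_add, Multiset.card_cons]
    omega

open Classical in
lemma count_exps (U : Multiset (T → K)) (c : T → G) (w : K) :
    (exps e U).count (e (c, w)) = (U.map (lin c)).count w := by
  induction U using Multiset.induction with
  | empty => simp [exps]
  | cons x U ih =>
    rw [exps] at ih ⊢
    rw [Multiset.cons_bind, Multiset.count_add, ih, Multiset.map_cons, Multiset.count_cons,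
      Multiset.count_eq_of_nodup (nodup_exps he x), add_comm]
    congr 1
    refine if_congr ?_ rfl rfl
    rw [Multiset.mem_map]
    constructor
    · rintro ⟨c', -, h⟩
      have := he h
      rw [Prod.mk.injEq] at this
      rw [← this.2, this.1]
    · rintro rfl
      exact ⟨c, mem_univ_val c, rfl⟩

/-- The sum of at most `|G|` codes determines the values of every form. -/
lemma sameVals_of_sum_code {U V : Multiset (T → K)} (hU : U.card ≤ Fintype.card G)
    (hV : V.card ≤ Fintype.card G) (h : (U.map (code e)).sum = (V.map (code e)).sum) :
    SameVals G U V := by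
  classical
  rw [sum_code, sum_code] at h
  have h1 := eq_of_sum_pow (fun a => Nat.lt_succ_of_le ((count_exps_le he U a).trans hU))
    (fun a => Nat.lt_succ_of_le ((count_exps_le he V a).trans hV)) h
  intro c
  ext w
  rw [← count_exps he, ← count_exps he, h1]

lemma code_injective (hG : 2 ≤ Fintype.card G) : Function.Injective (code e) := by
  intro x y hxy
  have h : SameVals G {x} {y} := sameVals_of_sum_code he (by simp; omega) (by simp; omega)
    (by simpa using hxy)
  simpa using h.sum_eq hG

end Code

/-! ### Counting representations -/

section Rho

lemma eq_of_monotone {k : ℕ} {f g : Fin k → ℕ} (hf : Monotone f) (hg : Monotone g)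
    (h : (univ : Finset (Fin k)).val.map f = (univ : Finset (Fin k)).val.map g) : f = g := by
  rw [Fin.univ_val_map, Fin.univ_val_map, Multiset.coe_eq_coe] at h
  exact List.ofFn_injective
    (h.eq_of_sortedLE (List.sortedLE_ofFn_iff.2 hf) (List.sortedLE_ofFn_iff.2 hg))

lemma exists_monotone {k : ℕ} {M : Multiset ℕ} (hM : M.card = k) :
    ∃ f : Fin k → ℕ, Monotone f ∧ (univ : Finset (Fin k)).val.map f = M := by
  subst hM
  have hl : (M.sort (· ≤ ·)).length = M.card := Multiset.length_sort _
  obtain ⟨f, hf⟩ : ∃ f : Fin M.card → ℕ, List.ofFn f = M.sort (· ≤ ·) := by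
    rw [← hl]
    exact ⟨(M.sort (· ≤ ·)).get, List.ofFn_get _⟩
  refine ⟨f, ?_, ?_⟩
  · rw [← List.sortedLE_ofFn_iff, hf]
    exact (Multiset.pairwise_sort M (· ≤ ·)).sortedLE
  · rw [Fin.univ_val_map, hf, Multiset.sort_eq]

lemma finite_reps (X : Set ℕ) (k n : ℕ) :
    {f : Fin k → ℕ | (∀ i, f i ∈ X) ∧ Monotone f ∧ ∑ i, f i = n}.Finite := by
  refine (Set.finite_Iic (fun _ : Fin k => n)).subset ?_
  rintro f ⟨-, -, hf⟩ i
  rw [← hf]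
  exact Finset.single_le_sum (f := f) (fun _ _ => Nat.zero_le _) (mem_univ i)

lemma rho_mono {X Y : Set ℕ} (h : X ⊆ Y) (k n : ℕ) : rho X k n ≤ rho Y k n :=
  Set.ncard_le_ncard (fun _ hf => ⟨fun i => h (hf.1 i), hf.2⟩) (finite_reps Y k n)

lemma card_le_rho {T : Type*} [Fintype T] {X : Set ℕ} {k n : ℕ} (M : T → Multiset ℕ)
    (hM : Function.Injective M) (hX : ∀ t, ∀ x ∈ M t, x ∈ X) (hk : ∀ t, (M t).card = k)
    (hn : ∀ t, (M t).sum = n) : Fintype.card T ≤ rho X k n := by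
  choose f hf hfM using fun t => exists_monotone (hk t)
  have hinj : Function.Injective f := fun t s h => hM (by rw [← hfM, ← hfM, h])
  rw [← Nat.card_eq_fintype_card, ← Set.ncard_univ, ← Set.ncard_image_of_injective _ hinj]
  refine Set.ncard_le_ncard ?_ (finite_reps X k n)
  rintro _ ⟨t, -, rfl⟩
  refine ⟨fun i => hX t _ ?_, hf t, ?_⟩
  · rw [← hfM t]
    exact Multiset.mem_map_of_mem _ (mem_univ_val i)
  · rw [← hn t, ← hfM t]
    rfl

variable {K : Type*} [Field K] [CharZero K] {T : Type*} [Fintype T] [DecidableEq T]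
  {G : Subgroup Kˣ} [Fintype G] {e : (T → G) × K → ℕ}

lemma rho_code_le (he : Function.Injective e) (hG : 2 ≤ Fintype.card G)
    (hT : 2 ≤ Fintype.card T) (n : ℕ) :
    rho (Set.range (code e)) (Fintype.card G) n ≤ Fintype.card T := by
  classical
  set S := {f : Fin (Fintype.card G) → ℕ |
    (∀ i, f i ∈ Set.range (code e)) ∧ Monotone f ∧ ∑ i, f i = n} with hS
  have hfin : S.Finite := finite_reps _ _ n
  have hpre : ∀ f ∈ S, ∃ U : Multiset (T → K),
      U.map (code e) = (univ : Finset (Fin (Fintype.card G))).val.map f := by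
    intro f hf
    choose g hg using hf.1
    refine ⟨(univ : Finset (Fin (Fintype.card G))).val.map g, ?_⟩
    rw [Multiset.map_map]
    exact Multiset.map_congr rfl fun i _ => hg i
  choose! U hU using hpre
  have hcard : ∀ f ∈ S, (U f).card = Fintype.card G := fun f hf => by
    simpa using congrArg Multiset.card (hU f hf)
  have hsum : ∀ f ∈ S, ((U f).map (code e)).sum = n := fun f hf => by
    rw [hU f hf]; exact hf.2.2
  have hinj : Set.InjOn U hfin.toFinset := by
    intro f hf g hg h
    have hf : f ∈ S := by simpa using hf
    have hg : g ∈ S := by simpa using hg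
    exact eq_of_monotone hf.2.1 hg.2.1 (by rw [← hU f hf, ← hU g hg, h])
  change S.ncard ≤ _
  rw [Set.ncard_eq_toFinset_card S hfin, ← Finset.card_image_of_injOn hinj]
  refine card_le_of_sameVals hG hT _ ?_ ?_
  · intro V hV
    obtain ⟨f, hf, rfl⟩ := Finset.mem_image.1 hV
    exact hcard f (by simpa using hf)
  · intro V hV W hW
    obtain ⟨f, hf, rfl⟩ := Finset.mem_image.1 hV
    obtain ⟨g, hg, rfl⟩ := Finset.mem_image.1 hW
    have hf : f ∈ S := by simpa using hf
    have hg : g ∈ S := by simpa using hg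
    exact sameVals_of_sum_code he (hcard f hf).le (hcard g hg).le
      ((hsum f hf).trans (hsum g hg).symm)

/-- Every finite colouring has a homothetic copy of `{single t g : t ∈ T, g ∈ G}` with codes of
one colour. Its part belonging to a fixed `t` is a representation of a number that does not depend
on `t`, because multiplication by `c t` permutes `G`. -/
lemma exists_card_le_rho (he : Function.Injective e) (hG : 2 ≤ Fintype.card G)
    {κ : Type*} [Finite κ] (P : ℕ → κ) :
    ∃ q n, Fintype.card T ≤
      rho {x | x ∈ Set.range (code e) ∧ P x = q} (Fintype.card G) n := by
  classical
  obtain ⟨a, ha, b, q, hq⟩ := Combinatorics.exists_mono_homothetic_copy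
    (univ.image fun p : T × G => (Pi.single p.1 ((p.2 : Kˣ) : K) : T → K)) (P ∘ code e)
  let v : T → G → (T → K) := fun t g => a • Pi.single t ((g : Kˣ) : K) + b
  have hv : ∀ t g, P (code e (v t g)) = q := fun t g =>
    hq _ (Finset.mem_image.2 ⟨(t, g), mem_univ _, rfl⟩)
  have hlin : ∀ (c : T → G) t g,
      lin c (v t g) = a * (((c t * g : G) : Kˣ) : K) + lin c b := fun c t g => by
    simp only [v, lin_add, lin_nsmul, lin_single]
    simp
  refine ⟨q, ∑ c : T → G, ∑ g : G,
    (Fintype.card G + 1) ^ e (c, a * ((g : Kˣ) : K) + lin c b),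
    card_le_rho (fun t => (univ : Finset G).val.map fun g => code e (v t g)) ?_ ?_ ?_ ?_⟩
  · intro t s hts
    by_contra hne
    have h1 : code e (v t 1) ∈ (univ : Finset G).val.map fun g => code e (v s g) := by
      have hts : (univ : Finset G).val.map (fun g => code e (v t g))
          = (univ : Finset G).val.map fun g => code e (v s g) := hts
      rw [← hts]
      exact Multiset.mem_map_of_mem _ (mem_univ_val 1)
    obtain ⟨g, -, hg⟩ := Multiset.mem_map.1 h1
    have h2 := congrFun (add_right_cancel (code_injective he hG hg)) t
    simp [hne] at h2
    exact ha.ne' (by exact_mod_cast h2.symm)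
  · intro t x hx
    obtain ⟨g, -, rfl⟩ := Multiset.mem_map.1 hx
    exact ⟨⟨_, rfl⟩, hv t g⟩
  · intro t
    simp
  · intro t
    change ∑ g : G, code e (v t g) = _
    unfold code
    rw [Finset.sum_comm]
    refine Finset.sum_congr rfl fun c _ => ?_
    simp only [hlin]
    exact Equiv.sum_comp (Equiv.mulLeft (c t))
      fun g : G => (Fintype.card G + 1) ^ e (c, (a : K) * ((g : Kˣ) : K) + lin c b)

end Rho

/-- A countable field of characteristic zero whose unit group has a subgroup of order `k`: the
`k`-th cyclotomic field with its `k`-th roots of unity. -/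
lemma exists_field (k : ℕ) (hk : 2 ≤ k) :
    ∃ (K : Type) (_ : Field K) (_ : CharZero K) (_ : Countable K) (G : Subgroup Kˣ)
      (_ : Fintype G), Fintype.card G = k := by
  have : NeZero k := ⟨by omega⟩
  have hc : Countable (CyclotomicField k ℚ) :=
    (Module.finBasis ℚ (CyclotomicField k ℚ)).equivFun.injective.countable
  have : Fintype (rootsOfUnity k (CyclotomicField k ℚ)) := Fintype.ofFinite _
  refine ⟨CyclotomicField k ℚ, inferInstance, inferInstance, hc,
    rootsOfUnity k (CyclotomicField k ℚ), inferInstance, ?_⟩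
  rw [← Nat.card_eq_fintype_card]
  obtain ⟨ζ, hζ⟩ := (CyclotomicField.isCyclotomicExtension k ℚ).exists_isPrimitiveRoot
    (Set.mem_singleton k) (NeZero.ne k)
  exact hζ.card_rootsOfUnity

end BklPartition

/-- For all `k, ℓ ≥ 2` there is an infinite `B_{k,ℓ}`-set `X ⊆ ℕ` such that for
every `r ≥ 2` the partition relation `X ⟶ [k,ℓ]_r` holds: for every partition of
`X` into `r` parts, some part `X_q` satisfies `ρ_k(X_q) = ℓ`. -/
theorem exists_Bkl_set_partition (k l : ℕ) (hk : 2 ≤ k) (hl : 2 ≤ l) :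
    ∃ X : Set ℕ, X.Infinite ∧
      (∀ n, rho X k n ≤ l) ∧ (∃ n, rho X k n = l) ∧
      (∀ r : ℕ, 2 ≤ r → ∀ P : ℕ → Fin r, ∃ q : Fin r,
        (∀ n, rho {x | x ∈ X ∧ P x = q} k n ≤ l) ∧
        (∃ n, rho {x | x ∈ X ∧ P x = q} k n = l)) := by
  obtain ⟨K, _, _, _, G, _, hGk⟩ := BklPartition.exists_field k hk
  obtain ⟨e, he⟩ := Countable.exists_injective_nat ((Fin l → G) × K)
  have hG : 2 ≤ Fintype.card G := by omega
  have hT : 2 ≤ Fintype.card (Fin l) := by simpa using hl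
  have hub : ∀ n, rho (Set.range (BklPartition.code e)) k n ≤ l := fun n => by
    simpa [hGk] using BklPartition.rho_code_le he hG hT n
  have hsub : ∀ {κ : Type} (P : ℕ → κ) (q : κ) (n : ℕ),
      rho {x | x ∈ Set.range (BklPartition.code e) ∧ P x = q} k n
        ≤ rho (Set.range (BklPartition.code e)) k n :=
    fun P q n => BklPartition.rho_mono (fun x hx => hx.1) k n
  have hlb : ∀ {κ : Type} [Finite κ] (P : ℕ → κ), ∃ q n,
      l ≤ rho {x | x ∈ Set.range (BklPartition.code e) ∧ P x = q} k n := fun P => by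
    simpa [hGk] using BklPartition.exists_card_le_rho he hG P
  have : Nonempty (Fin l) := ⟨⟨0, by omega⟩⟩
  refine ⟨Set.range (BklPartition.code e),
    Set.infinite_range_of_injective (BklPartition.code_injective he hG), hub, ?_, ?_⟩
  · obtain ⟨q, n, hn⟩ := hlb (fun _ => ())
    exact ⟨n, le_antisymm (hub n) (hn.trans (hsub _ q n))⟩
  · intro r _ P
    obtain ⟨q, n, hn⟩ := hlb P
    exact ⟨q, fun m => (hsub P q m).trans (hub m), n,
      le_antisymm ((hsub P q n).trans (hub n)) hn⟩
end

section
/- For all integers k ≥ 2 and ℓ ≥ 2 there exists an infinite B_{k,ℓ}-set X ⊆ ℕ such that every finite subset Y ⊆ X contains a B_k-set of size at least ((k−1)/(2k))·|Y|. -/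
namespace BklSet

open Polynomial

/-- An integer polynomial with coefficients smaller than `M` in absolute value does not
vanish at `M` unless it is zero. -/
lemma eq_zero_of_eval (M : ℤ) (n : ℕ) : ∀ P : ℤ[X], P.natDegree < n →
    (∀ m, |P.coeff m| < M) → P.eval M = 0 → P = 0 := by
  induction n with
  | zero => intro P h; omega
  | succ n ih =>
    intro P hd hc he
    have hM : 0 < M := lt_of_le_of_lt (abs_nonneg _) (hc 0)
    have hP := divX_mul_X_add P
    have he' : P.divX.eval M * M + P.coeff 0 = 0 := by
      rw [← hP] at he
      simpa using he
    have h0 : P.coeff 0 = 0 :=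
      Int.eq_zero_of_abs_lt_dvd ⟨-P.divX.eval M, by linarith⟩ (hc 0)
    have h1 : P.divX.eval M = 0 := by
      rw [h0, add_zero] at he'
      exact (mul_eq_zero.mp he').resolve_right hM.ne'
    rcases Nat.eq_zero_or_pos P.natDegree with hz | hz
    · rw [eq_C_of_natDegree_eq_zero hz, h0, C_0]
    · have hdiv : P.divX = 0 := by
        refine ih _ ?_ (fun m => ?_) h1
        · rw [natDegree_divX_eq_natDegree_tsub_one]; omega
        · rw [coeff_divX]; exact hc _
      rw [← hP, hdiv, h0]; simp

/-- The base `M = 2 k² + 1`. -/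
def base (k : ℕ) : ℕ := 2 * k ^ 2 + 1

/-- The polynomial whose value at `base k` is the element `aᵢ` (for `Sum.inl i`) or `bᵢ`
(for `Sum.inr i`). -/
noncomputable def poly (k l : ℕ) : ℕ ⊕ ℕ → ℤ[X]
  | .inl i => X ^ (2 * i + 1)
  | .inr i => X ^ (2 * l) - C ((k : ℤ) - 1) * X ^ (2 * i + 1)

/-- The sum of the polynomials of the members of a multiset of indices. -/
noncomputable def polySum (k l : ℕ) (s : Multiset (ℕ ⊕ ℕ)) : ℤ[X] := (s.map (poly k l)).sum

lemma coeff_odd (k l i : ℕ) (s : Multiset (ℕ ⊕ ℕ)) :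
    (polySum k l s).coeff (2 * i + 1) =
      (s.count (.inl i) : ℤ) - ((k : ℤ) - 1) * s.count (.inr i) := by
  induction s using Multiset.induction_on with
  | empty => simp [polySum]
  | cons x s ih =>
    have : polySum k l (x ::ₘ s) = poly k l x + polySum k l s := by simp [polySum]
    rw [this, coeff_add, ih]
    rcases x with j | j
    · by_cases h : i = j
      · subst h; simp [poly, coeff_X_pow]; ring
      · simp [poly, coeff_X_pow, h]
    · have hl : ¬ (2 * i + 1 = 2 * l) := by omega
      by_cases h : i = j
      · subst h
        simp only [poly, coeff_sub, coeff_C_mul, coeff_X_pow, hl]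
        simp; ring
      · simp only [poly, coeff_sub, coeff_C_mul, coeff_X_pow, hl]
        simp [h]

lemma coeff_top (k l : ℕ) (s : Multiset (ℕ ⊕ ℕ)) :
    (polySum k l s).coeff (2 * l) = (s.countP (fun x => x.isRight = true) : ℤ) := by
  induction s using Multiset.induction_on with
  | empty => simp [polySum]
  | cons x s ih =>
    have : polySum k l (x ::ₘ s) = poly k l x + polySum k l s := by simp [polySum]
    rw [this, coeff_add, ih]
    have hl : ∀ j, ¬ (2 * l = 2 * j + 1) := by intro j; omega
    rcases x with j | j
    · simp [poly, coeff_X_pow, hl]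
    · simp only [poly, coeff_sub, coeff_C_mul, coeff_X_pow, hl]
      rw [Multiset.countP_cons]
      simp; ring

lemma abs_coeff_poly (k l : ℕ) (hk : 2 ≤ k) (x : ℕ ⊕ ℕ) (m : ℕ) :
    |(poly k l x).coeff m| ≤ k := by
  have hk' : (2 : ℤ) ≤ k := by exact_mod_cast hk
  rcases x with j | j
  · simp only [poly, coeff_X_pow]
    split_ifs <;> simp; omega
  · simp only [poly, coeff_sub, coeff_C_mul, coeff_X_pow]
    rw [abs_le]
    split_ifs <;> constructor <;> linarith

lemma abs_coeff_polySum (k l : ℕ) (hk : 2 ≤ k) (s : Multiset (ℕ ⊕ ℕ)) (m : ℕ) :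
    |(polySum k l s).coeff m| ≤ s.card * k := by
  induction s using Multiset.induction_on with
  | empty => simp [polySum]
  | cons x s ih =>
    have : polySum k l (x ::ₘ s) = poly k l x + polySum k l s := by simp [polySum]
    rw [this, coeff_add, Multiset.card_cons]
    push_cast
    have := abs_add_le ((poly k l x).coeff m) ((polySum k l s).coeff m)
    have := abs_coeff_poly k l hk x m
    linarith

lemma polySum_eq (k l : ℕ) (hk : 2 ≤ k) (s t : Multiset (ℕ ⊕ ℕ))
    (hs : s.card = k) (ht : t.card = k)
    (h : (polySum k l s).eval (base k : ℤ) = (polySum k l t).eval (base k : ℤ)) :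
    polySum k l s = polySum k l t := by
  rw [← sub_eq_zero]
  refine eq_zero_of_eval (base k) _ _ (Nat.lt_succ_self _) (fun m => ?_) (by simp [h])
  have h1 := abs_coeff_polySum k l hk s m
  have h2 := abs_coeff_polySum k l hk t m
  rw [hs] at h1; rw [ht] at h2
  rw [coeff_sub]
  have := abs_sub ((polySum k l s).coeff m) ((polySum k l t).coeff m)
  simp only [base]; push_cast
  nlinarith

/-- The indices of the representation `M ^ (2 l) = bᵢ + (k - 1) aᵢ`. -/
def special (k i : ℕ) : Multiset (ℕ ⊕ ℕ) := .inr i ::ₘ Multiset.replicate (k - 1) (.inl i)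

lemma eq_special (k i : ℕ) (s : Multiset (ℕ ⊕ ℕ)) (hk : 2 ≤ k) (hs : s.card = k)
    (h1 : k - 1 ≤ s.count (.inl i)) (h2 : 1 ≤ s.count (.inr i)) : s = special k i := by
  symm
  apply Multiset.eq_of_le_of_card_le
  · rw [Multiset.le_iff_count]
    intro x
    simp only [special, Multiset.count_cons, Multiset.count_replicate]
    rcases x with j | j
    · by_cases h : i = j
      · subst h; simpa using h1
      · simp [h]
    · by_cases h : i = j
      · subst h; simpa using h2
      · have h' : ¬ (j = i) := fun e => h e.symm
        simp [h']
  · simp [special, hs]; omega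

/-- The asymmetric half of `eq_or_special`: `bᵢ` occurs more often in the first sum. -/
lemma special_of_lt (k l i : ℕ) (hk : 2 ≤ k) (s t : Multiset (ℕ ⊕ ℕ))
    (hs : s.card = k) (ht : t.card = k) (h : polySum k l s = polySum k l t)
    (hi : t.count (.inr i) < s.count (.inr i)) :
    ∃ i j, s = special k i ∧ t = special k j := by
  have hodd : ∀ i, (s.count (.inl i) : ℤ) - ((k : ℤ) - 1) * s.count (.inr i) =
      (t.count (.inl i) : ℤ) - ((k : ℤ) - 1) * t.count (.inr i) := fun i => by
    rw [← coeff_odd k l, ← coeff_odd k l, h]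
  have hk' : (2 : ℤ) ≤ k := by exact_mod_cast hk
  have hsi : s = special k i := by
    refine eq_special k i s hk hs ?_ (by omega)
    have := hodd i
    have h3 : (t.count (.inr i) : ℤ) + 1 ≤ s.count (.inr i) := by exact_mod_cast hi
    zify [show 1 ≤ k by omega]
    nlinarith
  have htop : s.countP (fun x => x.isRight = true) = t.countP (fun x => x.isRight = true) := by
    have := coeff_top k l s
    rw [h, coeff_top] at this
    exact_mod_cast this.symm
  have h1 : s.countP (fun x => x.isRight = true) = 1 := by
    rw [hsi, special, Multiset.countP_cons]
    simp [Multiset.countP_eq_zero, Multiset.mem_replicate]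
  have h2 : 0 < t.countP (fun x => x.isRight = true) := by omega
  obtain ⟨x, hx, hxr⟩ := Multiset.countP_pos.mp h2
  rcases x with j | j
  · simp at hxr
  have htj : 1 ≤ t.count (.inr j) := Multiset.one_le_count_iff_mem.mpr hx
  have hsc : ∀ j, s.count (.inr j) = if j = i then 1 else 0 := by
    intro j
    rw [hsi, special, Multiset.count_cons, Multiset.count_replicate]
    simp
  have hji : j ≠ i := by
    rintro rfl
    have := hsc j
    simp at this
    omega
  refine ⟨i, j, hsi, eq_special k j t hk ht ?_ htj⟩
  have h4 := hodd j
  rw [hsc j, if_neg hji] at h4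
  have h5 : (1 : ℤ) ≤ t.count (.inr j) := by exact_mod_cast htj
  have h6 : (0 : ℤ) ≤ s.count (.inl j) := by positivity
  zify [show 1 ≤ k by omega]
  push_cast at h4
  nlinarith

/-- Two sums of `k` elements agree only trivially, or when both are of the form
`bᵢ + (k - 1) aᵢ`. -/
lemma eq_or_special (k l : ℕ) (hk : 2 ≤ k) (s t : Multiset (ℕ ⊕ ℕ))
    (hs : s.card = k) (ht : t.card = k)
    (h : (polySum k l s).eval (base k : ℤ) = (polySum k l t).eval (base k : ℤ)) :
    s = t ∨ ∃ i j, s = special k i ∧ t = special k j := by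
  have hp := polySum_eq k l hk s t hs ht h
  by_cases hall : ∀ i, s.count (.inr i) = t.count (.inr i)
  · left
    ext x
    rcases x with i | i
    · have := coeff_odd k l i s
      rw [hp, coeff_odd, hall i] at this
      have h' : (t.count (.inl i) : ℤ) = s.count (.inl i) := by linarith
      exact_mod_cast h'.symm
    · exact hall i
  · right
    push Not at hall
    obtain ⟨i, hi⟩ := hall
    rcases lt_or_gt_of_ne hi with hi | hi
    · obtain ⟨i, j, h1, h2⟩ := special_of_lt k l i hk t s ht hs hp.symm hi
      exact ⟨j, i, h2, h1⟩
    · exact special_of_lt k l i hk s t hs ht hp hi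

/-- The elements `aᵢ` and `bᵢ`. The subtraction is exact for the indices in `idx l`. -/
def val (k l : ℕ) : ℕ ⊕ ℕ → ℕ
  | .inl i => base k ^ (2 * i + 1)
  | .inr i => base k ^ (2 * l) - (k - 1) * base k ^ (2 * i + 1)

/-- The indices of the elements of the set: all `aᵢ`, and the `bᵢ` with `i < l`. -/
def idx (l : ℕ) : Set (ℕ ⊕ ℕ) := {x | ∀ i, x = .inr i → i < l}

lemma le_top (k l i : ℕ) (hi : i < l) :
    (k - 1) * base k ^ (2 * i + 1) ≤ base k ^ (2 * l) := by
  calc (k - 1) * base k ^ (2 * i + 1) ≤ base k * base k ^ (2 * i + 1) := by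
        gcongr
        simp only [base]
        have : k ≤ k ^ 2 := Nat.le_self_pow (by norm_num) k
        omega
    _ = base k ^ (2 * i + 2) := by ring
    _ ≤ base k ^ (2 * l) := Nat.pow_le_pow_right (by simp [base]) (by omega)

lemma cast_val (k l : ℕ) (hk : 2 ≤ k) (x : ℕ ⊕ ℕ) (hx : x ∈ idx l) :
    (val k l x : ℤ) = (poly k l x).eval (base k : ℤ) := by
  rcases x with i | i
  · simp [val, poly]
  · have := le_top k l i (hx i rfl)
    simp only [val, poly]
    rw [Nat.cast_sub this, Nat.cast_mul, Nat.cast_sub (by omega)]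
    simp

lemma cast_sum (k l : ℕ) (hk : 2 ≤ k) (s : Multiset (ℕ ⊕ ℕ)) (hs : ∀ x ∈ s, x ∈ idx l) :
    ((s.map (val k l)).sum : ℤ) = (polySum k l s).eval (base k : ℤ) := by
  induction s using Multiset.induction_on with
  | empty => simp [polySum]
  | cons x s ih =>
    have : polySum k l (x ::ₘ s) = poly k l x + polySum k l s := by simp [polySum]
    rw [this, eval_add, ← ih (fun y hy => hs y (Multiset.mem_cons_of_mem hy)),
      ← cast_val k l hk x (hs x (Multiset.mem_cons_self x s))]
    simp

/-- The representations of `n` by elements with index in `D`, as multisets of indices. -/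
def reps (k l : ℕ) (D : Set (ℕ ⊕ ℕ)) (n : ℕ) : Set (Multiset (ℕ ⊕ ℕ)) :=
  {s | s.card = k ∧ (∀ x ∈ s, x ∈ D) ∧ (s.map (val k l)).sum = n}

lemma reps_eq_or_special (k l : ℕ) (hk : 2 ≤ k) (D : Set (ℕ ⊕ ℕ)) (hD : D ⊆ idx l) (n : ℕ)
    (s t : Multiset (ℕ ⊕ ℕ)) (hs : s ∈ reps k l D n) (ht : t ∈ reps k l D n) :
    s = t ∨ ∃ i j, s = special k i ∧ t = special k j := by
  refine eq_or_special k l hk s t hs.1 ht.1 ?_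
  rw [← cast_sum k l hk s (fun x hx => hD (hs.2.1 x hx)),
    ← cast_sum k l hk t (fun x hx => hD (ht.2.1 x hx)), hs.2.2, ht.2.2]

lemma inr_mem_special (k i : ℕ) : .inr i ∈ special k i := by simp [special]

lemma inl_mem_special (k i : ℕ) (hk : 2 ≤ k) : .inl i ∈ special k i := by
  simp [special, Multiset.mem_replicate]; omega

/-- Distinct indices give distinct elements: compare the sums of `k` copies of each. -/
lemma val_injOn (k l : ℕ) (hk : 2 ≤ k) : Set.InjOn (val k l) (idx l) := by
  intro x hx y hy hxy
  have hmem : ∀ z ∈ idx l, Multiset.replicate k z ∈ reps k l (idx l) (k * val k l z) := by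
    intro z hz
    refine ⟨by simp, fun w hw => ?_, by simp⟩
    rw [Multiset.eq_of_mem_replicate hw]; exact hz
  rcases reps_eq_or_special k l hk _ le_rfl _ _ _ (hmem x hx) (hxy ▸ hmem y hy) with h | h
  · exact Multiset.eq_of_mem_replicate (h ▸ Multiset.mem_replicate.mpr ⟨by omega, rfl⟩)
  · obtain ⟨i, j, h, -⟩ := h
    have h1 := Multiset.eq_of_mem_replicate (h ▸ inr_mem_special k i)
    have h2 := Multiset.eq_of_mem_replicate (h ▸ inl_mem_special k i hk)
    simp [← h1] at h2

/-- Nondecreasing tuples correspond to multisets. -/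
lemma rho_eq_multiset (X : Set ℕ) (k n : ℕ) :
    rho X k n = Set.ncard {m : Multiset ℕ | m.card = k ∧ (∀ x ∈ m, x ∈ X) ∧ m.sum = n} := by
  rw [rho]
  refine Set.ncard_congr (fun f _ => (List.ofFn f : Multiset ℕ)) ?_ ?_ ?_
  · rintro f ⟨h1, -, h3⟩
    refine ⟨by simp, ?_, by simpa [List.sum_ofFn] using h3⟩
    intro x hx
    rw [Multiset.mem_coe, List.mem_ofFn'] at hx
    obtain ⟨i, rfl⟩ := hx
    exact h1 i
  · rintro f g ⟨-, hf, -⟩ ⟨-, hg, -⟩ h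
    rw [Multiset.coe_eq_coe] at h
    exact List.ofFn_injective (h.eq_of_sortedLE hf.sortedLE_ofFn hg.sortedLE_ofFn)
  · rintro m ⟨h1, h2, h3⟩
    have hlen : (m.sort (· ≤ ·)).length = k := by rw [Multiset.length_sort, h1]
    subst hlen
    refine ⟨(m.sort (· ≤ ·)).get, ⟨fun i => ?_, ?_, ?_⟩, ?_⟩
    · exact h2 _ ((Multiset.mem_sort (· ≤ ·)).mp (List.get_mem _ _))
    · exact (Multiset.pairwise_sort m (· ≤ ·)).sortedLE.monotone_get
    · rw [← List.sum_ofFn, List.ofFn_get, ← h3]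
      conv_rhs => rw [← Multiset.sort_eq m (· ≤ ·)]
      rw [Multiset.sum_coe]
    · change ((List.ofFn (m.sort (· ≤ ·)).get : List ℕ) : Multiset ℕ) = m
      rw [List.ofFn_get, Multiset.sort_eq]

lemma rho_image (k l : ℕ) (hk : 2 ≤ k) (D : Set (ℕ ⊕ ℕ)) (hD : D ⊆ idx l) (n : ℕ) :
    rho (val k l '' D) k n = (reps k l D n).ncard := by
  classical
  rw [rho_eq_multiset]
  symm
  set u := Function.invFunOn (val k l) D with hu
  have huv : ∀ x ∈ D, u (val k l x) = x :=
    ((val_injOn k l hk).mono hD).leftInvOn_invFunOn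
  have hback : ∀ s : Multiset (ℕ ⊕ ℕ), (∀ x ∈ s, x ∈ D) → (s.map (val k l)).map u = s := by
    intro s hs
    rw [Multiset.map_map]
    conv_rhs => rw [← Multiset.map_id s]
    exact Multiset.map_congr rfl (fun x hx => huv x (hs x hx))
  refine Set.ncard_congr (fun s _ => s.map (val k l)) ?_ ?_ ?_
  · rintro s ⟨h1, h2, h3⟩
    refine ⟨by simpa using h1, fun x hx => ?_, h3⟩
    obtain ⟨y, hy, rfl⟩ := Multiset.mem_map.mp hx
    exact ⟨y, h2 y hy, rfl⟩
  · rintro s t ⟨-, hs, -⟩ ⟨-, ht, -⟩ h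
    rw [← hback s hs, ← hback t ht, h]
  · rintro m ⟨h1, h2, h3⟩
    have hm : (m.map u).map (val k l) = m := by
      rw [Multiset.map_map]
      conv_rhs => rw [← Multiset.map_id m]
      exact Multiset.map_congr rfl (fun x hx => Function.invFunOn_eq (h2 x hx))
    refine ⟨m.map u, ⟨by simpa using h1, fun x hx => ?_, by rw [hm, h3]⟩, hm⟩
    obtain ⟨y, hy, rfl⟩ := Multiset.mem_map.mp hx
    exact Function.invFunOn_mem (h2 y hy)

lemma special_injective (k : ℕ) : Function.Injective (special k) := by
  intro i j h
  have := h ▸ inr_mem_special k i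
  simpa [special, Multiset.mem_replicate] using this

lemma ncard_special (k l : ℕ) : (special k '' Set.Iio l).ncard = l := by
  rw [Set.ncard_image_of_injective _ (special_injective k)]
  simp [Set.ncard_eq_toFinset_card']

/-- If a number has a representation of the form `bᵢ + (k - 1) aᵢ`, all its representations
are of this form. -/
lemma reps_subset (k l i n : ℕ) (hk : 2 ≤ k) (hi : special k i ∈ reps k l (idx l) n) :
    reps k l (idx l) n ⊆ special k '' Set.Iio l := by
  intro r hr
  obtain ⟨j, rfl⟩ : ∃ j, r = special k j := by
    rcases reps_eq_or_special k l hk _ le_rfl n _ r hi hr with h | ⟨-, j, -, h⟩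
    · exact ⟨i, h.symm⟩
    · exact ⟨j, h⟩
  exact ⟨j, hr.2.1 _ (inr_mem_special k j) j rfl, rfl⟩

lemma reps_le (k l : ℕ) (hk : 2 ≤ k) (hl : 2 ≤ l) (n : ℕ) : (reps k l (idx l) n).ncard ≤ l := by
  by_cases h : (reps k l (idx l) n).Subsingleton
  · exact ((Set.ncard_le_one h.finite).mpr fun _ ha _ hb => h ha hb).trans (by omega)
  · rw [Set.not_subsingleton_iff] at h
    obtain ⟨s, hs, t, ht, hst⟩ := h
    obtain ⟨i, -, rfl, -⟩ :=
      (reps_eq_or_special k l hk _ le_rfl n s t hs ht).resolve_left hst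
    conv_rhs => rw [← ncard_special k l]
    exact Set.ncard_le_ncard (reps_subset k l i n hk hs) ((Set.finite_Iio l).image _)

lemma special_mem_reps (k l i : ℕ) (hk : 2 ≤ k) (hi : i < l) :
    special k i ∈ reps k l (idx l) (base k ^ (2 * l)) := by
  have := le_top k l i hi
  refine ⟨by simp [special]; omega, fun x hx => ?_, ?_⟩
  · rcases Multiset.mem_cons.mp hx with rfl | hx
    · intro j hj
      cases hj; exact hi
    · rw [Multiset.eq_of_mem_replicate hx]
      intro j hj
      cases hj
  · simp [special, val]; omega

lemma reps_top (k l : ℕ) (hk : 2 ≤ k) (hl : 2 ≤ l) :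
    (reps k l (idx l) (base k ^ (2 * l))).ncard = l := by
  conv_rhs => rw [← ncard_special k l]
  congr 1
  refine Set.Subset.antisymm
    (reps_subset k l 0 _ hk (special_mem_reps k l 0 hk (by omega))) ?_
  rintro _ ⟨i, hi, rfl⟩
  exact special_mem_reps k l i hk hi

lemma reps_le_one (k l : ℕ) (hk : 2 ≤ k) (D : Set (ℕ ⊕ ℕ)) (hD : D ⊆ idx l) (n : ℕ)
    (h : ∀ i j, ¬ (.inl i ∈ D ∧ .inr j ∈ D)) : (reps k l D n).ncard ≤ 1 := by
  suffices hsub : (reps k l D n).Subsingleton from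
    (Set.ncard_le_one hsub.finite).mpr fun _ ha _ hb => hsub ha hb
  intro s hs t ht
  refine (reps_eq_or_special k l hk D hD n s t hs ht).resolve_right ?_
  rintro ⟨i, -, rfl, -⟩
  exact h i i ⟨hs.2.1 _ (inl_mem_special k i hk), hs.2.1 _ (inr_mem_special k i)⟩

/-- A subset of the set whose indices are all of one kind is a `B_k`-set. -/
lemma rho_le_one (k l : ℕ) (hk : 2 ≤ k) (W : Set ℕ) (hW : W ⊆ val k l '' idx l)
    (h : ∀ i j, val k l (.inl i) ∈ W → j < l → val k l (.inr j) ∉ W) (n : ℕ) :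
    rho W k n ≤ 1 := by
  have hW' : W = val k l '' (idx l ∩ val k l ⁻¹' W) := by
    rw [Set.image_inter_preimage]
    exact (Set.inter_eq_right.mpr hW).symm
  rw [hW', rho_image k l hk _ Set.inter_subset_left]
  refine reps_le_one k l hk _ Set.inter_subset_left n ?_
  rintro i j ⟨h1, h2⟩
  exact h i j h1.2 (h2.1 j rfl) h2.2

end BklSet

open BklSet in
/-- For all `k, ℓ ≥ 2` there is an infinite `B_{k,ℓ}`-set `X ⊆ ℕ` such that every
finite `Y ⊆ X` contains a `B_k`-set of size at least `((k-1)/(2k))·|Y|`. -/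
theorem exists_Bkl_set_local (k l : ℕ) (hk : 2 ≤ k) (hl : 2 ≤ l) :
    ∃ X : Set ℕ, X.Infinite ∧
      (∀ n, rho X k n ≤ l) ∧ (∃ n, rho X k n = l) ∧
      (∀ Y : Finset ℕ, ↑Y ⊆ X → ∃ Z : Finset ℕ, Z ⊆ Y ∧ (∀ n, rho (↑Z) k n ≤ 1) ∧
        ((k : ℝ) - 1) / (2 * k) * Y.card ≤ Z.card) := by
  classical
  have hinl : ∀ i, Sum.inl i ∈ idx l := fun i j hj => by cases hj
  have hinr : ∀ i < l, Sum.inr i ∈ idx l := fun i hi j hj => by cases hj; exact hi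
  refine ⟨val k l '' idx l, ?_, fun n => ?_, ⟨base k ^ (2 * l), ?_⟩, fun Y hY => ?_⟩
  · refine Set.infinite_of_injective_forall_mem (f := fun i : ℕ => val k l (.inl i)) ?_
      (fun i => ⟨_, hinl i, rfl⟩)
    intro i j h
    exact Sum.inl_injective (val_injOn k l hk (hinl i) (hinl j) h)
  · rw [rho_image k l hk _ le_rfl]; exact reps_le k l hk hl n
  · rw [rho_image k l hk _ le_rfl]; exact reps_top k l hk hl
  · set p : ℕ → Prop := fun y => ∃ i, val k l (.inl i) = y with hp
    have hL : ∀ n, rho (↑(Y.filter p)) k n ≤ 1 := by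
      refine rho_le_one k l hk _ (fun y hy => hY (Finset.mem_filter.mp hy).1) ?_
      intro i j _ hj hmem
      obtain ⟨i', hi'⟩ := (Finset.mem_filter.mp hmem).2
      cases val_injOn k l hk (hinl i') (hinr j hj) hi'
    have hR : ∀ n, rho (↑(Y.filter (fun y => ¬ p y))) k n ≤ 1 := by
      refine rho_le_one k l hk _ (fun y hy => hY (Finset.mem_filter.mp hy).1) ?_
      intro i j hmem
      exact absurd ⟨i, rfl⟩ (Finset.mem_filter.mp hmem).2
    have hcard := Finset.card_filter_add_card_filter_not (s := Y) p
    have hk' : (2 : ℝ) ≤ k := by exact_mod_cast hk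
    have hhalf : ((k : ℝ) - 1) / (2 * k) * Y.card ≤ (Y.card : ℝ) / 2 := by
      have : ((k : ℝ) - 1) / (2 * k) ≤ 1 / 2 := by
        rw [div_le_div_iff₀ (by positivity) (by norm_num)]; linarith
      calc _ ≤ (1 / 2 : ℝ) * Y.card := by gcongr
        _ = _ := by ring
    have hcard' : ((Y.filter p).card : ℝ) + (Y.filter (fun y => ¬ p y)).card = Y.card := by
      exact_mod_cast hcard
    rcases le_total (Y.filter p).card (Y.filter (fun y => ¬ p y)).card with h | h
    · refine ⟨_, Finset.filter_subset _ _, hR, hhalf.trans ?_⟩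
      have : ((Y.filter p).card : ℝ) ≤ (Y.filter (fun y => ¬ p y)).card := by exact_mod_cast h
      linarith
    · refine ⟨_, Finset.filter_subset _ _, hL, hhalf.trans ?_⟩
      have : ((Y.filter (fun y => ¬ p y)).card : ℝ) ≤ (Y.filter p).card := by exact_mod_cast h
      linarith
end

section
/- There exists a set X ⊆ ℕ such that every finite subset Y ⊆ X contains a Sidon set of size at least |Y|/4, yet X is not a finite union of Sidon sets, i.e., for no integer r ≥ 1 does there exist a partition X = X_1 ∪ … ∪ X_r with every X_q a Sidon set. -/
/-! ### Triangle weights and their linear relations -/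

/-- The integer weight attached to the pair `(u, v)`; the weights are powers of `100` with distinct
exponents, so that they satisfy no linear relation with small coefficients. -/
def pairWeight (u v : ℕ) : ℕ := 100 ^ Nat.pair u v

/-- The number attached to the triangle `i < j < k`: the weight of its simplicial boundary. For
`i < j < k` the (truncated) subtraction is a genuine one. -/
def triWeight (i j k : ℕ) : ℕ := pairWeight i j + pairWeight j k - pairWeight i k

/-- The coefficient of the pair `(u, v)` in the simplicial boundary of the triangle `i, j, k`. -/
def triCoeff (i j k u v : ℕ) : ℤ :=
  (if u = i ∧ v = j then 1 else 0) + (if u = j ∧ v = k then 1 else 0)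
    - (if u = i ∧ v = k then 1 else 0)

lemma triWeight_cast {i j k : ℕ} (hij : i < j) (hjk : j < k) :
    (triWeight i j k : ℤ) = pairWeight i j + pairWeight j k - pairWeight i k := by
  have h : pairWeight i k ≤ pairWeight j k := by
    unfold pairWeight
    apply Nat.pow_le_pow_right (by norm_num)
    simp [Nat.pair, hjk, hij.trans hjk, hij.le]
  unfold triWeight
  omega

/-- An integer has at most one expansion in base `100` with digits of small absolute value. -/
lemma coeff_eq_zero (N : ℕ) : ∀ c : ℕ → ℤ, (∀ n, |c n| ≤ 12) →
    ∑ n ∈ Finset.range N, c n * 100 ^ n = 0 → ∀ n < N, c n = 0 := by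
  induction N with
  | zero => intro c _ _ n hn; omega
  | succ N ih =>
    intro c hc hsum n hn
    rw [Finset.sum_range_succ'] at hsum
    have h1 : ∑ n ∈ Finset.range N, c (n + 1) * 100 ^ (n + 1)
        = 100 * ∑ n ∈ Finset.range N, c (n + 1) * 100 ^ n := by
      rw [Finset.mul_sum]
      exact Finset.sum_congr rfl fun n _ => by ring
    rw [h1] at hsum
    have h0 := abs_le.1 (hc 0)
    simp only [pow_zero, mul_one] at hsum
    have h2 : ∑ n ∈ Finset.range N, c (n + 1) * 100 ^ n = 0 := by omega
    cases n with
    | zero => omega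
    | succ n => exact ih (fun n => c (n + 1)) (fun n => hc _) h2 n (by omega)

/-- Equality of sums of two triangle weights forces equality of the boundaries. -/
lemma coeff_of_weight {i₁ j₁ k₁ i₂ j₂ k₂ i₃ j₃ k₃ i₄ j₄ k₄ : ℕ}
    (a₁ : i₁ < j₁) (b₁ : j₁ < k₁) (a₂ : i₂ < j₂) (b₂ : j₂ < k₂)
    (a₃ : i₃ < j₃) (b₃ : j₃ < k₃) (a₄ : i₄ < j₄) (b₄ : j₄ < k₄)
    (h : triWeight i₁ j₁ k₁ + triWeight i₂ j₂ k₂ = triWeight i₃ j₃ k₃ + triWeight i₄ j₄ k₄)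
    (u v : ℕ) :
    triCoeff i₁ j₁ k₁ u v + triCoeff i₂ j₂ k₂ u v
      = triCoeff i₃ j₃ k₃ u v + triCoeff i₄ j₄ k₄ u v := by
  let c : ℕ → ℕ → ℕ → ℕ → ℤ := fun i j k n =>
    triCoeff i j k n.unpair.1 n.unpair.2
  obtain ⟨N, hN⟩ : ∃ N, ∀ p ∈ [Nat.pair u v, Nat.pair i₁ j₁, Nat.pair j₁ k₁, Nat.pair i₁ k₁,
      Nat.pair i₂ j₂, Nat.pair j₂ k₂, Nat.pair i₂ k₂, Nat.pair i₃ j₃, Nat.pair j₃ k₃,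
      Nat.pair i₃ k₃, Nat.pair i₄ j₄, Nat.pair j₄ k₄, Nat.pair i₄ k₄], p < N := by
    obtain ⟨M, hM⟩ := (List.finite_toSet [Nat.pair u v, Nat.pair i₁ j₁, Nat.pair j₁ k₁,
      Nat.pair i₁ k₁, Nat.pair i₂ j₂, Nat.pair j₂ k₂, Nat.pair i₂ k₂, Nat.pair i₃ j₃,
      Nat.pair j₃ k₃, Nat.pair i₃ k₃, Nat.pair i₄ j₄, Nat.pair j₄ k₄, Nat.pair i₄ k₄]).bddAbove
    exact ⟨M + 1, fun p hp => Nat.lt_succ_of_le (hM hp)⟩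
  simp only [List.mem_cons, List.not_mem_nil, or_false, forall_eq_or_imp, forall_eq] at hN
  have hδ : ∀ p q : ℕ, Nat.pair p q < N →
      ∑ n ∈ Finset.range N, (if n.unpair.1 = p ∧ n.unpair.2 = q then (1 : ℤ) else 0) * 100 ^ n
        = pairWeight p q := by
    intro p q hp
    have : ∀ n : ℕ, (n.unpair.1 = p ∧ n.unpair.2 = q) ↔ n = Nat.pair p q := by
      intro n
      constructor
      · rintro ⟨rfl, rfl⟩; simp
      · rintro rfl; simp
    simp [this, hp, pairWeight]
  have hc : ∀ i j k, i < j → j < k → Nat.pair i j < N → Nat.pair j k < N → Nat.pair i k < N →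
      ∑ n ∈ Finset.range N, c i j k n * 100 ^ n = triWeight i j k := by
    intro i j k h1 h2 h3 h4 h5
    rw [triWeight_cast h1 h2, ← hδ _ _ h3, ← hδ _ _ h4, ← hδ _ _ h5, ← Finset.sum_add_distrib,
      ← Finset.sum_sub_distrib]
    exact Finset.sum_congr rfl fun n _ => by simp only [c, triCoeff]; ring
  have hb : ∀ i j k n, |c i j k n| ≤ 3 := by
    intro i j k n
    simp only [c, triCoeff]
    split_ifs <;> norm_num
  have key := coeff_eq_zero N
    (fun n => c i₁ j₁ k₁ n + c i₂ j₂ k₂ n - c i₃ j₃ k₃ n - c i₄ j₄ k₄ n) (by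
      intro n
      have h1 := abs_le.1 (hb i₁ j₁ k₁ n)
      have h2 := abs_le.1 (hb i₂ j₂ k₂ n)
      have h3 := abs_le.1 (hb i₃ j₃ k₃ n)
      have h4 := abs_le.1 (hb i₄ j₄ k₄ n)
      rw [abs_le]
      constructor <;> linarith) (by
      simp only [sub_mul, add_mul, Finset.sum_add_distrib, Finset.sum_sub_distrib]
      rw [hc _ _ _ a₁ b₁ (by tauto) (by tauto) (by tauto),
        hc _ _ _ a₂ b₂ (by tauto) (by tauto) (by tauto),
        hc _ _ _ a₃ b₃ (by tauto) (by tauto) (by tauto),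
        hc _ _ _ a₄ b₄ (by tauto) (by tauto) (by tauto)]
      zify at h
      linarith) (Nat.pair u v) (by tauto)
  simp only [c, Nat.unpair_pair] at key
  linarith

/-! ### Split families of triangles -/

/-- Among triangles whose first vertex lies in `S` and whose second vertex does not, the boundaries
of two triangles determine the triangles. -/
lemma sidon_of_split (S : Finset ℕ) {i₁ j₁ k₁ i₂ j₂ k₂ i₃ j₃ k₃ i₄ j₄ k₄ : ℕ}
    (a₁ : i₁ < j₁) (b₁ : j₁ < k₁) (a₂ : i₂ < j₂) (b₂ : j₂ < k₂)
    (a₃ : i₃ < j₃) (b₃ : j₃ < k₃) (a₄ : i₄ < j₄) (b₄ : j₄ < k₄)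
    (s₁ : i₁ ∈ S) (t₁ : j₁ ∉ S) (s₂ : i₂ ∈ S) (t₂ : j₂ ∉ S)
    (s₃ : i₃ ∈ S) (t₃ : j₃ ∉ S) (s₄ : i₄ ∈ S) (t₄ : j₄ ∉ S)
    (h : ∀ u v, triCoeff i₁ j₁ k₁ u v + triCoeff i₂ j₂ k₂ u v
      = triCoeff i₃ j₃ k₃ u v + triCoeff i₄ j₄ k₄ u v) :
    ((i₁ = i₃ ∧ j₁ = j₃ ∧ k₁ = k₃) ∧ (i₂ = i₄ ∧ j₂ = j₄ ∧ k₂ = k₄)) ∨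
    ((i₁ = i₄ ∧ j₁ = j₄ ∧ k₁ = k₄) ∧ (i₂ = i₃ ∧ j₂ = j₃ ∧ k₂ = k₃)) := by
  -- Pairs starting outside `S` occur only as the pair `(j, k)` of a triangle, so the two
  -- triangles on the left and the two on the right have the same pairs `(j, k)`.
  have hB : ∀ u ∉ S, ∀ v,
      (if u = j₁ ∧ v = k₁ then (1 : ℤ) else 0) + (if u = j₂ ∧ v = k₂ then 1 else 0)
      = (if u = j₃ ∧ v = k₃ then 1 else 0) + (if u = j₄ ∧ v = k₄ then 1 else 0) := by
    intro u hu v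
    have e₁ : u ≠ i₁ := by rintro rfl; exact hu s₁
    have e₂ : u ≠ i₂ := by rintro rfl; exact hu s₂
    have e₃ : u ≠ i₃ := by rintro rfl; exact hu s₃
    have e₄ : u ≠ i₄ := by rintro rfl; exact hu s₄
    simpa [triCoeff, e₁, e₂, e₃, e₄] using h u v
  -- Pairs starting in `S` are the pairs `(i, j)` and, with sign `-1`, `(i, k)`.
  have hA : ∀ u ∈ S, ∀ v,
      ((if u = i₁ ∧ v = j₁ then (1 : ℤ) else 0) - (if u = i₁ ∧ v = k₁ then 1 else 0)) +
      ((if u = i₂ ∧ v = j₂ then (1 : ℤ) else 0) - (if u = i₂ ∧ v = k₂ then 1 else 0))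
      = ((if u = i₃ ∧ v = j₃ then (1 : ℤ) else 0) - (if u = i₃ ∧ v = k₃ then 1 else 0)) +
      ((if u = i₄ ∧ v = j₄ then (1 : ℤ) else 0) - (if u = i₄ ∧ v = k₄ then 1 else 0)) := by
    intro u hu v
    have e₁ : u ≠ j₁ := by rintro rfl; exact t₁ hu
    have e₂ : u ≠ j₂ := by rintro rfl; exact t₂ hu
    have e₃ : u ≠ j₃ := by rintro rfl; exact t₃ hu
    have e₄ : u ≠ j₄ := by rintro rfl; exact t₄ hu
    simpa [triCoeff, e₁, e₂, e₃, e₄] using h u v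
  clear h
  wlog hw : j₁ = j₃ ∧ k₁ = k₃ generalizing i₃ j₃ k₃ i₄ j₄ k₄
  · have h' : j₁ = j₄ ∧ k₁ = k₄ := by
      have hB₁ := hB j₁ t₁ k₁
      clear this hA hB
      grind
    have := this a₄ b₄ a₃ b₃ s₄ t₄ s₃ t₃ (fun u hu v => by rw [hB u hu v, add_comm])
      (fun u hu v => by rw [hA u hu v, add_comm]) h'
    tauto
  obtain ⟨rfl, rfl⟩ := hw
  obtain ⟨rfl, rfl⟩ : j₂ = j₄ ∧ k₂ = k₄ := by
    have := hB j₂ t₂ k₂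
    clear hA hB
    grind
  clear hB
  have h1 := hA i₁ s₁ j₁
  have h2 := hA i₂ s₂ j₂
  have h3 := hA i₃ s₃ j₁
  have h4 := hA i₁ s₁ k₁
  clear hA s₁ s₂ s₃ s₄ t₁ t₂ t₃ t₄ S
  by_cases h13 : i₁ = i₃
  · subst h13
    clear h1 h3 h4
    left
    grind
  -- The pair `(i₁, j₁)` must be the first pair of the fourth triangle or cancel with `(i₂, k₂)`.
  have hor : (i₁ = i₄ ∧ j₁ = j₂) ∨ (i₁ = i₂ ∧ j₁ = k₂) := by
    clear h2 h3 h4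
    grind
  clear h1
  rcases hor with ⟨rfl, rfl⟩ | ⟨rfl, rfl⟩
  · have h23 : i₂ = i₃ := by
      clear h2 h4
      grind
    subst h23
    clear h2 h3
    right
    grind
  · clear h2 h3
    grind

/-! ### Sidon sets and the representation function -/

lemma rho_le_one {X : Set ℕ}
    (h : ∀ a ∈ X, ∀ b ∈ X, ∀ c ∈ X, ∀ d ∈ X, a + b = c + d → (a = c ∧ b = d) ∨ (a = d ∧ b = c))
    (n : ℕ) : rho X 2 n ≤ 1 := by
  have hs : {f : Fin 2 → ℕ | (∀ i, f i ∈ X) ∧ Monotone f ∧ ∑ i, f i = n}.Subsingleton := by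
    rintro f ⟨hf, mf, sf⟩ g ⟨hg, mg, sg⟩
    rw [Fin.sum_univ_two] at sf sg
    have m1 : f 0 ≤ f 1 := mf (by decide)
    have m2 : g 0 ≤ g 1 := mg (by decide)
    have := h _ (hf 0) _ (hf 1) _ (hg 0) _ (hg 1) (sf.trans sg.symm)
    funext i
    fin_cases i
    · change f 0 = g 0; omega
    · change f 1 = g 1; omega
  exact (@Set.ncard_le_one_iff_subsingleton _ _ hs.finite.to_subtype).2 hs

lemma sidon_of_rho {X : Set ℕ} (h : ∀ n, rho X 2 n ≤ 1) {a b c d : ℕ}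
    (ha : a ∈ X) (hb : b ∈ X) (hc : c ∈ X) (hd : d ∈ X) (hs : a + b = c + d) :
    a = c ∨ a = d := by
  wlog hab : a ≤ b generalizing a b
  · have := this hb ha (by omega) (by omega)
    omega
  wlog hcd : c ≤ d generalizing c d
  · have := this hd hc (by omega) (by omega)
    omega
  have hfin : {f : Fin 2 → ℕ | (∀ i, f i ∈ X) ∧ Monotone f ∧ ∑ i, f i = a + b}.Finite := by
    refine (Set.finite_Iic (fun _ : Fin 2 => a + b)).subset ?_
    rintro f ⟨-, -, hf⟩ i
    rw [← hf]
    exact Finset.single_le_sum (f := f) (fun _ _ => Nat.zero_le _) (Finset.mem_univ i)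
  have hsub := (@Set.ncard_le_one_iff_subsingleton _ _ hfin.to_subtype).1 (h (a + b))
  have mem : ∀ p q : ℕ, p ∈ X → q ∈ X → p ≤ q → p + q = a + b →
      ![p, q] ∈ {f : Fin 2 → ℕ | (∀ i, f i ∈ X) ∧ Monotone f ∧ ∑ i, f i = a + b} := by
    intro p q hp hq hpq hsum
    refine ⟨?_, ?_, ?_⟩
    · intro i; fin_cases i <;> simpa
    · intro i j hij
      fin_cases i <;> fin_cases j <;> simp_all
    · simpa using hsum
  have := congrFun (hsub (mem a b ha hb hab rfl) (mem c d hc hd hcd hs.symm)) 0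
  left
  simpa using this

/-! ### Averaging -/

/-- Averaging over all sets `S` of endpoints: some `S` contains the start `i y` but not the end `j y`
of at least a quarter of the given edges, indexed by `y ∈ Y`. -/
lemma exists_split (Y : Finset ℕ) (i j : ℕ → ℕ) (hij : ∀ y ∈ Y, i y ≠ j y) :
    ∃ S : Finset ℕ, Y.card ≤ 4 * (Y.filter fun y => i y ∈ S ∧ j y ∉ S).card := by
  classical
  set V : Finset ℕ := Y.image i ∪ Y.image j with hV
  have hcount : ∀ y ∈ Y,
      2 ^ V.card ≤ 4 * (V.powerset.filter fun S => i y ∈ S ∧ j y ∉ S).card := by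
    intro y hy
    have hi : i y ∈ V := Finset.mem_union_left _ (Finset.mem_image_of_mem _ hy)
    have hj : j y ∈ V := Finset.mem_union_right _ (Finset.mem_image_of_mem _ hy)
    have hne := hij y hy
    have hsub : Finset.Icc {i y} (V.erase (j y)) ⊆
        V.powerset.filter fun S => i y ∈ S ∧ j y ∉ S := by
      intro S hS
      rw [Finset.mem_Icc] at hS
      obtain ⟨h1, h2⟩ := hS
      rw [Finset.mem_filter, Finset.mem_powerset]
      exact ⟨h2.trans (Finset.erase_subset _ _), h1 (Finset.mem_singleton_self _),
        fun h => Finset.notMem_erase _ _ (h2 h)⟩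
    have hle : ({i y} : Finset ℕ) ⊆ V.erase (j y) := by
      simp [hne, hi]
    have hcard := Finset.card_le_card hsub
    have h2 : 2 ≤ V.card := by
      rw [← Finset.card_pair hne]
      exact Finset.card_le_card (by intro z; simp; rintro (rfl | rfl) <;> assumption)
    rw [Finset.card_Icc_finset hle, Finset.card_erase_of_mem hj, Finset.card_singleton] at hcard
    have : 2 ^ V.card = 4 * 2 ^ (V.card - 1 - 1) := by
      obtain ⟨m, hm⟩ := Nat.exists_eq_add_of_le h2
      rw [hm, show 2 + m - 1 - 1 = m by omega, pow_add]
      norm_num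
    omega
  by_contra! hcon
  have h1 : ∑ S ∈ V.powerset, 4 * (Y.filter fun y => i y ∈ S ∧ j y ∉ S).card
      < ∑ S ∈ V.powerset, Y.card :=
    Finset.sum_lt_sum_of_nonempty ⟨∅, Finset.empty_mem_powerset _⟩ fun S _ => hcon S
  have h2 : ∑ S ∈ V.powerset, (Y.filter fun y => i y ∈ S ∧ j y ∉ S).card
      = ∑ y ∈ Y, (V.powerset.filter fun S => i y ∈ S ∧ j y ∉ S).card := by
    simp only [Finset.card_filter]
    exact Finset.sum_comm
  have h3 := Finset.sum_le_sum hcount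
  rw [← Finset.mul_sum] at h1 h3
  rw [h2] at h1
  simp only [Finset.sum_const, Finset.card_powerset, smul_eq_mul] at h1 h3
  rw [mul_comm] at h3
  omega

/-! ### Monochromatic tetrahedra -/

/-- Ramsey's theorem for triples, for a monochromatic tetrahedron. The colour is obtained as an
iterated limit along a nonprincipal ultrafilter. -/
lemma exists_mono_tetrahedron {r : ℕ} (c : ℕ → ℕ → ℕ → Fin r) :
    ∃ i j k l, i < j ∧ j < k ∧ k < l ∧ c i k l = c i j k ∧ c i j l = c i j k ∧
      c j k l = c i j k := by
  have hlim : ∀ f : ℕ → Fin r, ∃ q, ∀ᶠ n in (Filter.hyperfilter ℕ : Filter ℕ), f n = q := by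
    intro f
    obtain ⟨q, hq⟩ := Ultrafilter.eq_pure_of_finite ((Filter.hyperfilter ℕ).map f)
    refine ⟨q, ?_⟩
    have : ({q} : Set (Fin r)) ∈ (Filter.hyperfilter ℕ).map f := by rw [hq]; simp
    exact this
  have hgt : ∀ m : ℕ, ∀ᶠ n in (Filter.hyperfilter ℕ : Filter ℕ), m < n := fun m =>
    (Nat.hyperfilter_le_atTop (Filter.eventually_gt_atTop m))
  choose c₂ h₂ using fun i j => hlim (c i j)
  choose c₁ h₁ using fun i => hlim (c₂ i)
  obtain ⟨q, h₀⟩ := hlim c₁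
  obtain ⟨i, hi⟩ := h₀.exists
  have hi' := h₁ i
  rw [hi] at hi'
  obtain ⟨j, ⟨hj, hij⟩, hij'⟩ := ((h₀.and hi').and (hgt i)).exists
  have hj' := h₁ j
  rw [hj] at hj'
  have hij2 := h₂ i j
  rw [hij] at hij2
  obtain ⟨k, ⟨⟨hik, hjk⟩, hijk⟩, hk⟩ := (((hi'.and hj').and hij2).and (hgt j)).exists
  have hik2 := h₂ i k
  rw [hik] at hik2
  have hjk2 := h₂ j k
  rw [hjk] at hjk2
  obtain ⟨l, ⟨⟨h1, h2⟩, h3⟩, hl⟩ := (((hij2.and hik2).and hjk2).and (hgt k)).exists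
  exact ⟨i, j, k, l, hij', hk, hl, by rw [h2, hijk], by rw [h1, hijk], by rw [h3, hijk]⟩

/-- There is a set `X ⊆ ℕ` in which every finite subset `Y` contains a Sidon set
of size at least `|Y|/4`, yet `X` is not a finite union of Sidon sets. -/
theorem exists_locally_Sidon_not_finite_union :
    ∃ X : Set ℕ,
      (∀ Y : Finset ℕ, ↑Y ⊆ X → ∃ Z : Finset ℕ, Z ⊆ Y ∧ (∀ n, rho (↑Z) 2 n ≤ 1) ∧
        (Y.card : ℝ) / 4 ≤ Z.card) ∧
      ¬ ∃ (r : ℕ) (_ : 1 ≤ r) (P : ℕ → Fin r),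
          ∀ q : Fin r, ∀ n, rho {x | x ∈ X ∧ P x = q} 2 n ≤ 1 := by
  refine ⟨{x | ∃ i j k, i < j ∧ j < k ∧ x = triWeight i j k}, ?_, ?_⟩
  · intro Y hY
    have hY' : ∀ y, ∃ i j k, y ∈ Y → i < j ∧ j < k ∧ y = triWeight i j k := by
      intro y
      by_cases hy : y ∈ Y
      · obtain ⟨i, j, k, h⟩ := hY hy
        exact ⟨i, j, k, fun _ => h⟩
      · exact ⟨0, 0, 0, fun h => absurd h hy⟩
    choose i j k hijk using hY'
    obtain ⟨S, hS⟩ := exists_split Y i j fun y hy => (hijk y hy).1.ne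
    refine ⟨Y.filter fun y => i y ∈ S ∧ j y ∉ S, Finset.filter_subset _ _, ?_, ?_⟩
    · apply rho_le_one
      simp only [Finset.coe_filter, Set.mem_ofPred_eq]
      rintro a ⟨ha, sa, ta⟩ b ⟨hb, sb, tb⟩ c ⟨hc, sc, tc⟩ d ⟨hd, sd, td⟩ hsum
      obtain ⟨a₁, a₂, ea⟩ := hijk a ha
      obtain ⟨b₁, b₂, eb⟩ := hijk b hb
      obtain ⟨c₁, c₂, ec⟩ := hijk c hc
      obtain ⟨d₁, d₂, ed⟩ := hijk d hd
      have hw : triWeight (i a) (j a) (k a) + triWeight (i b) (j b) (k b)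
          = triWeight (i c) (j c) (k c) + triWeight (i d) (j d) (k d) := by
        rw [← ea, ← eb, ← ec, ← ed, hsum]
      rcases sidon_of_split S a₁ a₂ b₁ b₂ c₁ c₂ d₁ d₂ sa ta sb tb sc tc sd td
        (coeff_of_weight a₁ a₂ b₁ b₂ c₁ c₂ d₁ d₂ hw) with
        ⟨⟨h1, h2, h3⟩, -⟩ | ⟨⟨h1, h2, h3⟩, -⟩
      · have : a = c := by rw [ea, ec, h1, h2, h3]
        omega
      · have : a = d := by rw [ea, ed, h1, h2, h3]
        omega
    · have : (Y.card : ℝ) ≤ 4 * (Y.filter fun y => i y ∈ S ∧ j y ∉ S).card := by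
        exact_mod_cast hS
      linarith
  · rintro ⟨r, -, P, hP⟩
    obtain ⟨i, j, k, l, hij, hjk, hkl, h1, h2, h3⟩ :=
      exists_mono_tetrahedron fun i j k => P (triWeight i j k)
    have hik := hij.trans hjk
    have hjl := hjk.trans hkl
    -- The boundary of the boundary of the tetrahedron `i, j, k, l` vanishes.
    have hsum : triWeight i j k + triWeight i k l = triWeight i j l + triWeight j k l := by
      zify
      rw [triWeight_cast hij hjk, triWeight_cast hik hkl, triWeight_cast hij hjl,
        triWeight_cast hjk hkl]
      ring
    rcases sidon_of_rho (hP (P (triWeight i j k)))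
      ⟨⟨i, j, k, hij, hjk, rfl⟩, rfl⟩ ⟨⟨i, k, l, hik, hkl, rfl⟩, h1⟩
      ⟨⟨i, j, l, hij, hjl, rfl⟩, h2⟩ ⟨⟨j, k, l, hjk, hkl, rfl⟩, h3⟩ hsum with h | h
    -- Doubled, a coincidence of two weights would equate boundaries that differ at the pair `(i, k)`.
    · have := coeff_of_weight hij hjk hij hjk hij hjl hij hjl (by rw [h]) i k
      simp only [triCoeff] at this
      grind
    · have := coeff_of_weight hij hjk hij hjk hjk hkl hjk hkl (by rw [h]) i k
      simp only [triCoeff] at this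
      grind
end

section
/- For all integers k ≥ 2 and ℓ ≥ 2 there exists an infinite B_{k,ℓ}-set X ⊆ ℕ such that (v) for every n ∈ ℕ, if ρ_{X,k}(n) ≥ 2 then ρ_{X,k}(n) = ℓ, and (vi) whenever x_1 + … + x_k = y_1 + … + y_k for elements x_1 ≤ … ≤ x_k and y_1 ≤ … ≤ y_k of X, either x_i = y_i for all i ∈ {1,…,k}, or all 2k terms x_1,…,x_k,y_1,…,y_k are pairwise distinct. -/
namespace RigidBkl

open Polynomial

/-- A polynomial with coefficients smaller in absolute value than `B` is determined by its value at
`B`: uniqueness of (signed) base `B` digits of zero. -/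
lemma eq_zero_of_eval_eq_zero (B : ℤ) (n : ℕ) : ∀ Q : ℤ[X], Q.natDegree < n →
    (∀ m, |Q.coeff m| < B) → Q.eval B = 0 → Q = 0 := by
  induction n with
  | zero => intro Q h; omega
  | succ n ih =>
    intro Q hd hc h0
    have hB : 0 < B := lt_of_le_of_lt (abs_nonneg _) (hc 0)
    have hQ := Q.divX_mul_X_add
    have he : Q.divX.eval B * B + Q.coeff 0 = 0 := by
      rw [← hQ] at h0
      simpa using h0
    have hc0 : Q.coeff 0 = 0 :=
      Int.eq_zero_of_abs_lt_dvd (m := B) ⟨-Q.divX.eval B, by linarith⟩ (hc 0)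
    have he' : Q.divX.eval B = 0 := by
      rw [hc0, add_zero] at he
      exact (mul_eq_zero.mp he).resolve_right hB.ne'
    by_cases hdeg : Q.natDegree = 0
    · rw [Polynomial.eq_C_of_natDegree_eq_zero hdeg, hc0, C_0]
    · have hz : Q.divX = 0 := by
        apply ih _ _ _ he'
        · rw [natDegree_divX_eq_natDegree_tsub_one]; omega
        · intro m; rw [coeff_divX]; exact hc _
      rw [← hQ, hz, hc0]; simp

variable (k l : ℕ)

/-- Index set of the generators: the `l × k` array, and countably many free generators. -/
abbrev Idx : Type := (Fin l × Fin k) ⊕ ℕ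

variable {k l}

/-- The exponent `k * i + j` attached to the position `(i, j)` of the array. -/
def ex (i : Fin l) (j : Fin k) : ℕ := (finProdFinEquiv (i, j)).val

lemma ex_lt (i : Fin l) (j : Fin k) : ex i j < l * k := (finProdFinEquiv (i, j)).isLt

lemma ex_inj {i i' : Fin l} {j j' : Fin k} : ex i j = ex i' j' ↔ i = i' ∧ j = j' := by
  unfold ex
  rw [← Fin.ext_iff, finProdFinEquiv.injective.eq_iff, Prod.mk.injEq]

lemma ex_mono (i : Fin l) {j j' : Fin k} (h : j ≤ j') : ex i j ≤ ex i j' := by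
  have : j.val ≤ j'.val := h
  simp only [ex, finProdFinEquiv_apply_val]
  omega

/-- The generators as polynomials.  Monomials, except that the last entry of row `i` is
`X ^ (l * k)` minus the other entries of the row. -/
noncomputable def gen : Idx k l → ℤ[X]
  | Sum.inl (i, j) =>
      if j.val + 1 < k then X ^ ex i j
      else X ^ (l * k) - ∑ j' : Fin k with j'.val + 1 < k, X ^ ex i j'
  | Sum.inr t => X ^ (l * k + 1 + t)

lemma abs_coeff_gen_le (p : Idx k l) (n : ℕ) : |(gen p).coeff n| ≤ k + 1 := by
  have hX : ∀ m : ℕ, |((X : ℤ[X]) ^ m).coeff n| ≤ 1 := by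
    intro m; rw [coeff_X_pow]; split_ifs <;> simp
  rcases p with ⟨i, j⟩ | t
  · simp only [gen]
    split_ifs
    · linarith [hX (ex i j), Int.natCast_nonneg k]
    · rw [coeff_sub, finsetSum_coeff]
      have h1 : |∑ j' : Fin k with j'.val + 1 < k, ((X : ℤ[X]) ^ ex i j').coeff n| ≤ k := by
        refine (Finset.abs_sum_le_sum_abs _ _).trans ?_
        refine (Finset.sum_le_card_nsmul _ _ 1 fun j' _ => hX _).trans ?_
        have := Finset.card_filter_le (Finset.univ : Finset (Fin k)) (fun j' => j'.val + 1 < k)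
        rw [Finset.card_univ, Fintype.card_fin] at this
        simpa using this
      have h2 := abs_sub (((X : ℤ[X]) ^ (l * k)).coeff n)
        (∑ j' : Fin k with j'.val + 1 < k, ((X : ℤ[X]) ^ ex i j').coeff n)
      linarith [hX (l * k)]
  · simp only [gen]
    linarith [hX (l * k + 1 + t), Int.natCast_nonneg k]

/-- The evaluation point. -/
def base (k : ℕ) : ℤ := 2 * (k * (k + 1)) + 1

lemma base_pos (k : ℕ) : 0 < base k := by unfold base; positivity

lemma succ_le_base (hk : 1 ≤ k) : (k : ℤ) + 1 ≤ base k := by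
  have : (1 : ℤ) ≤ k := by exact_mod_cast hk
  unfold base; nlinarith

lemma sum_pow_le (hk : 1 ≤ k) (i : Fin l) (j : Fin k) :
    (∑ j' : Fin k with j'.val + 1 < k, base k ^ ex i j') + base k ^ ex i j ≤ base k ^ (l * k) := by
  have h1 : ∀ j' : Fin k, ((k : ℤ) + 1) * base k ^ ex i j' ≤ base k ^ (l * k) := by
    intro j'
    calc ((k : ℤ) + 1) * base k ^ ex i j' ≤ base k * base k ^ ex i j' := by
          gcongr
          · exact (pow_pos (base_pos k) _).le
          · exact succ_le_base hk
      _ = base k ^ (ex i j' + 1) := by ring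
      _ ≤ base k ^ (l * k) := pow_le_pow_right₀ (base_pos k) (ex_lt i j')
  have h2 : ((k : ℤ) + 1) * ∑ j' : Fin k with j'.val + 1 < k, base k ^ ex i j'
      ≤ k * base k ^ (l * k) := by
    rw [Finset.mul_sum]
    refine (Finset.sum_le_card_nsmul _ _ _ fun j' _ => h1 j').trans ?_
    have := Finset.card_filter_le (Finset.univ : Finset (Fin k)) (fun j' => j'.val + 1 < k)
    rw [Finset.card_univ, Fintype.card_fin] at this
    rw [nsmul_eq_mul]
    gcongr
    exact (pow_pos (base_pos k) _).le
  have hk' : (0 : ℤ) < k + 1 := by positivity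
  refine le_of_mul_le_mul_left ?_ hk'
  linarith [h1 j]

lemma eval_gen_nonneg (p : Idx k l) : 0 ≤ (gen p).eval (base k) := by
  have hB := (base_pos k).le
  rcases p with ⟨i, j⟩ | t
  · simp only [gen]
    split_ifs
    · simpa using pow_nonneg hB _
    · have := sum_pow_le (by have := j.isLt; omega) i j
      have h2 := pow_nonneg hB (ex i j)
      simp only [eval_sub, eval_pow, eval_X, eval_finsetSum]
      linarith
  · simpa [gen] using pow_nonneg hB _

/-- The generators as natural numbers. -/
noncomputable def val (p : Idx k l) : ℕ := ((gen p).eval (base k)).toNat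

lemma val_cast (p : Idx k l) : ((val p : ℕ) : ℤ) = (gen p).eval (base k) :=
  Int.toNat_of_nonneg (eval_gen_nonneg p)

lemma row_mono (i : Fin l) : Monotone fun j : Fin k => val (Sum.inl (i, j) : Idx k l) := by
  intro j j' h
  have hjj : j.val ≤ j'.val := h
  have hj' := j'.isLt
  have : ((val (Sum.inl (i, j) : Idx k l) : ℕ) : ℤ) ≤ (val (Sum.inl (i, j') : Idx k l) : ℕ) := by
    rw [val_cast, val_cast]
    by_cases h1 : j'.val + 1 < k
    · have h2 : j.val + 1 < k := by omega
      simp only [gen, if_pos h1, if_pos h2, eval_pow, eval_X]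
      exact pow_le_pow_right₀ (base_pos k) (ex_mono i h)
    · by_cases h2 : j.val + 1 < k
      · have := sum_pow_le (by omega) i j
        simp only [gen, if_neg h1, if_pos h2, eval_sub, eval_pow, eval_X, eval_finsetSum]
        linarith
      · have : j = j' := Fin.ext (by omega)
        rw [this]
  exact_mod_cast this

/-- The common value `S` of the row sums. -/
def total (k l : ℕ) : ℤ := base k ^ (l * k)

lemma row_sum (hk : 1 ≤ k) (i : Fin l) :
    ((∑ j : Fin k, val (Sum.inl (i, j) : Idx k l) : ℕ) : ℤ) = total k l := by
  push_cast
  simp only [val_cast]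
  rw [← Finset.sum_filter_add_sum_filter_not Finset.univ (fun j : Fin k => j.val + 1 < k)]
  have hlast : (Finset.univ.filter fun j : Fin k => ¬ (j.val + 1 < k))
      = {⟨k - 1, by omega⟩} := by
    ext j
    have := j.isLt
    simp only [Finset.mem_filter, Finset.mem_univ, true_and, Finset.mem_singleton, Fin.ext_iff]
    omega
  rw [hlast, Finset.sum_singleton]
  have h1 : ¬ (k - 1 + 1 < k) := by omega
  have h2 : ∑ j : Fin k with j.val + 1 < k, (gen (Sum.inl (i, j) : Idx k l)).eval (base k)
      = ∑ j : Fin k with j.val + 1 < k, base k ^ ex i j := by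
    refine Finset.sum_congr rfl fun j hj => ?_
    simp [gen, (Finset.mem_filter.mp hj).2]
  rw [h2]
  simp [gen, h1, eval_finsetSum, total]

/-- The multiset of entries of row `i`. -/
def row (i : Fin l) : Multiset (Idx k l) :=
  (Finset.univ : Finset (Fin k)).val.map fun j => Sum.inl (i, j)

lemma row_nodup (i : Fin l) : (row i : Multiset (Idx k l)).Nodup :=
  Finset.univ.nodup.map fun j j' h => by simpa using h

lemma card_row (i : Fin l) : (row i : Multiset (Idx k l)).card = k := by simp [row]

/-- Bounded coefficients make evaluation at `base k` faithful on sums of `k` generators. -/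
lemma gen_sum_eq {U V : Multiset (Idx k l)} (hU : U.card = k) (hV : V.card = k)
    (h : (U.map val).sum = (V.map val).sum) : (U.map gen).sum = (V.map gen).sum := by
  have hb : ∀ (W : Multiset (Idx k l)) (m : ℕ),
      |((W.map gen).sum).coeff m| ≤ W.card * ((k : ℤ) + 1) := by
    intro W m
    induction W using Multiset.induction_on with
    | empty => simp
    | cons a W ih =>
      simp only [Multiset.map_cons, Multiset.sum_cons, coeff_add, Multiset.card_cons]
      push_cast
      linarith [abs_add_le ((gen a).coeff m) ((W.map gen).sum.coeff m), abs_coeff_gen_le a m]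
  have hev : ∀ W : Multiset (Idx k l),
      ((W.map gen).sum).eval (base k) = (((W.map val).sum : ℕ) : ℤ) := by
    intro W
    induction W using Multiset.induction_on with
    | empty => simp
    | cons a W ih => simp [eval_add, ih, val_cast]
  rw [← sub_eq_zero]
  refine eq_zero_of_eval_eq_zero (base k) _ _ (Nat.lt_succ_self _) ?_ ?_
  · intro m
    rw [coeff_sub]
    have h1 := hb U m
    have h2 := hb V m
    rw [hU] at h1
    rw [hV] at h2
    have h3 := abs_sub (((U.map gen).sum).coeff m) (((V.map gen).sum).coeff m)
    unfold base
    linarith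
  · rw [eval_sub, hev, hev, h, sub_self]

lemma coeff_free (p : Idx k l) (t : ℕ) :
    (gen p).coeff (l * k + 1 + t) = if p = Sum.inr t then 1 else 0 := by
  rcases p with ⟨i, j⟩ | s
  · have hne : ∀ j : Fin k, l * k + 1 + t ≠ ex i j := fun j => by have := ex_lt i j; omega
    have h2 : l * k + 1 + t ≠ l * k := by omega
    simp only [gen]
    split_ifs <;> simp_all [coeff_X_pow]
  · simp [gen, coeff_X_pow, eq_comm]

lemma coeff_ex (p : Idx k l) (i : Fin l) (j z : Fin k) (hj : j.val + 1 < k) (hz : z.val + 1 = k) :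
    (gen p).coeff (ex i j) =
      (if p = Sum.inl (i, j) then 1 else 0) - (if p = Sum.inl (i, z) then 1 else 0) := by
  have hlt := ex_lt i j
  rcases p with ⟨i', j'⟩ | s
  · simp only [gen]
    have hj' := j'.isLt
    split_ifs with h1 h2 h3 h3 h2 h3 h3
    all_goals
      simp only [Sum.inl.injEq, Prod.mk.injEq] at *
    · obtain ⟨rfl, rfl⟩ := h2
      obtain ⟨-, rfl⟩ := h3
      omega
    · obtain ⟨rfl, rfl⟩ := h2
      simp
    · obtain ⟨-, rfl⟩ := h3
      omega
    · rw [coeff_X_pow, if_neg (by rw [ex_inj]; tauto)]; simp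
    · obtain ⟨rfl, rfl⟩ := h2
      omega
    · obtain ⟨rfl, rfl⟩ := h2
      omega
    · obtain ⟨rfl, rfl⟩ := h3
      simp [coeff_X_pow, ex_inj, hlt.ne, hj]
    · have hzj : j' = z := Fin.ext (by omega)
      have hi : i ≠ i' := by rintro rfl; exact h3 ⟨rfl, hzj⟩
      simp [coeff_X_pow, ex_inj, hlt.ne, hi]
  · have : ex i j ≠ l * k + 1 + s := by omega
    simp [gen, coeff_X_pow, this]

lemma sum_ite_eq_count (U : Multiset (Idx k l)) (q : Idx k l) :
    (U.map fun p => if p = q then (1 : ℤ) else 0).sum = U.count q := by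
  induction U using Multiset.induction_on with
  | empty => simp
  | cons a U ih =>
    simp only [Multiset.map_cons, Multiset.sum_cons, ih, Multiset.count_cons]
    by_cases h : a = q
    · subst h; simp [add_comm]
    · simp [h, Ne.symm h]

lemma coeff_sum (U : Multiset (Idx k l)) (n : ℕ) :
    ((U.map gen).sum).coeff n = (U.map fun p => (gen p).coeff n).sum := by
  induction U using Multiset.induction_on with
  | empty => simp
  | cons a U ih => simp [ih]

lemma count_free {U V : Multiset (Idx k l)} (h : (U.map gen).sum = (V.map gen).sum) (t : ℕ) :
    U.count (Sum.inr t) = V.count (Sum.inr t) := by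
  have := congrArg (fun Q => Q.coeff (l * k + 1 + t)) h
  simp only [coeff_sum, coeff_free, sum_ite_eq_count] at this
  exact_mod_cast this

/-- The difference of the multiplicities is constant along each row. -/
lemma count_row {U V : Multiset (Idx k l)} (h : (U.map gen).sum = (V.map gen).sum)
    (i : Fin l) (j j' : Fin k) :
    (U.count (Sum.inl (i, j)) : ℤ) - V.count (Sum.inl (i, j))
      = U.count (Sum.inl (i, j')) - V.count (Sum.inl (i, j')) := by
  have hz : k - 1 < k := by have := j.isLt; omega
  -- it suffices to compare with the last column
  have key : ∀ j : Fin k, (U.count (Sum.inl (i, j)) : ℤ) - V.count (Sum.inl (i, j))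
      = U.count (Sum.inl (i, ⟨k - 1, hz⟩)) - V.count (Sum.inl (i, ⟨k - 1, hz⟩)) := by
    intro j
    by_cases hj : j.val + 1 < k
    · have := congrArg (fun Q => Q.coeff (ex i j)) h
      simp only [coeff_sum, coeff_ex _ i j ⟨k - 1, hz⟩ hj (by simp only; omega),
        Multiset.sum_map_sub, sum_ite_eq_count] at this
      linarith
    · have : j = ⟨k - 1, hz⟩ := Fin.ext (by have := j.isLt; simp only; omega)
      rw [this]
  rw [key j, key j']

/-- If `U ≠ V` have equal sums then `U` is one of the rows. -/
lemma exists_row {U V : Multiset (Idx k l)} (hU : U.card = k) (hV : V.card = k)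
    (h : (U.map gen).sum = (V.map gen).sum) (hne : U ≠ V) : ∃ i, U = row i := by
  have : ∃ p, V.count p < U.count p := by
    by_contra! hc
    exact hne (Multiset.eq_of_le_of_card_le (Multiset.le_iff_count.mpr hc) (by omega))
  obtain ⟨⟨i, j⟩ | t, hp⟩ := this
  · refine ⟨i, (Multiset.eq_of_le_of_card_le ?_ (by rw [hU, card_row])).symm⟩
    rw [Multiset.le_iff_subset (row_nodup i)]
    intro q hq
    obtain ⟨j', -, rfl⟩ := Multiset.mem_map.mp hq
    have := count_row h i j j'
    rw [← Multiset.count_pos]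
    omega
  · exact absurd (count_free h t) hp.ne'

/-- The only coincidences among sums of `k` generators are those between two rows. -/
lemma multiset_eq_or_rows {U V : Multiset (Idx k l)} (hU : U.card = k) (hV : V.card = k)
    (h : (U.map val).sum = (V.map val).sum) :
    U = V ∨ ∃ i i', i ≠ i' ∧ U = row i ∧ V = row i' := by
  by_cases hne : U = V
  · exact Or.inl hne
  · have hg := gen_sum_eq hU hV h
    obtain ⟨i, hi⟩ := exists_row hU hV hg hne
    obtain ⟨i', hi'⟩ := exists_row hV hU hg.symm (Ne.symm hne)
    exact Or.inr ⟨i, i', by rintro rfl; exact hne (hi.trans hi'.symm), hi, hi'⟩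

lemma val_injective (hk : 2 ≤ k) : Function.Injective (val : Idx k l → ℕ) := by
  intro p q h
  -- compare the sums of `k` copies of `p` and of `q`; rows have no repeated entries
  rcases multiset_eq_or_rows (U := Multiset.replicate k p) (V := Multiset.replicate k q)
    (by simp) (by simp) (by simp [h]) with h' | ⟨i, -, -, hi, -⟩
  · exact Multiset.replicate_right_injective (by omega) h'
  · have := row_nodup (k := k) i
    rw [← hi, Multiset.nodup_iff_count_le_one] at this
    have := this p
    rw [Multiset.count_replicate_self] at this
    omega

lemma eq_of_monotone {x y : Fin k → ℕ} (hx : Monotone x) (hy : Monotone y)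
    (h : (Finset.univ : Finset (Fin k)).val.map x = (Finset.univ : Finset (Fin k)).val.map y) :
    x = y := by
  rw [Fin.univ_val_map, Fin.univ_val_map, Multiset.coe_eq_coe] at h
  exact List.ofFn_injective (h.eq_of_sortedLE hx.sortedLE_ofFn hy.sortedLE_ofFn)

/-- The row `i` as an increasing tuple of natural numbers. -/
noncomputable def tup (k : ℕ) {l : ℕ} (i : Fin l) : Fin k → ℕ := fun j => val (Sum.inl (i, j) : Idx k l)

/-- Two different increasing tuples of generators with equal sums are two different rows. -/
lemma tuples_eq_or_rows {x y : Fin k → ℕ}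
    (hx : ∀ i, x i ∈ Set.range (val : Idx k l → ℕ)) (hy : ∀ i, y i ∈ Set.range (val : Idx k l → ℕ))
    (mx : Monotone x) (my : Monotone y) (h : ∑ i, x i = ∑ i, y i) :
    x = y ∨ ∃ i i' : Fin l, i ≠ i' ∧ x = tup k i ∧ y = tup k i' := by
  choose u hu using hx
  choose v hv using hy
  obtain rfl : (fun i => val (u i)) = x := funext hu
  obtain rfl : (fun i => val (v i)) = y := funext hv
  rcases multiset_eq_or_rows (U := Finset.univ.val.map u) (V := Finset.univ.val.map v)
    (by simp) (by simp) (by rw [Multiset.map_map, Multiset.map_map]; exact h) with h' | ⟨i, i', hne, h1, h2⟩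
  · left
    have := congrArg (Multiset.map val) h'
    simp only [Multiset.map_map] at this
    exact eq_of_monotone mx my this
  · right
    have e1 := congrArg (Multiset.map val) h1
    have e2 := congrArg (Multiset.map val) h2
    simp only [row, Multiset.map_map] at e1 e2
    exact ⟨i, i', hne, eq_of_monotone mx (row_mono i) e1, eq_of_monotone my (row_mono i') e2⟩

lemma tup_ne (hk : 2 ≤ k) {i i' : Fin l} (h : i ≠ i') (j j' : Fin k) : tup k i j ≠ tup k i' j' := by
  intro he
  have := val_injective hk he
  simp only [Sum.inl.injEq, Prod.mk.injEq] at this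
  exact h this.1

lemma tup_entries_injective (hk : 2 ≤ k) (i : Fin l) : Function.Injective (tup k i) := by
  intro j j' he
  have := val_injective hk he
  simp only [Sum.inl.injEq, Prod.mk.injEq] at this
  exact this.2

lemma tup_injective (hk : 2 ≤ k) : Function.Injective (tup k : Fin l → Fin k → ℕ) := by
  intro i i' h
  by_contra hne
  exact tup_ne hk hne ⟨0, by omega⟩ ⟨0, by omega⟩ (congrFun h _)

lemma tup_sum (hk : 2 ≤ k) (i i' : Fin l) : ∑ j, tup k i j = ∑ j, tup k i' j := by
  have h := (row_sum (by omega) i).trans (row_sum (k := k) (by omega) i').symm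
  exact_mod_cast h

/-- The representations of the common row sum are exactly the `l` rows. -/
lemma rho_row_sum (hk : 2 ≤ k) (i : Fin l) :
    rho (Set.range (val : Idx k l → ℕ)) k (∑ j, tup k i j) = l := by
  have hset : {f : Fin k → ℕ | (∀ j, f j ∈ Set.range (val : Idx k l → ℕ)) ∧ Monotone f ∧
      ∑ j, f j = ∑ j, tup k i j} = Set.range (tup k : Fin l → Fin k → ℕ) := by
    ext f
    constructor
    · rintro ⟨h1, h2, h3⟩
      rcases tuples_eq_or_rows h1 (fun j => ⟨_, rfl⟩) h2 (row_mono i) h3 with h | ⟨a, -, -, h, -⟩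
      · exact ⟨i, h.symm⟩
      · exact ⟨a, h.symm⟩
    · rintro ⟨a, rfl⟩
      exact ⟨fun j => ⟨_, rfl⟩, row_mono a, tup_sum hk a i⟩
  rw [rho, hset, ← Set.image_univ, Set.ncard_image_of_injective _ (tup_injective hk),
    Set.ncard_univ, Nat.card_eq_fintype_card, Fintype.card_fin]

lemma rho_eq_of_two_le (hk : 2 ≤ k) (n : ℕ)
    (h : 2 ≤ rho (Set.range (val : Idx k l → ℕ)) k n) :
    rho (Set.range (val : Idx k l → ℕ)) k n = l := by
  have h1 : 1 < rho (Set.range (val : Idx k l → ℕ)) k n := h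
  obtain ⟨x, ⟨hx, mx, sx⟩, y, ⟨hy, my, sy⟩, hne⟩ :=
    (Set.one_lt_ncard_iff_nontrivial_and_finite.mp h1).1
  rcases tuples_eq_or_rows hx hy mx my (sx.trans sy.symm) with h2 | ⟨i, -, -, rfl, -⟩
  · exact absurd h2 hne
  · rw [← sx]
    exact rho_row_sum hk i

end RigidBkl

open RigidBkl in
/-- For all `k, ℓ ≥ 2` there is an infinite `B_{k,ℓ}`-set `X ⊆ ℕ` such that
(v) every `n` with `ρ_{X,k}(n) ≥ 2` satisfies `ρ_{X,k}(n) = ℓ`, and (vi) any two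
equal `k`-term sums from `X` either coincide termwise or have all `2k` terms
pairwise distinct. -/
theorem exists_Bkl_set_rigid (k l : ℕ) (hk : 2 ≤ k) (hl : 2 ≤ l) :
    ∃ X : Set ℕ, X.Infinite ∧
      (∀ n, rho X k n ≤ l) ∧ (∃ n, rho X k n = l) ∧
      (∀ n, 2 ≤ rho X k n → rho X k n = l) ∧
      (∀ x y : Fin k → ℕ, (∀ i, x i ∈ X) → (∀ i, y i ∈ X) → Monotone x → Monotone y →
        ∑ i, x i = ∑ i, y i →
        (∀ i, x i = y i) ∨
        (Function.Injective x ∧ Function.Injective y ∧ ∀ i i', x i ≠ y i')) := by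
  refine ⟨Set.range (val : Idx k l → ℕ), Set.infinite_range_of_injective (val_injective hk),
    fun n => ?_, ⟨_, rho_row_sum hk ⟨0, by omega⟩⟩, rho_eq_of_two_le hk, ?_⟩
  · by_cases h : 2 ≤ rho (Set.range (val : Idx k l → ℕ)) k n
    · exact (rho_eq_of_two_le hk n h).le
    · omega
  · intro x y hx hy mx my h
    rcases tuples_eq_or_rows hx hy mx my h with rfl | ⟨i, i', hne, rfl, rfl⟩
    · exact Or.inl fun _ => rfl
    · exact Or.inr ⟨tup_entries_injective hk i, tup_entries_injective hk i', tup_ne hk hne⟩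
end

section
/- Let k ≥ 2 and ℓ ≥ 2 be integers, set m = 2k+1, and let G be a simple graph with vertex set V(G) ⊆ {m^n : n ∈ ℕ} such that every cycle in G has length at least 2k and every cycle of length 2k in G is contained in exactly one copy of Θ_{k,ℓ} in G. Let X = {b − a : ab ∈ E(G), a < b}. If s and t are positive integers with s + t ≤ 2k and x_1 ≤ … ≤ x_s and y_1 ≤ … ≤ y_t are elements of X with x_1 + … + x_s = y_1 + … + y_t, then one of the following holds: (a) s = t and (x_1,…,x_s) = (y_1,…,y_t); or (b) s = t = k, all 2k terms x_1,…,x_k,y_1,…,y_k are pairwise distinct, and there exist a unique copy of Θ_{k,ℓ} in G, with vertices a_0, a_k and a_i^{(j)} as in the definition, and unique distinct indices j, j' ∈ {1,…,ℓ} such that x_i = a_i^{(j)} − a_{i−1}^{(j)} and y_i = a_i^{(j')} − a_{i−1}^{(j')} for all i ∈ {1,…,k} (where a_0^{(j)} = a_0^{(j')} = a_0 and a_k^{(j)} = a_k^{(j')} = a_k). -/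
/-!
Write `m = 2k + 1` and read each term `d = b - a` of `X` as the edge `ab` of `G`; orient the edges
of the `x i` upwards and those of the `y i` downwards. The equation `∑ x i = ∑ y i` becomes a
relation between two multisets of powers of `m`, each with at most `2k < m` elements, so by
uniqueness of base-`m` expansions the two multisets agree (`eq_of_sum_pow_eq`): at every vertex as
many edges enter as leave. The same uniqueness shows that an edge is determined by its length
(`sub_inj_of_pow`).

Cancel the terms common to both sides. If nothing is left, the two sums coincide termwise.
Otherwise every end of a remaining edge meets a second remaining edge, so the remaining edges
contain a cycle (`exists_cycle_of_balanced`). The girth bound makes its length at least `2k`, and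
`s + t ≤ 2k`; hence nothing was cancelled, and the `x i` and `y i` are precisely the edges of a
`2k`-cycle. This cycle lies in a theta copy `p`.

An internal vertex of `p` has only two edges in `p`, so balance propagates an `x`-edge along its
whole path `j` (`mem_path_of_balanced`), up to the top vertex of `p`. There balance yields a
`y`-edge, which fills another path `j'` (`exists_paths_of_balanced`). Thus `s, t ≥ k`, so
`s = t = k`. Along an ascending path of powers of `m` the differences strictly increase, so the
monotone families `x` and `y` list the differences of the paths `j` and `j'` in order. Uniqueness
of the copy and of the indices follows because differences determine edges.
-/

/-- The edge set of a (purported) copy of the ordered theta graph `Θ_{k,ℓ}`. -/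
def thetaEdges {k l : ℕ} (p : Fin l → Fin (k + 1) → ℕ) : Set (Sym2 ℕ) :=
  {e | ∃ (j : Fin l) (i : Fin k), e = s(p j i.castSucc, p j i.succ)}

/-- `p` is a copy of the ordered generalised theta graph `Θ_{k,ℓ}` in `G`:
`ℓ` ascending paths of length `k`, with common endpoints, internally pairwise
disjoint, all of whose edges belong to `G`. -/
def IsThetaCopy (G : SimpleGraph ℕ) (k l : ℕ) (p : Fin l → Fin (k + 1) → ℕ) : Prop :=
  (∀ j, StrictMono (p j)) ∧
  (∀ j j' : Fin l, p j 0 = p j' 0) ∧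
  (∀ j j' : Fin l, p j (Fin.last k) = p j' (Fin.last k)) ∧
  (∀ j j' : Fin l, j ≠ j' → ∀ i i' : Fin (k + 1),
    i ≠ 0 → i ≠ Fin.last k → i' ≠ 0 → i' ≠ Fin.last k → p j i ≠ p j' i') ∧
  (∀ (j : Fin l) (i : Fin k), G.Adj (p j i.castSucc) (p j i.succ))

/-! ### Cycles in graphs with no leaves -/

/-- A graph with finitely many edges, at least one, and no vertex of degree one contains a cycle:
the initial vertex of a longest path has a second neighbour, which lies on the path. -/
theorem exists_isCycle_of_two_neighbors {V : Type*} (H : SimpleGraph V) [Finite H.edgeSet]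
    {a b : V} (hab : H.Adj a b) (h : ∀ u v, H.Adj u v → ∃ w, w ≠ u ∧ H.Adj v w) :
    ∃ (v : V) (C : H.Walk v v), C.IsCycle := by
  by_contra hcon
  have hac : H.IsAcyclic := fun v C hC => hcon ⟨v, C, hC⟩
  have : Nonempty V := ⟨a⟩
  obtain ⟨u, v, p, hp, hmax⟩ := SimpleGraph.Walk.exists_isPath_forall_isPath_length_le_length H
  have hnil : ¬p.Nil := by
    intro hn
    have h1 := hmax a b hab.toWalk (by simp [SimpleGraph.Walk.cons_isPath_iff, hab.ne])
    have h2 : p.length = 0 := SimpleGraph.Walk.length_eq_zero_iff.2 hn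
    simp [h2] at h1
  obtain ⟨w, hwne, hw⟩ := h p.snd u (p.adj_snd hnil).symm
  apply hwne
  apply hac.eq_snd_of_adj_start hp hw
  have : ¬(p.cons hw.symm).IsPath := by
    intro hq
    have := hmax _ _ _ hq
    simp at this
  by_contra hns
  exact this (hp.cons hns)

/-! ### Sums of fewer than `m` powers of `m` -/

theorem mul_le_of_pow_lt_pow {m a b : ℕ} (hm : 2 ≤ m) (ha : ∃ n : ℕ, a = m ^ n)
    (hb : ∃ n : ℕ, b = m ^ n) (hab : a < b) : m * a ≤ b := by
  obtain ⟨i, rfl⟩ := ha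
  obtain ⟨j, rfl⟩ := hb
  have hij : i < j := (Nat.pow_lt_pow_iff_right (by omega)).1 hab
  rw [← pow_succ']
  exact Nat.pow_le_pow_right (by omega) hij

/-- If all elements of `B` were below the power `a` of `m`, each would be at most `a / m`, and fewer
than `m` of them could not sum to `a`. -/
theorem exists_le_of_sum_eq {m : ℕ} (hm : 2 ≤ m) {A B : Multiset ℕ}
    (hA : ∀ a ∈ A, ∃ n : ℕ, a = m ^ n) (hB : ∀ b ∈ B, ∃ n : ℕ, b = m ^ n)
    (hsum : A.sum = B.sum) (hBm : B.card < m) {a : ℕ} (ha : a ∈ A) : ∃ b ∈ B, a ≤ b := by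
  by_contra! hcon
  have hapos : 0 < a := by
    obtain ⟨n, rfl⟩ := hA a ha
    positivity
  have h1 : a ≤ A.sum := Multiset.le_sum_of_mem ha
  have h2 : (B.map (m * ·)).sum ≤ (B.map (m * ·)).card • a := by
    apply Multiset.sum_le_card_nsmul
    simp only [Multiset.mem_map]
    rintro _ ⟨b, hb, rfl⟩
    exact mul_le_of_pow_lt_pow hm (hB b hb) (hA a ha) (hcon b hb)
  rw [Multiset.sum_map_mul_left, Multiset.map_id', Multiset.card_map, smul_eq_mul] at h2
  have h3 : B.card * a < m * a := by gcongr
  have h4 : m * a ≤ m * B.sum := by rw [← hsum]; gcongr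
  omega

/-- Uniqueness of base-`m` expansions, for multisets of fewer than `m` powers of `m`. By
`exists_le_of_sum_eq` both multisets have the same maximum, which can be removed from each. -/
theorem eq_of_sum_pow_eq {m : ℕ} (hm : 2 ≤ m) : ∀ {A B : Multiset ℕ},
    (∀ a ∈ A, ∃ n : ℕ, a = m ^ n) → (∀ b ∈ B, ∃ n : ℕ, b = m ^ n) →
    A.sum = B.sum → A.card < m → B.card < m → A = B := by
  intro A
  induction hn : A.card generalizing A with
  | zero =>
    intro B _ hB hsum _ _
    obtain rfl := Multiset.card_eq_zero.1 hn
    rcases Multiset.empty_or_exists_mem B with rfl | ⟨b, hb⟩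
    · rfl
    · obtain ⟨n, rfl⟩ := hB b hb
      have := Multiset.le_sum_of_mem hb
      have : 0 < m ^ n := by positivity
      simp at hsum
      omega
  | succ n ih =>
    intro B hA hB hsum hAm hBm
    obtain ⟨a₀, ha₀⟩ : ∃ a, a ∈ A := Multiset.card_pos_iff_exists_mem.1 (by omega)
    obtain ⟨a, ha, hamax⟩ := A.toFinset.exists_max_image id ⟨a₀, by simpa⟩
    simp only [Multiset.mem_toFinset, id] at ha hamax
    obtain ⟨b, hb, hab⟩ := exists_le_of_sum_eq hm hA hB hsum hBm ha
    obtain ⟨c, hc, hbc⟩ := exists_le_of_sum_eq hm hB hA hsum.symm (by omega) hb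
    obtain rfl : a = b := le_antisymm hab (hbc.trans (hamax c hc))
    obtain ⟨A', rfl⟩ := Multiset.exists_cons_of_mem ha
    obtain ⟨B', rfl⟩ := Multiset.exists_cons_of_mem hb
    simp only [Multiset.card_cons, Multiset.sum_cons, Multiset.mem_cons] at *
    rw [ih (A := A') (by omega) (fun x hx => hA x (.inr hx)) (fun x hx => hB x (.inr hx))
      (by omega) (by omega) (by omega)]

/-- A positive difference of two powers of `m` determines both of them. -/
theorem sub_inj_of_pow {m a b a' b' : ℕ} (hm : 3 ≤ m) (ha : ∃ n : ℕ, a = m ^ n)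
    (hb : ∃ n : ℕ, b = m ^ n) (ha' : ∃ n : ℕ, a' = m ^ n) (hb' : ∃ n : ℕ, b' = m ^ n)
    (hab : a < b) (hab' : a' < b') (h : b - a = b' - a') : a = a' ∧ b = b' := by
  have key : ({b, a'} : Multiset ℕ) = {b', a} := by
    apply eq_of_sum_pow_eq (m := m) (by omega)
    · simp [hb, ha']
    · simp [hb', ha]
    · simp; omega
    · simp; omega
    · simp; omega
  have h1 : b ∈ ({b', a} : Multiset ℕ) := by simp [← key]
  simp at h1
  omega

/-! ### Balanced edge sets inside a theta graph

A multiset of differences `d` is regarded as a multiset of edges with lower end `lo d` and upper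
end `hi d`. The balance condition `M.map hi + N.map lo = N.map hi + M.map lo` says that, with `M`
oriented upwards and `N` downwards, in-degree equals out-degree at every vertex.
-/

/-- Coinciding vertices of a theta copy have the same position, and lie on the same path unless
they are the common endpoints. -/
theorem IsThetaCopy.vertex_inj {G : SimpleGraph ℕ} {k l : ℕ} {p : Fin l → Fin (k + 1) → ℕ}
    (hp : IsThetaCopy G k l p) {j j' : Fin l} {i i' : Fin (k + 1)} (h : p j i = p j' i') :
    i = i' ∧ (i ≠ 0 → i ≠ Fin.last k → j = j') := by
  obtain ⟨hmono, h0, hlast, hdisj, -⟩ := hp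
  have hi : i = i' := by
    by_cases hjj : j = j'
    · subst hjj; exact (hmono j).injective h
    · by_cases a1 : i = 0
      · subst a1; rw [h0 j j'] at h; exact (hmono j').injective h
      by_cases a2 : i = Fin.last k
      · subst a2; rw [hlast j j'] at h; exact (hmono j').injective h
      by_cases a3 : i' = 0
      · subst a3; rw [h0 j' j] at h; exact (hmono j).injective h
      by_cases a4 : i' = Fin.last k
      · subst a4; rw [hlast j' j] at h; exact (hmono j).injective h
      exact absurd h (hdisj j j' hjj i i' a1 a2 a3 a4)
  refine ⟨hi, fun a1 a2 => ?_⟩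
  subst hi
  by_contra hjj
  exact hdisj j j' hjj i i a1 a2 a1 a2 h

/-- If balanced multisets `M`, `N` of edges of a theta copy have no common member, and some member
of `M` is an edge of the path `j`, then `M` contains every edge of that path. -/
theorem mem_path_of_balanced {G : SimpleGraph ℕ} {k l : ℕ} {p : Fin l → Fin (k + 1) → ℕ}
    (hp : IsThetaCopy G k l p) {M N : Multiset ℕ} {lo hi : ℕ → ℕ}
    (hbal : M.map hi + N.map lo = N.map hi + M.map lo) (hdisj : Disjoint M N)
    (hsub : ∀ d ∈ M + N, d = hi d - lo d)
    (hcov : ∀ d ∈ M + N, ∃ j i, lo d = p j (Fin.castSucc i) ∧ hi d = p j (Fin.succ i))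
    {d : ℕ} (hd : d ∈ M) {j : Fin l} {i : Fin k}
    (hlo : lo d = p j i.castSucc) (hhi : hi d = p j i.succ) (i' : Fin k) :
    ∃ d' ∈ M, lo d' = p j i'.castSucc ∧ hi d' = p j i'.succ := by
  have hne : ∀ d ∈ M, ∀ d' ∈ N, ¬(lo d = lo d' ∧ hi d = hi d') := by
    rintro d hd d' hd' ⟨h1, h2⟩
    have e : d = d' := by
      rw [hsub d (by simp [hd]), hsub d' (by simp [hd']), h1, h2]
    exact Multiset.disjoint_left.1 hdisj hd (e ▸ hd')
  -- At an internal vertex the only other edge of the theta copy is the next one on the path; the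
  -- edge itself cannot restore balance, since `M` and `N` are disjoint.
  have up : ∀ (n : ℕ) (hn : n + 1 < k),
      (∃ d ∈ M, lo d = p j (Fin.castSucc ⟨n, by omega⟩) ∧ hi d = p j (Fin.succ ⟨n, by omega⟩)) →
      (∃ d ∈ M, lo d = p j (Fin.castSucc ⟨n + 1, hn⟩) ∧ hi d = p j (Fin.succ ⟨n + 1, hn⟩)) := by
    rintro n hn ⟨d, hd, h1, h2⟩
    have hmem : hi d ∈ N.map hi + M.map lo := by
      rw [← hbal]; exact Multiset.mem_add.2 (.inl (Multiset.mem_map_of_mem _ hd))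
    rcases Multiset.mem_add.1 hmem with hmem | hmem
    · obtain ⟨d', hd', he⟩ := Multiset.mem_map.1 hmem
      obtain ⟨j', i', h3, h4⟩ := hcov d' (by simp [hd'])
      obtain ⟨e1, e2⟩ := hp.vertex_inj (h2.symm.trans (he.symm.trans h4))
      have e2 := e2 (by simp [Fin.ext_iff]) (by simp [Fin.ext_iff]; omega)
      obtain rfl := Fin.succ_injective _ e1
      subst e2
      exact absurd ⟨h1.trans h3.symm, he.symm⟩ (hne d hd d' hd')
    · obtain ⟨d', hd', he⟩ := Multiset.mem_map.1 hmem
      obtain ⟨j', i', h3, h4⟩ := hcov d' (by simp [hd'])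
      obtain ⟨e1, e2⟩ := hp.vertex_inj (h2.symm.trans (he.symm.trans h3))
      have e2 := e2 (by simp [Fin.ext_iff]) (by simp [Fin.ext_iff]; omega)
      have e3 : i' = ⟨n + 1, hn⟩ := by simp [Fin.ext_iff] at e1 ⊢; omega
      subst e2
      rw [e3] at h3 h4
      exact ⟨d', hd', h3, h4⟩
  have down : ∀ (n : ℕ) (hn : n + 1 < k),
      (∃ d ∈ M, lo d = p j (Fin.castSucc ⟨n + 1, hn⟩) ∧ hi d = p j (Fin.succ ⟨n + 1, hn⟩)) →
      (∃ d ∈ M, lo d = p j (Fin.castSucc ⟨n, by omega⟩) ∧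
        hi d = p j (Fin.succ ⟨n, by omega⟩)) := by
    rintro n hn ⟨d, hd, h1, h2⟩
    have hmem : lo d ∈ M.map hi + N.map lo := by
      rw [hbal]; exact Multiset.mem_add.2 (.inr (Multiset.mem_map_of_mem _ hd))
    rcases Multiset.mem_add.1 hmem with hmem | hmem
    · obtain ⟨d', hd', he⟩ := Multiset.mem_map.1 hmem
      obtain ⟨j', i', h3, h4⟩ := hcov d' (by simp [hd'])
      obtain ⟨e1, e2⟩ := hp.vertex_inj (h1.symm.trans (he.symm.trans h4))
      have e2 := e2 (by simp [Fin.ext_iff]) (by simp [Fin.ext_iff]; omega)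
      have e3 : i' = ⟨n, by omega⟩ := by simp [Fin.ext_iff] at e1 ⊢; omega
      subst e2
      rw [e3] at h3 h4
      exact ⟨d', hd', h3, h4⟩
    · obtain ⟨d', hd', he⟩ := Multiset.mem_map.1 hmem
      obtain ⟨j', i', h3, h4⟩ := hcov d' (by simp [hd'])
      obtain ⟨e1, e2⟩ := hp.vertex_inj (h1.symm.trans (he.symm.trans h3))
      have e2 := e2 (by simp [Fin.ext_iff]) (by simp [Fin.ext_iff]; omega)
      obtain rfl := Fin.castSucc_injective _ e1
      subst e2
      exact absurd ⟨he.symm, h2.trans h4.symm⟩ (hne d hd d' hd')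
  have hiff : ∀ (n : ℕ) (hn : n < k),
      (∃ d ∈ M, lo d = p j (Fin.castSucc ⟨n, hn⟩) ∧ hi d = p j (Fin.succ ⟨n, hn⟩)) ↔
      (∃ d ∈ M, lo d = p j (Fin.castSucc ⟨0, by omega⟩) ∧
        hi d = p j (Fin.succ ⟨0, by omega⟩)) := by
    intro n
    induction n with
    | zero => intro hn; rfl
    | succ n ih => intro hn; rw [← ih (by omega)]; exact ⟨down n hn, up n hn⟩
  exact (hiff i' i'.2).2 ((hiff i i.2).1 ⟨d, hd, hlo, hhi⟩)

/-- Along an ascending path of powers of `m` the differences increase: each difference is less than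
its upper end `b`, and the next one is at least `m * b - b ≥ b`. -/
theorem IsThetaCopy.strictMono_sub {G : SimpleGraph ℕ} {k l m : ℕ}
    {p : Fin l → Fin (k + 1) → ℕ} (hp : IsThetaCopy G k l p) (hm : 2 ≤ m)
    (hver : ∀ v ∈ G.support, ∃ n : ℕ, v = m ^ n) (j : Fin l) :
    StrictMono (fun i : Fin k => p j i.succ - p j i.castSucc) := by
  intro i i' hii
  have hadj := hp.2.2.2.2 j
  have h1 : p j i.succ ≤ p j i'.castSucc :=
    (hp.1 j).monotone (by simp [Fin.le_def]; omega)
  have hpow : ∀ i : Fin k, (∃ n : ℕ, p j i.castSucc = m ^ n) ∧ ∃ n : ℕ, p j i.succ = m ^ n :=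
    fun i => ⟨hver _ ⟨_, hadj i⟩, hver _ ⟨_, (hadj i).symm⟩⟩
  have h2 : m * p j i'.castSucc ≤ p j i'.succ :=
    mul_le_of_pow_lt_pow hm (hpow i').1 (hpow i').2 (hp.1 j Fin.castSucc_lt_succ)
  have h3 : 2 * p j i'.castSucc ≤ m * p j i'.castSucc := by gcongr
  have h4 : 0 < p j i.castSucc := by
    obtain ⟨n, hn⟩ := (hpow i).1
    rw [hn]; positivity
  have h5 : p j i.castSucc < p j i.succ := hp.1 j Fin.castSucc_lt_succ
  show p j i.succ - p j i.castSucc < p j i'.succ - p j i'.castSucc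
  omega

/-- Disjoint balanced multisets `M ≠ 0`, `N` of edges of a theta copy contain, respectively, all
differences along one path and all differences along another. -/
theorem exists_paths_of_balanced {G : SimpleGraph ℕ} {k l : ℕ} {p : Fin l → Fin (k + 1) → ℕ}
    (hk : 0 < k) (hp : IsThetaCopy G k l p) {M N : Multiset ℕ} {lo hi : ℕ → ℕ}
    (hbal : M.map hi + N.map lo = N.map hi + M.map lo) (hdisj : Disjoint M N) (hM : M ≠ 0)
    (hsub : ∀ d ∈ M + N, G.Adj (lo d) (hi d) ∧ lo d < hi d ∧ d = hi d - lo d)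
    (hcov : ∀ d ∈ M + N, s(lo d, hi d) ∈ thetaEdges p) :
    ∃ j j', j ≠ j' ∧ (∀ i : Fin k, p j i.succ - p j i.castSucc ∈ M) ∧
      (∀ i : Fin k, p j' i.succ - p j' i.castSucc ∈ N) := by
  have hcov' : ∀ d ∈ M + N, ∃ j i, lo d = p j (Fin.castSucc i) ∧ hi d = p j (Fin.succ i) := by
    intro d hd
    obtain ⟨j, i, h⟩ := hcov d hd
    rcases Sym2.eq_iff.1 h with h | ⟨h1, h2⟩
    · exact ⟨j, i, h⟩
    · have h3 : p j i.castSucc < p j i.succ := hp.1 j Fin.castSucc_lt_succ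
      have := (hsub d hd).2.1
      omega
  have hsub' : ∀ d ∈ M + N, d = hi d - lo d := fun d hd => (hsub d hd).2.2
  obtain ⟨d₀, hd₀⟩ := Multiset.exists_mem_of_ne_zero hM
  obtain ⟨j, i, h1, h2⟩ := hcov' d₀ (Multiset.mem_add.2 (.inl hd₀))
  have hj := mem_path_of_balanced hp hbal hdisj hsub' hcov' hd₀ h1 h2
  obtain ⟨e, he, he1, he2⟩ := hj ⟨k - 1, by omega⟩
  -- The path `j` is filled by `M` up to the top vertex, where only an edge of `N` can leave.
  have htop : hi e = p j (Fin.last k) := by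
    rw [he2]; congr 1; simp [Fin.ext_iff]; omega
  have hmem : hi e ∈ N.map hi + M.map lo := by
    rw [← hbal]; exact Multiset.mem_add.2 (.inl (Multiset.mem_map_of_mem _ he))
  rcases Multiset.mem_add.1 hmem with hmem | hmem
  · obtain ⟨d', hd', hh⟩ := Multiset.mem_map.1 hmem
    obtain ⟨j', i', h3, h4⟩ := hcov' d' (Multiset.mem_add.2 (.inr hd'))
    have hj' := mem_path_of_balanced hp hbal.symm hdisj.symm
      (by rwa [add_comm]) (by rwa [add_comm]) hd' h3 h4
    have hM' : ∀ i : Fin k, p j i.succ - p j i.castSucc ∈ M := by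
      intro i
      obtain ⟨d, hd, a1, a2⟩ := hj i
      rwa [← a1, ← a2, ← hsub' d (Multiset.mem_add.2 (.inl hd))]
    have hN' : ∀ i : Fin k, p j' i.succ - p j' i.castSucc ∈ N := by
      intro i
      obtain ⟨d, hd, a1, a2⟩ := hj' i
      rwa [← a1, ← a2, ← hsub' d (Multiset.mem_add.2 (.inr hd))]
    refine ⟨j, j', ?_, hM', hN'⟩
    rintro rfl
    exact Multiset.disjoint_left.1 hdisj (hM' ⟨0, hk⟩) (hN' ⟨0, hk⟩)
  · obtain ⟨d', hd', hh⟩ := Multiset.mem_map.1 hmem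
    obtain ⟨j', i', h3, h4⟩ := hcov' d' (Multiset.mem_add.2 (.inl hd'))
    have := (hp.vertex_inj (htop.symm.trans (hh.symm.trans h3))).1
    simp [Fin.ext_iff] at this
    omega

/-! ### The cycle in a balanced edge set -/

/-- Disjoint balanced multisets `M`, `N` of edges, with `M` nonempty, contain a cycle. If the cycle
is as long as `M + N` is large, it uses every edge. -/
theorem exists_cycle_of_balanced {G : SimpleGraph ℕ} {M N : Multiset ℕ} {lo hi : ℕ → ℕ}
    (hbal : M.map hi + N.map lo = N.map hi + M.map lo) (hdisj : Disjoint M N) (hM : M ≠ 0)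
    (hsub : ∀ d ∈ M + N, G.Adj (lo d) (hi d) ∧ lo d < hi d ∧ d = hi d - lo d) :
    ∃ (v : ℕ) (C : G.Walk v v), C.IsCycle ∧ C.length ≤ (M + N).card ∧
      (∀ e ∈ C.edges, ∃ d ∈ M + N, e = s(lo d, hi d)) ∧
      ((M + N).card ≤ C.length → ∀ d ∈ M + N, s(lo d, hi d) ∈ C.edges) := by
  classical
  set T : Finset (Sym2 ℕ) := (M + N).toFinset.image (fun d => s(lo d, hi d)) with hT
  have memT : ∀ e, e ∈ T ↔ ∃ d ∈ M + N, s(lo d, hi d) = e := by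
    intro e; simp only [hT, Finset.mem_image, Multiset.mem_toFinset]
  set H : SimpleGraph ℕ := SimpleGraph.fromEdgeSet (T : Set (Sym2 ℕ)) with hH
  have adjH : ∀ d ∈ M + N, H.Adj (lo d) (hi d) := by
    intro d hd
    rw [hH, SimpleGraph.fromEdgeSet_adj]
    exact ⟨by simpa using (memT _).2 ⟨d, hd, rfl⟩, (hsub d hd).2.1.ne⟩
  have edgeT : ∀ e ∈ H.edgeSet, e ∈ T := by
    intro e he
    rw [hH, SimpleGraph.edgeSet_fromEdgeSet] at he
    exact he.1
  have hHG : H ≤ G := by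
    intro u v huv
    obtain ⟨d, hd, he⟩ := (memT _).1 (edgeT s(u, v) huv)
    have : s(u, v) ∈ G.edgeSet := he ▸ (hsub d hd).1
    exact this
  have : Finite H.edgeSet := T.finite_toSet.subset edgeT
  obtain ⟨d₀, hd₀⟩ := Multiset.exists_mem_of_ne_zero hM
  -- Stated for general `P`, `Q` so that it applies to `(M, N)` and to `(N, M)`.
  have two : ∀ {P Q : Multiset ℕ}, P.map hi + Q.map lo = Q.map hi + P.map lo → Disjoint P Q →
      (∀ d, d ∈ P ∨ d ∈ Q → d ∈ M + N) → ∀ d ∈ P,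
      (∃ w, w ≠ lo d ∧ H.Adj (hi d) w) ∧ (∃ w, w ≠ hi d ∧ H.Adj (lo d) w) := by
    intro P Q hPQ hdis hin d hd
    have hne : ∀ d' ∈ Q, ¬(lo d = lo d' ∧ hi d = hi d') := by
      rintro d' hd' ⟨h1, h2⟩
      have e : d = d' := by
        rw [(hsub d (hin _ (.inl hd))).2.2, (hsub d' (hin _ (.inr hd'))).2.2, h1, h2]
      exact Multiset.disjoint_left.1 hdis hd (e ▸ hd')
    have hlt := (hsub d (hin _ (.inl hd))).2.1
    constructor
    · have hmem : hi d ∈ Q.map hi + P.map lo := by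
        rw [← hPQ]; exact Multiset.mem_add.2 (.inl (Multiset.mem_map_of_mem _ hd))
      rcases Multiset.mem_add.1 hmem with hmem | hmem <;>
        obtain ⟨d', hd', he⟩ := Multiset.mem_map.1 hmem
      · exact ⟨lo d', fun h => hne d' hd' ⟨h.symm, he.symm⟩,
          he ▸ (adjH d' (hin _ (.inr hd'))).symm⟩
      · have := (hsub d' (hin _ (.inl hd'))).2.1
        exact ⟨hi d', by omega, he ▸ adjH d' (hin _ (.inl hd'))⟩
    · have hmem : lo d ∈ P.map hi + Q.map lo := by
        rw [hPQ]; exact Multiset.mem_add.2 (.inr (Multiset.mem_map_of_mem _ hd))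
      rcases Multiset.mem_add.1 hmem with hmem | hmem <;>
        obtain ⟨d', hd', he⟩ := Multiset.mem_map.1 hmem
      · have := (hsub d' (hin _ (.inl hd'))).2.1
        exact ⟨lo d', by omega, he ▸ (adjH d' (hin _ (.inl hd'))).symm⟩
      · exact ⟨hi d', fun h => hne d' hd' ⟨he.symm, h.symm⟩, he ▸ adjH d' (hin _ (.inr hd'))⟩
  have hdeg : ∀ u v, H.Adj u v → ∃ w, w ≠ u ∧ H.Adj v w := by
    intro u v huv
    obtain ⟨d, hd, he⟩ := (memT _).1 (edgeT s(u, v) huv)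
    have h2 : (∃ w, w ≠ lo d ∧ H.Adj (hi d) w) ∧ (∃ w, w ≠ hi d ∧ H.Adj (lo d) w) := by
      rcases Multiset.mem_add.1 hd with hd | hd
      · exact two hbal hdisj (fun d h => Multiset.mem_add.2 h) d hd
      · exact two hbal.symm hdisj.symm (fun d h => Multiset.mem_add.2 h.symm) d hd
    rcases Sym2.eq_iff.1 he with ⟨rfl, rfl⟩ | ⟨rfl, rfl⟩
    · exact h2.1
    · exact h2.2
  obtain ⟨v, C, hC⟩ := exists_isCycle_of_two_neighbors H
    (adjH d₀ (Multiset.mem_add.2 (.inl hd₀))) hdeg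
  have hCT : C.edges.toFinset ⊆ T := by
    intro e he
    exact edgeT e (C.edges_subset_edgeSet (List.mem_toFinset.1 he))
  have hcard : C.edges.toFinset.card = C.length := by
    rw [List.toFinset_card_of_nodup hC.isTrail.edges_nodup, SimpleGraph.Walk.length_edges]
  have hTcard : T.card ≤ (M + N).card :=
    Finset.card_image_le.trans (Multiset.toFinset_card_le _)
  refine ⟨v, C.mapLe hHG, hC.mapLe hHG, ?_, ?_, ?_⟩
  · rw [SimpleGraph.Walk.length_mapLe, ← hcard]
    exact (Finset.card_le_card hCT).trans hTcard
  · intro e he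
    rw [SimpleGraph.Walk.edges_mapLe_eq_edges] at he
    obtain ⟨d, hd, h⟩ := (memT e).1 (hCT (List.mem_toFinset.2 he))
    exact ⟨d, hd, h.symm⟩
  · intro hle d hd
    rw [SimpleGraph.Walk.length_mapLe, ← hcard] at hle
    rw [SimpleGraph.Walk.edges_mapLe_eq_edges, ← List.mem_toFinset,
      Finset.eq_of_subset_of_card_le hCT (hTcard.trans hle)]
    exact (memT _).2 ⟨d, hd, rfl⟩

/-! ### Comparison of monotone sequences -/

theorem le_of_forall_exists_eq {k s : ℕ} {x : Fin s → ℕ} {d : Fin k → ℕ}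
    (hd : Function.Injective d) (h : ∀ i, ∃ i', x i' = d i) : k ≤ s := by
  choose σ hσ using h
  have hinj : Function.Injective σ := fun a b hab => hd (by rw [← hσ a, ← hσ b, hab])
  simpa using Fintype.card_le_of_injective σ hinj

/-- A strictly increasing sequence of length `k` all of whose terms occur in a monotone sequence of
length at most `k` is equal to it. -/
theorem eq_of_forall_exists_eq {k s : ℕ} (hsk : s ≤ k) {x : Fin s → ℕ} {d : Fin k → ℕ}
    (hx : Monotone x) (hd : StrictMono d) (h : ∀ i, ∃ i', x i' = d i) :
    ∃ hs : s = k, Function.Injective x ∧ ∀ i, x (Fin.cast hs.symm i) = d i := by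
  choose σ hσ using h
  have hmono : StrictMono σ := by
    intro i i' hii
    by_contra! hle
    have := hx hle
    rw [hσ, hσ] at this
    exact absurd (hd hii) (by omega)
  have hks : k ≤ s := by simpa using Fintype.card_le_of_injective σ hmono.injective
  obtain rfl : s = k := le_antisymm hsk hks
  have hxd : x = d := by
    funext i
    rw [← hσ i, hmono.eq_id, id]
  exact ⟨rfl, hxd ▸ hd.injective, fun i => by simp [hxd]⟩

/-! ### Equal sums give balanced edge sets -/

theorem map_hi_add_map_lo_eq {m : ℕ} (hm : 2 ≤ m) {M N : Multiset ℕ} {lo hi : ℕ → ℕ}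
    (hpow : ∀ d ∈ M + N, (∃ n : ℕ, lo d = m ^ n) ∧ ∃ n : ℕ, hi d = m ^ n)
    (hsub : ∀ d ∈ M + N, hi d = lo d + d) (hcard : M.card + N.card < m)
    (hsum : M.sum = N.sum) : M.map hi + N.map lo = N.map hi + M.map lo := by
  have hS : ∀ P : Multiset ℕ, (∀ d ∈ P, hi d = lo d + d) →
      (P.map hi).sum = (P.map lo).sum + P.sum := by
    intro P hP
    rw [Multiset.map_congr rfl hP, Multiset.sum_map_add, Multiset.map_id']
  have hM : ∀ d ∈ M, d ∈ M + N := fun d hd => Multiset.mem_add.2 (.inl hd)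
  have hN : ∀ d ∈ N, d ∈ M + N := fun d hd => Multiset.mem_add.2 (.inr hd)
  apply eq_of_sum_pow_eq hm
  · intro a ha
    rcases Multiset.mem_add.1 ha with ha | ha <;> obtain ⟨d, hd, rfl⟩ := Multiset.mem_map.1 ha
    · exact (hpow d (hM d hd)).2
    · exact (hpow d (hN d hd)).1
  · intro a ha
    rcases Multiset.mem_add.1 ha with ha | ha <;> obtain ⟨d, hd, rfl⟩ := Multiset.mem_map.1 ha
    · exact (hpow d (hN d hd)).2
    · exact (hpow d (hM d hd)).1
  · rw [Multiset.sum_add, Multiset.sum_add, hS M fun d hd => hsub d (hM d hd),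
      hS N fun d hd => hsub d (hN d hd)]
    omega
  · simpa using hcard
  · simpa [add_comm] using hcard

/-! ### Equal sums of edge differences -/

/-- The key claim: for a graph `G` on powers of `m = 2k+1` of girth at least `2k`
in which every `2k`-cycle lies in a unique copy of `Θ_{k,ℓ}`, two equal sums of
at most `2k` terms from `X = {b - a : ab ∈ E(G), a < b}` either coincide
termwise, or both have exactly `k` pairwise distinct terms coming from two
distinct paths of a unique copy of `Θ_{k,ℓ}`, via unique indices. -/
theorem theta_claim (k l : ℕ) (hk : 2 ≤ k) (hl : 2 ≤ l) (G : SimpleGraph ℕ)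
    (hver : ∀ v ∈ G.support, ∃ n : ℕ, v = (2 * k + 1) ^ n)
    (hgirth : ∀ (v : ℕ) (C : G.Walk v v), C.IsCycle → 2 * k ≤ C.length)
    (hunique : ∀ (v : ℕ) (C : G.Walk v v), C.IsCycle → C.length = 2 * k →
      ∃ p : Fin l → Fin (k + 1) → ℕ, IsThetaCopy G k l p ∧
        (∀ e ∈ C.edges, e ∈ thetaEdges p) ∧
        ∀ p' : Fin l → Fin (k + 1) → ℕ, IsThetaCopy G k l p' →
          (∀ e ∈ C.edges, e ∈ thetaEdges p') → thetaEdges p' = thetaEdges p)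
    (X : Set ℕ) (hX : X = {d | ∃ a b : ℕ, G.Adj a b ∧ a < b ∧ d = b - a})
    (s t : ℕ) (hs : 0 < s) (ht : 0 < t) (hst : s + t ≤ 2 * k)
    (x : Fin s → ℕ) (y : Fin t → ℕ)
    (hxX : ∀ i, x i ∈ X) (hyX : ∀ i, y i ∈ X) (hxm : Monotone x) (hym : Monotone y)
    (hsum : ∑ i, x i = ∑ i, y i) :
    -- (a) the two representations coincide
    (∃ hst' : s = t, ∀ i : Fin s, x i = y (Fin.cast hst' i)) ∨
    -- (b) s = t = k, the 2k terms are pairwise distinct, and the terms arise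
    -- from two distinct paths of a copy of Θ_{k,ℓ}, the copy and the indices
    -- being unique
    (∃ (hsk : s = k) (htk : t = k),
      Function.Injective x ∧ Function.Injective y ∧ (∀ i i', x i ≠ y i') ∧
      ∃ (p : Fin l → Fin (k + 1) → ℕ) (j j' : Fin l),
        IsThetaCopy G k l p ∧ j ≠ j' ∧
        (∀ i : Fin k, x (Fin.cast hsk.symm i) = p j i.succ - p j i.castSucc) ∧
        (∀ i : Fin k, y (Fin.cast htk.symm i) = p j' i.succ - p j' i.castSucc) ∧
        -- the copy of Θ_{k,ℓ} is unique
        (∀ (p₂ : Fin l → Fin (k + 1) → ℕ) (j₂ j₂' : Fin l),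
          IsThetaCopy G k l p₂ → j₂ ≠ j₂' →
          (∀ i : Fin k, x (Fin.cast hsk.symm i) = p₂ j₂ i.succ - p₂ j₂ i.castSucc) →
          (∀ i : Fin k, y (Fin.cast htk.symm i) = p₂ j₂' i.succ - p₂ j₂' i.castSucc) →
          thetaEdges p₂ = thetaEdges p) ∧
        -- the indices j, j' are unique
        (∀ j₂ j₂' : Fin l, j₂ ≠ j₂' →
          (∀ i : Fin k, x (Fin.cast hsk.symm i) = p j₂ i.succ - p j₂ i.castSucc) →
          (∀ i : Fin k, y (Fin.cast htk.symm i) = p j₂' i.succ - p j₂' i.castSucc) →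
          j₂ = j ∧ j₂' = j')) := by
  classical
  -- `lo d` and `hi d` are the ends of the edge with difference `d`; off `X` the values are junk.
  have hlh : ∀ d, ∃ a b, d ∈ X → G.Adj a b ∧ a < b ∧ d = b - a := by
    intro d
    by_cases hd : d ∈ X
    · rw [hX] at hd
      obtain ⟨a, b, h⟩ := hd
      exact ⟨a, b, fun _ => h⟩
    · exact ⟨0, 0, fun h => absurd h hd⟩
  choose lo hi hlh using hlh
  have hinj : ∀ d ∈ X, ∀ a b, G.Adj a b → a < b → d = b - a → lo d = a ∧ hi d = b := by
    intro d hd a b hab hlt he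
    obtain ⟨h1, h2, h3⟩ := hlh d hd
    exact sub_inj_of_pow (m := 2 * k + 1) (by omega) (hver _ ⟨_, h1⟩) (hver _ ⟨_, h1.symm⟩)
      (hver _ ⟨_, hab⟩) (hver _ ⟨_, hab.symm⟩) h2 hlt (h3.symm.trans he)
  have hbal : ∀ {M N : Multiset ℕ}, (∀ d ∈ M + N, d ∈ X) → M.card + N.card ≤ 2 * k →
      M.sum = N.sum → M.map hi + N.map lo = N.map hi + M.map lo := by
    intro M N hMN hcard hsum
    refine map_hi_add_map_lo_eq (m := 2 * k + 1) (by omega) (fun d hd => ?_) (fun d hd => ?_)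
      (by omega) hsum
    · obtain ⟨h1, -, -⟩ := hlh d (hMN d hd)
      exact ⟨hver _ ⟨_, h1⟩, hver _ ⟨_, h1.symm⟩⟩
    · obtain ⟨-, h2, h3⟩ := hlh d (hMN d hd)
      omega
  set M : Multiset ℕ := Finset.univ.val.map x with hM
  set N : Multiset ℕ := Finset.univ.val.map y with hN
  have memM : ∀ d, d ∈ M ↔ ∃ i, x i = d := by simp [hM]
  have memN : ∀ d, d ∈ N ↔ ∃ i, y i = d := by simp [hN]
  have hMX : ∀ d ∈ M, d ∈ X := by
    intro d hd
    obtain ⟨i, rfl⟩ := (memM d).1 hd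
    exact hxX i
  have hNX : ∀ d ∈ N, d ∈ X := by
    intro d hd
    obtain ⟨i, rfl⟩ := (memN d).1 hd
    exact hyX i
  have hMc : M.card = s := by simp [hM]
  have hNc : N.card = t := by simp [hN]
  have hMN : M.sum = N.sum := hsum
  have hpos : ∀ d ∈ X, 0 < d := by
    intro d hd
    obtain ⟨-, h2, h3⟩ := hlh d hd
    omega
  by_cases heq : M = N
  · left
    have hst' : s = t := by rw [← hMc, ← hNc, heq]
    subst hst'
    refine ⟨rfl, fun i => ?_⟩
    rw [hM, hN, Fin.univ_val_map, Fin.univ_val_map, Multiset.coe_eq_coe] at heq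
    have := List.ofFn_injective (heq.eq_of_sortedLE hxm.sortedLE_ofFn hym.sortedLE_ofFn)
    simp [this]
  right
  have hsplitM : M - N + M ∩ N = M := Multiset.sub_add_inter M N
  have hsplitN : N - M + M ∩ N = N := by rw [Multiset.inter_comm]; exact Multiset.sub_add_inter N M
  have hsum' : (M - N).sum = (N - M).sum := by
    have h1 := congrArg Multiset.sum hsplitM
    have h2 := congrArg Multiset.sum hsplitN
    rw [Multiset.sum_add] at h1 h2
    omega
  have hdisj' : Disjoint (M - N) (N - M) := by
    rw [Multiset.disjoint_left]
    intro d h1 h2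
    rw [Multiset.mem_sub] at h1 h2
    omega
  have hX' : ∀ d ∈ (M - N) + (N - M), d ∈ X := by
    intro d hd
    rcases Multiset.mem_add.1 hd with hd | hd
    · exact hMX d (Multiset.mem_of_le (Multiset.sub_le_self M N) hd)
    · exact hNX d (Multiset.mem_of_le (Multiset.sub_le_self N M) hd)
  have hne' : M - N ≠ 0 := by
    intro h0
    have h1 : N - M = 0 := by
      by_contra h1
      obtain ⟨d, hd⟩ := Multiset.exists_mem_of_ne_zero h1
      have h2 := Multiset.le_sum_of_mem hd
      have h3 := hpos d (hX' d (Multiset.mem_add.2 (.inr hd)))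
      rw [← hsum', h0, Multiset.sum_zero] at h2
      omega
    rw [h0] at hsplitM
    rw [h1] at hsplitN
    exact heq (hsplitM.symm.trans hsplitN)
  have hcM : (M - N).card + (M ∩ N).card = s := by rw [← Multiset.card_add, hsplitM, hMc]
  have hcN : (N - M).card + (M ∩ N).card = t := by rw [← Multiset.card_add, hsplitN, hNc]
  -- The terms left after cancellation carry a cycle; the girth bound leaves no room for
  -- a cancelled term.
  have hinter : M ∩ N = 0 := by
    obtain ⟨v, C, hC, hlen, -, -⟩ := exists_cycle_of_balanced
      (hbal hX' (by omega) hsum') hdisj' hne' (fun d hd => hlh d (hX' d hd))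
    have := hgirth v C hC
    rw [Multiset.card_add] at hlen
    exact Multiset.card_eq_zero.1 (by omega)
  -- So `M` and `N` are already disjoint, and the cycle below uses all of their edges.
  rw [hinter, add_zero] at hsplitM hsplitN
  rw [hsplitM] at hne'
  rw [hsplitM, hsplitN] at hdisj' hX'
  have hB := hbal hX' (by omega) hMN
  obtain ⟨v, C, hC, hlen, hCe, hCall⟩ :=
    exists_cycle_of_balanced hB hdisj' hne' (fun d hd => hlh d (hX' d hd))
  have hg := hgirth v C hC
  rw [Multiset.card_add] at hlen hCall
  obtain ⟨p, hp, hpC, hpuniq⟩ := hunique v C hC (by omega)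
  obtain ⟨j, j', hjj, hjM, hjN⟩ := exists_paths_of_balanced (by omega) hp hB hdisj' hne'
    (fun d hd => hlh d (hX' d hd)) (fun d hd => hpC _ (hCall (by omega) d hd))
  have hmono := hp.strictMono_sub (m := 2 * k + 1) (by omega) hver
  have hjM' := fun i => (memM _).1 (hjM i)
  have hjN' := fun i => (memN _).1 (hjN i)
  have hks := le_of_forall_exists_eq (hmono j).injective hjM'
  have hkt := le_of_forall_exists_eq (hmono j').injective hjN'
  obtain ⟨hsk, hxinj, hx⟩ := eq_of_forall_exists_eq (by omega) hxm (hmono j) hjM'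
  obtain ⟨htk, hyinj, hy⟩ := eq_of_forall_exists_eq (by omega) hym (hmono j') hjN'
  refine ⟨hsk, htk, hxinj, hyinj, fun i i' h => ?_, p, j, j', hp, hjj, hx, hy, ?_, ?_⟩
  · exact Multiset.disjoint_left.1 hdisj' ((memM _).2 ⟨i, rfl⟩) ((memN _).2 ⟨i', h.symm⟩)
  · intro p₂ j₂ j₂' hp₂ _ hx₂ hy₂
    refine hpuniq p₂ hp₂ fun e he => ?_
    -- An edge of `G` is determined by its length, so a path of `p₂` with the right
    -- differences has the right edges.
    have aux : ∀ d ∈ X, ∀ (q : Fin l) (i : Fin k), d = p₂ q i.succ - p₂ q i.castSucc →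
        s(lo d, hi d) ∈ thetaEdges p₂ := by
      intro d hd q i h
      obtain ⟨h1, h2⟩ := hinj d hd _ _ (hp₂.2.2.2.2 q i) (hp₂.1 q Fin.castSucc_lt_succ) h
      exact ⟨q, i, by rw [h1, h2]⟩
    obtain ⟨d, hd, rfl⟩ := hCe e he
    rcases Multiset.mem_add.1 hd with hd | hd
    · obtain ⟨i, rfl⟩ := (memM d).1 hd
      exact aux _ (hxX i) j₂ (Fin.cast hsk i) (by simpa using hx₂ (Fin.cast hsk i))
    · obtain ⟨i, rfl⟩ := (memN d).1 hd
      exact aux _ (hyX i) j₂' (Fin.cast htk i) (by simpa using hy₂ (Fin.cast htk i))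
  · intro j₂ j₂' _ hx₂ hy₂
    -- As `k ≥ 2`, the first edge of a path ends at an internal vertex, which determines the path.
    have aux : ∀ q q' : Fin l, (∀ i : Fin k, p q i.succ - p q i.castSucc =
        p q' i.succ - p q' i.castSucc) → q = q' := by
      intro q q' h
      have hmem : p q (Fin.succ ⟨0, by omega⟩) - p q (Fin.castSucc ⟨0, by omega⟩) ∈ X := by
        rw [hX]
        exact ⟨_, _, hp.2.2.2.2 q _, hp.1 q Fin.castSucc_lt_succ, rfl⟩
      have h1 := hinj _ hmem _ _ (hp.2.2.2.2 q _) (hp.1 q Fin.castSucc_lt_succ) rfl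
      have h2 := hinj _ hmem _ _ (hp.2.2.2.2 q' _) (hp.1 q' Fin.castSucc_lt_succ) (h _)
      exact (hp.vertex_inj (h1.2.symm.trans h2.2)).2 (by simp [Fin.ext_iff])
        (by simp [Fin.ext_iff]; omega)
    exact ⟨aux _ _ fun i => (hx₂ i).symm.trans (hx i), aux _ _ fun i => (hy₂ i).symm.trans (hy i)⟩
end

section
/- Let k ≥ 2 be an integer, set m = 2k+1, and let G be a simple graph with vertex set V(G) ⊆ {m^n : n ∈ ℕ} such that every cycle in G has length at least 2k. Let X = {b − a : ab ∈ E(G), a < b}. If s and t are positive integers with s + t < 2k and x_1 ≤ … ≤ x_s and y_1 ≤ … ≤ y_t are elements of X with x_1 + … + x_s = y_1 + … + y_t, then s = t and x_i = y_i for every i ∈ {1,…,s}. -/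
/-!
Put all the terms `x i` and `y j` in one family, with sign `1` for the former and `-1` for the
latter, and write each term as `b - a` for an edge `ab` of `G`. The equality of the two sums says
that a combination `∑ c n * m ^ n` vanishes, where `c n` is the signed number of times the vertex
`m ^ n` occurs as an end of these edges. There are fewer than `2k` edges, so `|c n| < m`, and
reduction modulo powers of `m` gives `c = 0` (`eq_zero_of_linearCombination_pow_eq_zero`). Thus the
signed edges form a circulation.

The edges used form a subgraph of `G` with fewer than `2k` edges, hence a forest. A forest carries
no nonzero circulation: removing an edge `e` separates its ends, and the net flow out of one side
is the flow along `e` (`sum_sign_eq_zero_of_circulation`). So every `d` occurs as often among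
the `x i` as among the `y j`, and sorted lists with equal multiplicities coincide.
-/

open Finset

/-- Signed digits smaller than the base are determined by the number they represent: here `m`
divides `c 0`, so `c 0 = 0`, and one divides by `m` and repeats. -/
lemma eq_zero_of_sum_mul_pow_eq_zero (m : ℤ) (N : ℕ) (c : ℕ → ℤ) (hc : ∀ n, |c n| < m)
    (h : ∑ n ∈ range N, c n * m ^ n = 0) : ∀ n < N, c n = 0 := by
  induction N generalizing c with
  | zero => simp
  | succ N ih =>
    rw [sum_range_succ'] at h
    have hm : 0 < m := (abs_nonneg _).trans_lt (hc 0)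
    have h' : c 0 = -(m * ∑ n ∈ range N, c (n + 1) * m ^ n) := by
      rw [mul_sum]
      have : ∑ n ∈ range N, c (n + 1) * m ^ (n + 1) =
          ∑ n ∈ range N, m * (c (n + 1) * m ^ n) := sum_congr rfl fun _ _ => by ring
      rw [this] at h
      simp only [pow_zero, mul_one] at h
      linarith
    have h0 : c 0 = 0 := Int.eq_zero_of_abs_lt_dvd ⟨_, h'.trans (mul_neg _ _).symm⟩ (hc 0)
    have hs : ∑ n ∈ range N, c (n + 1) * m ^ n = 0 := by
      rw [h0] at h'
      rcases mul_eq_zero.1 (neg_eq_zero.1 h'.symm) with h1 | h1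
      · omega
      · exact h1
    intro n hn
    cases n with
    | zero => exact h0
    | succ n => exact ih (fun n => c (n + 1)) (fun n => hc _) hs n (by omega)

lemma eq_zero_of_linearCombination_pow_eq_zero (m : ℤ) (F : ℕ →₀ ℤ) (hc : ∀ n, |F n| < m)
    (h : Finsupp.linearCombination ℤ (fun n => m ^ n) F = 0) : F = 0 := by
  obtain ⟨N, hN⟩ := F.support.exists_nat_subset_range
  have h2 := eq_zero_of_sum_mul_pow_eq_zero m N F hc (by
    rw [Finsupp.linearCombination_apply, Finsupp.sum_of_support_subset F hN _ (by simp)] at h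
    simpa using h)
  ext n
  by_cases hn : n < N
  · exact h2 n hn
  · by_contra h3
    exact hn (mem_range.1 (hN (Finsupp.mem_support_iff.2 h3)))

/-- A graph without cycles of length less than `n` contains no nonzero circulation on fewer than
`n` edges. The edges are `a i → b i` with weight `ε i`, possibly repeated but always with the same
orientation, and the conservation law `hbd` is stated in its dual form, against all potentials `χ`.
-/
lemma sum_sign_eq_zero_of_circulation {V ι : Type*} [DecidableEq V] [Fintype ι]
    (G : SimpleGraph V) (n : ℕ)
    (hcyc : ∀ (v : V) (c : G.Walk v v), c.IsCycle → n ≤ c.length)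
    (a b : ι → V) (hadj : ∀ i, G.Adj (a i) (b i)) (hcard : Fintype.card ι < n)
    (horient : ∀ i j, s(a i, b i) = s(a j, b j) → a i = a j ∧ b i = b j)
    (ε : ι → ℤ) (hbd : ∀ χ : V → ℤ, ∑ i, ε i * (χ (b i) - χ (a i)) = 0) (j : ι) :
    ∑ i with a i = a j ∧ b i = b j, ε i = 0 := by
  classical
  let H : SimpleGraph V := SimpleGraph.fromEdgeSet (Set.range fun i => s(a i, b i))
  have hHadj : ∀ i, H.Adj (a i) (b i) := fun i =>
    (SimpleGraph.fromEdgeSet_adj _).2 ⟨⟨i, rfl⟩, (hadj i).ne⟩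
  have hle : H ≤ G := by
    intro u v huv
    obtain ⟨⟨i, hi⟩, -⟩ := (SimpleGraph.fromEdgeSet_adj _).1 huv
    have := hadj i
    rw [← SimpleGraph.mem_edgeSet] at this ⊢
    exact hi ▸ this
  have hacyc : H.IsAcyclic := by
    intro v c hc
    have h1 := hcyc v _ (hc.mapLe hle)
    rw [SimpleGraph.Walk.length_mapLe] at h1
    have h2 : c.edges.toFinset ⊆ univ.image fun i => s(a i, b i) := by
      intro e he
      have h3 := c.edges_subset_edgeSet (List.mem_toFinset.1 he)
      rw [SimpleGraph.edgeSet_fromEdgeSet] at h3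
      obtain ⟨i, hi⟩ := h3.1
      exact mem_image.2 ⟨i, mem_univ _, hi⟩
    have h4 := (card_le_card h2).trans card_image_le
    rw [List.toFinset_card_of_nodup hc.edges_nodup, SimpleGraph.Walk.length_edges,
      card_univ] at h4
    omega
  have hbr := SimpleGraph.isBridge_iff.1
    (SimpleGraph.isAcyclic_iff_forall_adj_isBridge.1 hacyc (hHadj j))
  set K := H.deleteEdges {s(a j, b j)} with hK
  -- The potential is the indicator of the side of the bridge containing `a j`.
  have h := hbd fun v => if K.Reachable (a j) v then 1 else 0
  rw [sum_filter, ← neg_eq_zero, ← sum_neg_distrib]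
  refine Eq.trans (sum_congr rfl fun i _ => ?_) h
  split_ifs with hi h1 h2 h2 h1 h2
  · exact absurd (hi.2 ▸ h1) hbr
  · exact absurd (hi.2 ▸ h1) hbr
  · simp
  · exact absurd (hi.1 ▸ SimpleGraph.Reachable.refl _) h2
  all_goals
    have hKi : K.Adj (a i) (b i) := by
      rw [hK, SimpleGraph.deleteEdges_adj]
      exact ⟨hHadj i, fun he => hi (horient i j he)⟩
  · simp
  · exact absurd (h1.trans hKi.symm.reachable) h2
  · exact absurd (SimpleGraph.Reachable.trans ‹K.Reachable (a j) (a i)› hKi.reachable) ‹_›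
  · simp

theorem short_sums_unique (k : ℕ) (hk : 2 ≤ k) (G : SimpleGraph ℕ)
    (hver : ∀ v ∈ G.support, ∃ n : ℕ, v = (2 * k + 1) ^ n)
    (hcyc : ∀ (v : ℕ) (c : G.Walk v v), c.IsCycle → 2 * k ≤ c.length)
    (X : Set ℕ) (hX : X = {d | ∃ a b : ℕ, G.Adj a b ∧ a < b ∧ d = b - a})
    (s t : ℕ) (hs : 0 < s) (ht : 0 < t) (hst : s + t < 2 * k)
    (x : Fin s → ℕ) (y : Fin t → ℕ)
    (hxX : ∀ i, x i ∈ X) (hyX : ∀ i, y i ∈ X) (hxm : Monotone x) (hym : Monotone y)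
    (hsum : ∑ i, x i = ∑ i, y i) :
    s = t ∧ ∀ (i : ℕ) (hi : i < s) (hi' : i < t), x ⟨i, hi⟩ = y ⟨i, hi'⟩ := by
  set m := 2 * k + 1 with hm
  -- Since `p` and `q` are functions of the difference `d`, equal terms use the same edge.
  have hedge : ∀ d : ℕ, ∃ p q : ℕ, d ∈ X → G.Adj (m ^ p) (m ^ q) ∧ m ^ p < m ^ q ∧
      d = m ^ q - m ^ p := by
    intro d
    by_cases hd : d ∈ X
    · obtain ⟨a, b, hab, hlt, rfl⟩ := hX ▸ hd
      obtain ⟨p, rfl⟩ := hver a ⟨b, hab⟩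
      obtain ⟨q, rfl⟩ := hver b ⟨_, hab.symm⟩
      exact ⟨p, q, fun _ => ⟨hab, hlt, rfl⟩⟩
    · exact ⟨0, 0, fun h => absurd h hd⟩
  choose p q hpq using hedge
  let z : Fin s ⊕ Fin t → ℕ := Sum.elim x y
  let ε : Fin s ⊕ Fin t → ℤ := Sum.elim (fun _ => 1) (fun _ => -1)
  have hz : ∀ i, z i ∈ X := by rintro (i | i); exacts [hxX i, hyX i]
  have hε : ∀ i, |ε i| = 1 := by rintro (i | i) <;> simp [ε]
  have hzsum : ∑ i, ε i * (z i : ℤ) = 0 := by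
    have : (∑ i, (x i : ℤ)) = ∑ i, (y i : ℤ) := by exact_mod_cast hsum
    simp [ε, z, Fintype.sum_sum_type, this]
  have hzi : ∀ i, (z i : ℤ) = (m : ℤ) ^ q (z i) - (m : ℤ) ^ p (z i) := by
    intro i
    obtain ⟨-, h1, h2⟩ := hpq _ (hz i)
    conv_lhs => rw [h2]
    push_cast [h1.le]
    rfl
  -- The boundary of the signed edges, a vertex `m ^ n` being recorded by its exponent `n`.
  let F : ℕ →₀ ℤ := ∑ i, ε i • (Finsupp.single (q (z i)) 1 - Finsupp.single (p (z i)) 1)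
  have hF : ∀ χ : ℕ → ℤ, Finsupp.linearCombination ℤ χ F =
      ∑ i, ε i * (χ (q (z i)) - χ (p (z i))) := by
    intro χ
    simp [F, map_sum]
  have hF0 : F = 0 := by
    refine eq_zero_of_linearCombination_pow_eq_zero m F (fun n => ?_) ?_
    · have h1 : |F n| ≤ ∑ i : Fin s ⊕ Fin t, (1 : ℤ) := by
        simp only [F, Finsupp.finsetSum_apply]
        refine (abs_sum_le_sum_abs _ _).trans (sum_le_sum fun i _ => ?_)
        rw [Finsupp.smul_apply, smul_eq_mul, abs_mul, hε, one_mul, Finsupp.sub_apply,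
          Finsupp.single_apply, Finsupp.single_apply]
        split_ifs <;> simp
      simp only [sum_const, card_univ, Fintype.card_sum, Fintype.card_fin, nsmul_eq_mul,
        mul_one] at h1
      omega
    · rw [hF, ← hzsum]
      exact sum_congr rfl fun i _ => by rw [← hzi]
  have hcount : ∀ j, ∑ i with z i = z j, ε i = 0 := by
    intro j
    rw [← sum_sign_eq_zero_of_circulation G (2 * k) hcyc (fun i => m ^ p (z i))
      (fun i => m ^ q (z i)) (fun i => (hpq _ (hz i)).1) (by simpa using hst) ?_ ε ?_ j]
    · congr 1
      ext i
      simp only [mem_filter, mem_univ, true_and]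
      refine ⟨fun h => by simp [h], fun h => ?_⟩
      rw [(hpq _ (hz i)).2.2, (hpq _ (hz j)).2.2, h.1, h.2]
    · intro i i' h
      have h1 := (hpq _ (hz i)).2.1
      have h2 := (hpq _ (hz i')).2.1
      rcases Sym2.eq_iff.1 h with h | h
      · exact h
      · omega
    · intro χ
      rw [← hF (fun n => χ (m ^ n)), hF0, map_zero]
  have hcount' : ∀ d, #{i | x i = d} = #{i | y i = d} := by
    intro d
    have h : ∑ i with z i = d, ε i = 0 := by
      by_cases hd : ∃ j, z j = d
      · obtain ⟨j, rfl⟩ := hd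
        exact hcount j
      · push Not at hd
        simp [hd]
    rw [sum_filter, Fintype.sum_sum_type] at h
    change (∑ i, if x i = d then (1 : ℤ) else 0) + (∑ i, if y i = d then (-1 : ℤ) else 0) = 0 at h
    rw [← sum_filter, ← sum_filter, sum_const, sum_const, nsmul_eq_mul, nsmul_eq_mul] at h
    omega
  have hperm : (List.ofFn x).Perm (List.ofFn y) := by
    rw [← Multiset.coe_eq_coe, ← Fin.univ_val_map, ← Fin.univ_val_map]
    ext d
    rw [Multiset.count_map, Multiset.count_map]
    simpa only [eq_comm, card_def, filter_val] using hcount' d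
  have heq := List.ofFn_inj'.1
    (List.Perm.eq_of_sortedLE hxm.sortedLE_ofFn hym.sortedLE_ofFn hperm)
  obtain ⟨rfl, hxy⟩ := Sigma.mk.inj_iff.1 heq
  exact ⟨rfl, fun i hi _ => congrFun (eq_of_heq hxy) ⟨i, hi⟩⟩
end

section
/- For every integer k ≥ 2 and every finite set E' of edges of a graph with vertex set contained in ℕ, there is a subset E'' ⊆ E' with |E''| ≥ ((k−1)/(2k))·|E'| such that the graph on ℕ with edge set E'' contains no ascending path of length k, i.e., there are no natural numbers v_0 < v_1 < … < v_k with v_{i−1}v_i ∈ E'' for all i ∈ {1,…,k}. -/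
/-!
The idea is to colour the vertices with `k` colours so that few edges are monochromatic, and then
to keep only the edges along which the colour increases from the smaller to the larger endpoint.
An ascending path of length `k` in the kept graph would carry `k + 1` strictly increasing colours
out of only `k`, so there is none (`not_ascending_path_of_color_lt`).

Colouring the vertices greedily in increasing order, each time choosing the colour that is rarest
among the smaller neighbours, leaves at most `|E'| / k` monochromatic edges
(`exists_coloring_few_mono`). Of the remaining edges, at least `(1 - 1/k) |E'|` in number, at least
half have increasing colour either for this colouring or for the one with the order of the colours
reversed.
-/

/-- Greedy colouring of the vertices below `n`: at most a proportion `1/k` of the edges with both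
endpoints below `n` is monochromatic. -/
lemma exists_coloring_few_mono {k : ℕ} (hk : 2 ≤ k) (E : Finset (Sym2 ℕ))
    (hE : ∀ e ∈ E, e.inf < e.sup) (n : ℕ) :
    ∃ c : ℕ → Fin k, k * (E.filter fun e => e.sup < n ∧ c e.inf = c e.sup).card ≤
      (E.filter fun e => e.sup < n).card := by
  induction n with
  | zero => exact ⟨fun _ => ⟨0, by omega⟩, by simp⟩
  | succ n ih =>
    obtain ⟨c, hc⟩ := ih
    -- `t` is a colour that is rarest among the neighbours of `n` below `n`.
    obtain ⟨t, ht⟩ : ∃ t : Fin k, k * (E.filter fun e => e.sup = n ∧ c e.inf = t).card ≤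
        (E.filter fun e => e.sup = n).card := by
      by_contra! h
      have hsum : (E.filter fun e => e.sup = n).card =
          ∑ t : Fin k, (E.filter fun e => e.sup = n ∧ c e.inf = t).card := by
        rw [Finset.card_eq_sum_card_fiberwise (f := fun e => c e.inf) (t := Finset.univ)
          (fun _ _ => by simp)]
        simp only [Finset.filter_filter]
      have : Nonempty (Fin k) := ⟨⟨0, by omega⟩⟩
      have hlt := Finset.sum_lt_sum_of_nonempty (s := (Finset.univ : Finset (Fin k)))
        Finset.univ_nonempty (fun t _ => h t)
      rw [← Finset.mul_sum, ← hsum] at hlt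
      simp at hlt
    refine ⟨Function.update c n t, ?_⟩
    have h1 : (E.filter fun e => e.sup < n + 1 ∧
        Function.update c n t e.inf = Function.update c n t e.sup) =
        (E.filter fun e => e.sup < n ∧ c e.inf = c e.sup) ∪
          (E.filter fun e => e.sup = n ∧ c e.inf = t) := by
      rw [← Finset.filter_or]
      refine Finset.filter_congr fun e he => ?_
      have := hE e he
      rcases lt_trichotomy e.sup n with h | h | h
      · have a : e.inf ≠ n := by omega
        simp [Function.update_of_ne a, h, h.ne, Nat.lt_succ_of_lt h]
      · have a : e.inf ≠ n := by omega
        rw [Function.update_of_ne a, h]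
        simp
      · have a : ¬ e.sup < n + 1 := by omega
        simp [a, h.ne', h.le.not_gt]
    have h2 : (E.filter fun e => e.sup < n + 1) =
        (E.filter fun e => e.sup < n) ∪ (E.filter fun e => e.sup = n) := by
      rw [← Finset.filter_or]
      exact Finset.filter_congr fun e _ => by omega
    have h3 : Disjoint (E.filter fun e => e.sup < n) (E.filter fun e => e.sup = n) :=
      Finset.disjoint_filter.2 fun e _ h => h.ne
    have h4 := Finset.card_union_le (E.filter fun e => e.sup < n ∧ c e.inf = c e.sup)
      (E.filter fun e => e.sup = n ∧ c e.inf = t)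
    rw [h1, h2, Finset.card_union_of_disjoint h3]
    nlinarith

lemma not_ascending_path_of_color_lt {k : ℕ} (E : Finset (Sym2 ℕ)) (c : ℕ → Fin k) :
    ¬ ∃ v : Fin (k + 1) → ℕ, StrictMono v ∧
      ∀ i : Fin k, s(v i.castSucc, v i.succ) ∈ E.filter fun e => c e.inf < c e.sup := by
  rintro ⟨v, hv, h⟩
  have hmono : StrictMono (c ∘ v) := by
    refine Fin.strictMono_iff_lt_succ.2 fun i => ?_
    have hi := (Finset.mem_filter.1 (h i)).2
    have hlt : v i.castSucc ≤ v i.succ := hv.monotone Fin.castSucc_lt_succ.le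
    simpa [Sym2.inf_mk, Sym2.sup_mk, hlt] using hi
  simpa using Fintype.card_le_of_injective _ hmono.injective

theorem exists_large_subset_no_ascending_path (k : ℕ) (hk : 2 ≤ k)
    (E' : Finset (Sym2 ℕ)) (hE : ∀ e ∈ E', ¬ e.IsDiag) :
    ∃ E'' ⊆ E', ((k : ℝ) - 1) / (2 * k) * E'.card ≤ E''.card ∧
      ¬ ∃ v : Fin (k + 1) → ℕ, StrictMono v ∧
        ∀ i : Fin k, s(v i.castSucc, v i.succ) ∈ E'' := by
  have hlt : ∀ e ∈ E', e.inf < e.sup := by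
    intro e he
    have := hE e he
    induction e with
    | _ a b => simpa [eq_comm] using this
  obtain ⟨c, hc⟩ := exists_coloring_few_mono hk E' hlt (E'.sup Sym2.sup + 1)
  have hall : ∀ e ∈ E', e.sup < E'.sup Sym2.sup + 1 := fun e he =>
    Nat.lt_succ_of_le (Finset.le_sup (f := Sym2.sup) he)
  rw [Finset.filter_true_of_mem hall,
    Finset.filter_congr (q := fun e => c e.inf = c e.sup)
      (fun e he => and_iff_right (hall e he))] at hc
  have hpart : E'.card ≤ (E'.filter fun e => c e.inf = c e.sup).card +
      ((E'.filter fun e => c e.inf < c e.sup).card +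
        (E'.filter fun e => (c e.inf).rev < (c e.sup).rev).card) := by
    refine le_trans (Finset.card_le_card ?_) ((Finset.card_union_le _ _).trans
      (Nat.add_le_add_left (Finset.card_union_le _ _) _))
    intro e he
    rcases lt_trichotomy (c e.inf) (c e.sup) with h | h | h <;> simp [he, h]
  -- A colouring whose increasing edges number at least half of the non-monochromatic ones.
  obtain ⟨d, hd⟩ : ∃ d : ℕ → Fin k, E'.card ≤ (E'.filter fun e => c e.inf = c e.sup).card +
      2 * (E'.filter fun e => d e.inf < d e.sup).card := by
    rcases le_total (E'.filter fun e => (c e.inf).rev < (c e.sup).rev).card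
      (E'.filter fun e => c e.inf < c e.sup).card with h | h
    · exact ⟨c, by omega⟩
    · exact ⟨fun x => (c x).rev, by dsimp only; omega⟩
  refine ⟨_, Finset.filter_subset _ _, ?_, not_ascending_path_of_color_lt E' d⟩
  have hk0 : (0 : ℝ) < k := by exact_mod_cast (by omega : 0 < k)
  rw [div_mul_eq_mul_div, div_le_iff₀ (by positivity)]
  have hc' : (k : ℝ) * (E'.filter fun e => c e.inf = c e.sup).card ≤ E'.card := by
    exact_mod_cast hc
  have hd' : (E'.card : ℝ) ≤ (E'.filter fun e => c e.inf = c e.sup).card +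
      2 * (E'.filter fun e => d e.inf < d e.sup).card := by exact_mod_cast hd
  have := mul_le_mul_of_nonneg_left hd' hk0.le
  linarith
end
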